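/- arXiv:2602.23838 — 8 statements merged into one kernel-verified Lean document; each statement's English description precedes it below -/
import Mathlib

section
/- Assume the explicit abc conjecture: for all pairwise coprime positive integers a, b, c with a + b = c one has c < rad(a·b·c)^{7/4}. Fix integers t ≥ 3, an index i with 2 ≤ i ≤ t, and a positive integer c₀. Then there are only finitely many tuples (a₁,…,a_t, n₁, n₂) of positive integers satisfying: a₁ ≥ a₂ ≥ ⋯ ≥ a_t ≥ 2, n₁ ≥ n₂ ≥ 2, ∏_{l=1}^{t} a_l! = n₁!·n₂!, |a_l − n_j| ≥ 2 for all 1 ≤ l ≤ t and j ∈ {1,2}, n₁ > a₁, n₂ > a_i, and n₂ − a_i ≤ c₀·(n₁ − a₁). -/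
/-- The radical of a natural number: the product of its distinct prime factors. -/
def rad (n : ℕ) : ℕ := n.primeFactors.prod id

/-- The explicit abc conjecture (Baker / Laishram–Shorey form): for pairwise coprime
positive integers `a`, `b`, `c` with `a + b = c` one has `c < rad (a*b*c) ^ (7/4)`. -/
def ExplicitABC : Prop :=
  ∀ a b c : ℕ, 0 < a → 0 < b → 0 < c →
    Nat.Coprime a b → Nat.Coprime a c → Nat.Coprime b c → a + b = c →
    (c : ℝ) < (rad (a * b * c) : ℝ) ^ ((7 : ℝ) / 4)

section PNT
open Complex Filter Topology ArithmeticFunction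
open scoped LSeries.notation

noncomputable def PW : ℂ → ℂ := DirichletCharacter.LFunctionTrivChar₁ 1

lemma PW_diff : Differentiable ℂ PW := DirichletCharacter.differentiable_LFunctionTrivChar₁ 1

lemma PW_one : PW 1 = 1 := by
  simp [PW, DirichletCharacter.LFunctionTrivChar₁]

lemma PW_ne {s : ℂ} (hs : s ≠ 1) : PW s = (s - 1) * riemannZeta s := by
  simp [PW, DirichletCharacter.LFunctionTrivChar₁, Function.update_of_ne hs, DirichletCharacter.LFunctionTrivChar]

noncomputable def PG (s : ℂ) : ℂ := - deriv PW s / PW s - dslope PW 1 s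

lemma PG_cont : ContinuousOn PG {s | 1 ≤ s.re} := by
  apply ContinuousOn.sub
  · apply ContinuousOn.div
    · exact (PW_diff.contDiff.continuous_deriv le_rfl).neg.continuousOn
    · exact PW_diff.continuous.continuousOn
    · intro s hs
      by_cases h : s = 1
      · rw [h, PW_one]; exact one_ne_zero
      · rw [PW_ne h]
        exact mul_ne_zero (sub_ne_zero.mpr h) (riemannZeta_ne_zero_of_one_le_re hs)
  · apply Continuous.continuousOn
    rw [continuous_iff_continuousAt]
    intro s
    by_cases h : s = 1
    · rw [h, continuousAt_dslope_same]; exact PW_diff 1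
    · rw [continuousAt_dslope_of_ne h]; exact (PW_diff s).continuousAt

lemma PG_eq {s : ℂ} (hs : 1 < s.re) : L ↗Λ s - L 1 s = PG s := by
  have h1 : s ≠ 1 := by rintro rfl; simp at hs
  have hz := riemannZeta_ne_zero_of_one_le_re hs.le
  have hs1 := sub_ne_zero.mpr h1
  rw [LSeries_vonMangoldt_eq_deriv_riemannZeta_div hs, LSeries_one_eq_riemannZeta hs, PG,
    dslope_of_ne _ h1, slope_def_field, PW_one, PW_ne h1]
  have : deriv PW s = (s - 1) * deriv riemannZeta s + riemannZeta s := by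
    have := DirichletCharacter.deriv_LFunctionTrivChar₁_apply_of_ne_one 1 h1
    simpa [PW, DirichletCharacter.LFunctionTrivChar] using this
  rw [this]
  field_simp
  ring

lemma P_hasSum {σ : ℝ} (hσ : 1 < σ) (t : ℝ) :
    HasSum (fun n : ℕ => LSeries.term (fun n => ((Λ n : ℝ) : ℂ) - 1) (σ + t * I) n) (PG (σ + t * I)) := by
  have hre : 1 < ((σ:ℂ) + t * I).re := by simpa using hσ
  rw [← PG_eq hre]
  have a := (LSeriesSummable_vonMangoldt hre).LSeriesHasSum
  have b := (LSeriesSummable_one_iff.mpr hre).LSeriesHasSum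
  have := a.sub b
  exact this

noncomputable def FK (l u : ℝ) : ℝ := ∫ t in (-l)..l, (1 - |t| / l) * Real.cos (t * u)

lemma FK_eq {l u : ℝ} (hl : 0 < l) (hu : u ≠ 0) :
    FK l u = 2 * (1 - Real.cos (l * u)) / (l * u ^ 2) := by
  unfold FK
  have hc : Continuous fun t : ℝ => (1 - |t| / l) * Real.cos (t * u) := by fun_prop
  rw [← intervalIntegral.integral_add_adjacent_intervals (b := 0)
    (hc.intervalIntegrable _ _) (hc.intervalIntegrable _ _)]
  have e1 : ∫ t in (-l)..0, (1 - |t| / l) * Real.cos (t * u)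
      = (1 - Real.cos (l * u)) / (l * u ^ 2) := by
    have : ∫ t in (-l)..0, (1 - |t| / l) * Real.cos (t * u)
        = ∫ t in (-l)..0, (1 + t / l) * Real.cos (t * u) := by
      apply intervalIntegral.integral_congr
      intro t ht
      rw [Set.uIcc_of_le (by linarith)] at ht
      simp only [abs_of_nonpos ht.2]; ring
    rw [this, intervalIntegral.integral_eq_sub_of_hasDerivAt
      (f := fun t => (1 + t / l) * (Real.sin (t * u) / u) + Real.cos (t * u) / (l * u ^ 2))]
    · simp [neg_mul]; field_simp; ring
    · intro t _
      have h1 : HasDerivAt (fun t : ℝ => t * u) u t := by simpa using (hasDerivAt_id t).mul_const u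
      have h2 : HasDerivAt (fun t : ℝ => 1 + t / l) (1 / l) t :=
        ((hasDerivAt_id t).div_const l).const_add 1
      have := (h2.mul (h1.sin.div_const u)).add (h1.cos.div_const (l * u ^ 2))
      refine this.congr_deriv ?_
      field_simp; ring
    · apply Continuous.intervalIntegrable; fun_prop
  have e2 : ∫ t in (0:ℝ)..l, (1 - |t| / l) * Real.cos (t * u)
      = (1 - Real.cos (l * u)) / (l * u ^ 2) := by
    have : ∫ t in (0:ℝ)..l, (1 - |t| / l) * Real.cos (t * u)
        = ∫ t in (0:ℝ)..l, (1 - t / l) * Real.cos (t * u) := by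
      apply intervalIntegral.integral_congr
      intro t ht
      rw [Set.uIcc_of_le (by linarith)] at ht
      simp only [abs_of_nonneg ht.1]
    rw [this, intervalIntegral.integral_eq_sub_of_hasDerivAt
      (f := fun t => (1 - t / l) * (Real.sin (t * u) / u) - Real.cos (t * u) / (l * u ^ 2))]
    · simp; field_simp; ring
    · intro t _
      have h1 : HasDerivAt (fun t : ℝ => t * u) u t := by simpa using (hasDerivAt_id t).mul_const u
      have h2 : HasDerivAt (fun t : ℝ => 1 - t / l) (-(1 / l)) t :=
        ((hasDerivAt_id t).div_const l).const_sub 1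
      have := (h2.mul (h1.sin.div_const u)).sub (h1.cos.div_const (l * u ^ 2))
      refine this.congr_deriv ?_
      field_simp; ring
    · apply Continuous.intervalIntegrable; fun_prop
  rw [e1, e2]; ring

lemma FK_zero {l : ℝ} (hl : 0 < l) : FK l 0 = l := by
  unfold FK
  have hc : Continuous fun t : ℝ => (1 - |t| / l) * Real.cos (t * 0) := by fun_prop
  rw [← intervalIntegral.integral_add_adjacent_intervals (b := 0)
    (hc.intervalIntegrable _ _) (hc.intervalIntegrable _ _)]
  have e1 : ∫ t in (-l)..0, (1 - |t| / l) * Real.cos (t * 0) = l / 2 := by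
    have : ∫ t in (-l)..0, (1 - |t| / l) * Real.cos (t * 0)
        = ∫ t in (-l)..0, (1 + t / l) := by
      apply intervalIntegral.integral_congr
      intro t ht
      rw [Set.uIcc_of_le (by linarith)] at ht
      simp only [abs_of_nonpos ht.2]; simp; ring
    rw [this, intervalIntegral.integral_eq_sub_of_hasDerivAt
      (f := fun t => t + t ^ 2 / (2 * l))]
    · simp; field_simp; ring
    · intro t _
      have := (hasDerivAt_id t).add (((hasDerivAt_id t).pow 2).div_const (2 * l))
      refine this.congr_deriv ?_
      simp; field_simp
    · apply Continuous.intervalIntegrable; fun_prop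
  have e2 : ∫ t in (0:ℝ)..l, (1 - |t| / l) * Real.cos (t * 0) = l / 2 := by
    have : ∫ t in (0:ℝ)..l, (1 - |t| / l) * Real.cos (t * 0)
        = ∫ t in (0:ℝ)..l, (1 - t / l) := by
      apply intervalIntegral.integral_congr
      intro t ht
      rw [Set.uIcc_of_le (by linarith)] at ht
      simp only [abs_of_nonneg ht.1]; simp
    rw [this, intervalIntegral.integral_eq_sub_of_hasDerivAt
      (f := fun t => t - t ^ 2 / (2 * l))]
    · simp; field_simp; ring
    · intro t _
      have := (hasDerivAt_id t).sub (((hasDerivAt_id t).pow 2).div_const (2 * l))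
      refine this.congr_deriv ?_
      simp; field_simp
    · apply Continuous.intervalIntegrable; fun_prop
  rw [e1, e2]; ring

lemma FK_nonneg {l : ℝ} (hl : 0 < l) (u : ℝ) : 0 ≤ FK l u := by
  by_cases hu : u = 0
  · rw [hu, FK_zero hl]; exact hl.le
  · rw [FK_eq hl hu]
    have := Real.cos_le_one (l * u)
    have : 0 ≤ 1 - Real.cos (l * u) := by linarith
    positivity

lemma FK_le {l : ℝ} (hl : 0 < l) (u : ℝ) : FK l u ≤ l := by
  by_cases hu : u = 0
  · rw [hu, FK_zero hl]
  · rw [FK_eq hl hu, div_le_iff₀ (by positivity)]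
    have := Real.one_sub_sq_div_two_le_cos (x := l * u)
    nlinarith

lemma FK_le' {l u : ℝ} (hl : 0 < l) (hu : u ≠ 0) : FK l u ≤ 4 / (l * u ^ 2) := by
  rw [FK_eq hl hu]
  have := Real.neg_one_le_cos (l * u)
  gcongr
  linarith

lemma le_FK {l u : ℝ} (hl : 0 < l) (hu : |l * u| ≤ 1) : l / 2 ≤ FK l u := by
  by_cases h0 : u = 0
  · rw [h0, FK_zero hl]; linarith
  · rw [FK_eq hl h0, le_div_iff₀ (by positivity)]
    have h1 := (abs_le.mp (Real.cos_bound hu)).2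
    have h2 : |l * u| ^ 4 ≤ |l * u| ^ 2 := pow_le_pow_of_le_one (abs_nonneg _) hu (by norm_num)
    rw [sq_abs] at h2
    nlinarith [sq_nonneg (l * u)]

lemma P_term {σ : ℝ} (hσ : 1 < σ) (y t : ℝ) (n : ℕ) :
    (LSeries.term (fun n => ((Λ n : ℝ) : ℂ) - 1) (σ + t * I) n * cexp (I * t * y)).re
      = (Λ n - 1) * (n : ℝ) ^ (-σ) * Real.cos (t * (Real.log n - y)) := by
  rw [LSeries.term_def]
  by_cases hn : n = 0
  · simp [hn, Real.zero_rpow (by linarith : -σ ≠ 0)]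
  · rw [if_neg hn]
    have hn' : (n : ℂ) ≠ 0 := by exact_mod_cast hn
    have hnp : (0:ℝ) < n := by positivity
    have e : (((Λ n : ℝ) : ℂ) - 1) / (n : ℂ) ^ ((σ:ℂ) + t * I) * cexp (I * t * y)
       = (((Λ n - 1) * (n : ℝ) ^ (-σ) : ℝ) : ℂ) * cexp ((( -(t * (Real.log n - y)) : ℝ) : ℂ) * I) := by
      rw [div_eq_mul_inv, ← Complex.cpow_neg, Complex.cpow_def_of_ne_zero hn', Real.rpow_def_of_pos hnp]
      push_cast
      rw [mul_assoc (_ - 1 : ℂ) (cexp _), mul_assoc (_ - 1 : ℂ) (cexp _), ← Complex.exp_add, ← Complex.exp_add]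
      congr 2
      ring
    rw [e, Complex.re_ofReal_mul, Complex.exp_ofReal_mul_I_re, Real.cos_neg]

lemma P_main {σ l : ℝ} (hσ : 1 < σ) (hl : 0 < l) (y : ℝ) :
    HasSum (fun n : ℕ => (Λ n - 1) * (n : ℝ) ^ (-σ) * FK l (Real.log n - y))
      (∫ t in (-l)..l, ((1 - |t| / l : ℝ) : ℂ) * (PG (σ + t * I) * cexp (I * t * y))).re := by
  set c : ℕ → ℂ := fun n => ((Λ n : ℝ) : ℂ) - 1 with hc
  have hre : 1 < ((σ:ℂ)).re := by simpa using hσ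
  have hsum : Summable fun n => ‖LSeries.term c σ n‖ :=
    ((LSeriesSummable_vonMangoldt hre).sub (LSeriesSummable_one_iff.mpr hre)).norm
  have hterm : ∀ (t : ℝ) n, LSeries.term c (σ + t * I) n = LSeries.term c σ n * (if n = 0 then 0 else cexp (-(t * I) * Real.log n)) := by
    intro t n
    rw [LSeries.term_def, LSeries.term_def]
    by_cases hn : n = 0
    · simp [hn]
    · have hn' : (n : ℂ) ≠ 0 := by exact_mod_cast hn
      simp only [if_neg hn]
      rw [Complex.cpow_add _ _ hn', div_mul_eq_div_div, div_eq_mul_inv (_ / _), ← Complex.cpow_neg,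
        Complex.cpow_def_of_ne_zero hn' (-(t * I)), Complex.natCast_log, mul_comm (Complex.log _)]
  have hcont : ∀ n, Continuous fun t : ℝ => ((1 - |t| / l : ℝ) : ℂ) * (LSeries.term c (σ + t * I) n * cexp (I * t * y)) := by
    intro n
    simp only [hterm]
    by_cases hn : n = 0
    · simp only [hn, if_true, mul_zero, zero_mul]; exact continuous_const
    · simp only [if_neg hn]; fun_prop
  have H : HasSum (fun n : ℕ => ∫ t in (-l)..l, ((1 - |t| / l : ℝ) : ℂ) * (LSeries.term c (σ + t * I) n * cexp (I * t * y)))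
      (∫ t in (-l)..l, ((1 - |t| / l : ℝ) : ℂ) * (PG (σ + t * I) * cexp (I * t * y))) := by
    apply intervalIntegral.hasSum_integral_of_dominated_convergence (fun n _ => ‖LSeries.term c σ n‖)
    · intro n; exact (hcont n).aestronglyMeasurable
    · intro n
      filter_upwards with t ht
      rw [Set.uIoc_of_le (by linarith)] at ht
      have h1 : |t| ≤ l := abs_le.mpr ⟨ht.1.le, ht.2⟩
      have h2 : |t| / l ≤ 1 := (div_le_one hl).mpr h1
      have h3 : 0 ≤ |t| / l := by positivity
      have h4 : ‖LSeries.term c (σ + t * I) n‖ = ‖LSeries.term c σ n‖ := by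
        rw [LSeries.norm_term_eq, LSeries.norm_term_eq]; simp
      have h5 : ‖cexp (I * t * y)‖ = 1 := by
        rw [show I * t * y = ((t * y : ℝ) : ℂ) * I by push_cast; ring]
        exact Complex.norm_exp_ofReal_mul_I _
      rw [norm_mul, norm_mul, h4, h5, mul_one, Complex.norm_real, Real.norm_eq_abs, abs_of_nonneg (by linarith)]
      exact mul_le_of_le_one_left (norm_nonneg _) (by linarith)
    · filter_upwards with t _ using hsum
    · simp
    · filter_upwards with t _
      exact ((P_hasSum hσ t).mul_right _).mul_left _
  have H2 := Complex.hasSum_re H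
  convert H2 using 1
  funext n
  have e := Complex.reCLM.intervalIntegral_comp_comm ((hcont n).intervalIntegrable (-l) l) (μ := MeasureTheory.volume)
  simp only [Complex.reCLM_apply] at e
  rw [← e, FK, ← intervalIntegral.integral_const_mul]
  apply intervalIntegral.integral_congr
  intro t _
  simp only [Complex.re_ofReal_mul]
  rw [P_term hσ]
  ring

lemma mass_le (z : ℝ) (s : Finset ℕ) (hs : ∀ n ∈ s, 0 < n ∧ z ≤ Real.log n ∧ Real.log n ≤ z + 1) :
    ∑ n ∈ s, Λ n * (n : ℝ)⁻¹ ≤ (Real.log 4 + 4) * Real.exp 1 := by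
  have h1 : ∀ n ∈ s, Λ n * (n : ℝ)⁻¹ ≤ Λ n * Real.exp (-z) := by
    intro n hn
    obtain ⟨h0, h1, h2⟩ := hs n hn
    have : (0:ℝ) < n := by exact_mod_cast h0
    gcongr
    rw [Real.exp_neg]
    apply inv_anti₀ (Real.exp_pos _)
    exact (Real.le_log_iff_exp_le this).mp h1
  have h2 : ∑ n ∈ s, Λ n ≤ Chebyshev.psi (Real.exp (z + 1)) := by
    unfold Chebyshev.psi
    apply Finset.sum_le_sum_of_subset_of_nonneg
    · intro n hn
      obtain ⟨h0, h1, h2⟩ := hs n hn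
      have : (0:ℝ) < n := by exact_mod_cast h0
      rw [Finset.mem_Ioc]
      exact ⟨h0, Nat.le_floor ((Real.log_le_iff_le_exp this).mp h2)⟩
    · intros; exact vonMangoldt_nonneg
  have h3 := Chebyshev.psi_le_const_mul_self (Real.exp_pos (z + 1)).le
  calc _ ≤ ∑ n ∈ s, Λ n * Real.exp (-z) := Finset.sum_le_sum h1
    _ = (∑ n ∈ s, Λ n) * Real.exp (-z) := by rw [Finset.sum_mul]
    _ ≤ ((Real.log 4 + 4) * Real.exp (z + 1)) * Real.exp (-z) := by
        gcongr; exact h2.trans h3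
    _ = _ := by rw [mul_assoc, ← Real.exp_add]; congr 2; ring

lemma S_bound : ∃ C : ℝ, 0 < C ∧ ∀ (y : ℝ) (s : Finset ℕ),
    ∑ n ∈ s, Λ n * (n : ℝ)⁻¹ * (1 + (Real.log n - y) ^ 2)⁻¹ ≤ C := by
  set M : ℝ := (Real.log 4 + 4) * Real.exp 1 with hM
  have hMpos : 0 < M := by have := Real.log_pos (by norm_num : (1:ℝ) < 4); positivity
  have hsum : Summable fun m : ℕ => (1 + (m : ℝ) ^ 2)⁻¹ := by
    have := Real.summable_nat_pow_inv.mpr (by norm_num : 1 < 2)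
    rw [← summable_nat_add_iff 1] at this ⊢
    refine this.of_nonneg_of_le (fun m => by positivity) (fun m => ?_)
    apply inv_anti₀ (by positivity)
    linarith
  refine ⟨2 * M * (∑' m : ℕ, (1 + (m : ℝ) ^ 2)⁻¹ + 1), ?_, ?_⟩
  · have : 0 ≤ ∑' m : ℕ, (1 + (m : ℝ) ^ 2)⁻¹ := tsum_nonneg (fun m => by positivity)
    positivity
  intro y s
  set g : ℕ → ℕ := fun n => ⌊|Real.log n - y|⌋₊ with hg
  rw [← Finset.sum_fiberwise_of_maps_to (g := g) (t := s.image g) (fun i hi => Finset.mem_image_of_mem _ hi)]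
  have hfib : ∀ m, ∑ n ∈ s with g n = m, Λ n * (n : ℝ)⁻¹ ≤ 2 * M := by
    intro m
    have a1 := mass_le (y + m) (s.filter (fun n => g n = m ∧ 0 < n ∧ y ≤ Real.log n)) (by
      intro n hn
      simp only [Finset.mem_filter] at hn
      obtain ⟨_, h1, h2, h3⟩ := hn
      have h4 := Nat.floor_le (abs_nonneg (Real.log n - y))
      have h5 := (Nat.lt_floor_add_one (|Real.log n - y|)).le
      rw [show ⌊|Real.log n - y|⌋₊ = m from h1, abs_of_nonneg (by linarith)] at h4 h5
      exact ⟨h2, by linarith, by linarith⟩)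
    have a2 := mass_le (y - m - 1) (s.filter (fun n => g n = m ∧ 0 < n ∧ ¬ y ≤ Real.log n)) (by
      intro n hn
      simp only [Finset.mem_filter] at hn
      obtain ⟨_, h1, h2, h3⟩ := hn
      have h4 := Nat.floor_le (abs_nonneg (Real.log n - y))
      have h5 := (Nat.lt_floor_add_one (|Real.log n - y|)).le
      rw [show ⌊|Real.log n - y|⌋₊ = m from h1, abs_of_nonpos (by linarith)] at h4 h5
      exact ⟨h2, by linarith, by linarith⟩)
    rw [two_mul]
    refine le_trans ?_ (add_le_add a1 a2)
    rw [Finset.sum_filter, Finset.sum_filter, Finset.sum_filter, ← Finset.sum_add_distrib]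
    apply Finset.sum_le_sum
    intro n _
    by_cases h1 : g n = m
    · by_cases h2 : 0 < n
      · by_cases h3 : y ≤ Real.log n <;> simp [h1, h2, h3]
      · have : n = 0 := by omega
        simp [this]
    · simp [h1]
  calc _ ≤ ∑ m ∈ s.image g, 2 * M * (1 + (m : ℝ) ^ 2)⁻¹ := by
        apply Finset.sum_le_sum
        intro m _
        calc _ ≤ ∑ n ∈ s with g n = m, Λ n * (n : ℝ)⁻¹ * (1 + (m : ℝ) ^ 2)⁻¹ := by
              apply Finset.sum_le_sum
              intro n hn
              have h1 := (Finset.mem_filter.mp hn).2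
              have h4 := Nat.floor_le (abs_nonneg (Real.log n - y))
              rw [show ⌊|Real.log n - y|⌋₊ = m from h1] at h4
              have h5 : (m:ℝ) ^ 2 ≤ (Real.log n - y) ^ 2 := by
                rw [← sq_abs (Real.log n - y)]; gcongr
              have : 0 ≤ Λ n := vonMangoldt_nonneg
              gcongr
          _ ≤ _ := by
              rw [← Finset.sum_mul]
              gcongr
              exact hfib m
    _ = 2 * M * ∑ m ∈ s.image g, (1 + (m : ℝ) ^ 2)⁻¹ := by rw [Finset.mul_sum]
    _ ≤ _ := by
      gcongr
      have := hsum.sum_le_tsum (s.image g) (fun m _ => by positivity)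
      linarith

lemma RL (l : ℝ) (hl : 0 < l) : Tendsto (fun y : ℝ =>
    (∫ t in (-l)..l, ((1 - |t| / l : ℝ) : ℂ) * (PG ((1:ℝ) + t * I) * cexp (I * t * y))).re) atTop (𝓝 0) := by
  set f : ℝ → ℂ := (Set.Ioc (-l) l).indicator (fun t => ((1 - |t| / l : ℝ) : ℂ) * PG ((1:ℝ) + t * I)) with hf
  have h := Real.tendsto_integral_exp_smul_cocompact f
  have h2 : Tendsto (fun y : ℝ => -y / (2 * Real.pi)) atTop (cocompact ℝ) := by
    refine Tendsto.mono_right ?_ atBot_le_cocompact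
    exact tendsto_neg_atTop_atBot.atBot_div_const (by positivity)
  have h3 := (Complex.continuous_re.tendsto 0).comp (h.comp h2)
  simp only [Complex.zero_re] at h3
  refine h3.congr (fun y => ?_)
  simp only [Function.comp]
  rw [intervalIntegral.integral_of_le (by linarith), ← MeasureTheory.integral_indicator measurableSet_Ioc]
  congr 2
  funext v
  by_cases hv : v ∈ Set.Ioc (-l) l
  · rw [hf, Set.indicator_of_mem hv, Set.indicator_of_mem hv, Circle.smul_def, Real.fourierChar_apply, smul_eq_mul]
    have : ((2 * Real.pi * -(v * (-y / (2 * Real.pi))) : ℝ) : ℂ) * I = I * v * y := by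
      have : (2 * Real.pi * -(v * (-y / (2 * Real.pi))) : ℝ) = v * y := by
        field_simp
      rw [this]; push_cast; ring
    rw [this]; ring
  · rw [hf, Set.indicator_of_notMem hv, Set.indicator_of_notMem hv, smul_zero]

lemma I_cont (l : ℝ) (y : ℝ) : Tendsto (fun σ : ℝ =>
    (∫ t in (-l)..l, ((1 - |t| / l : ℝ) : ℂ) * (PG (σ + t * I) * cexp (I * t * y))).re) (𝓝[>] 1)
    (𝓝 (∫ t in (-l)..l, ((1 - |t| / l : ℝ) : ℂ) * (PG ((1:ℝ) + t * I) * cexp (I * t * y))).re) := by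
  have hc : Continuous fun q : ℝ × ℝ => PG (((max q.1 1 : ℝ):ℂ) + q.2 * I) := by
    apply PG_cont.comp_continuous (by fun_prop)
    intro q
    simp
  have h := intervalIntegral.continuous_parametric_intervalIntegral_of_continuous' (μ := MeasureTheory.volume)
    (f := fun σ t : ℝ => ((1 - |t| / l : ℝ) : ℂ) * (PG (((max σ 1 : ℝ):ℂ) + t * I) * cexp (I * t * y)))
    (by
      simp only [Function.uncurry_def]
      apply Continuous.mul (by fun_prop)
      exact hc.mul (by fun_prop)) (-l) l
  have h2 := (Complex.continuous_re.comp h).tendsto 1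
  simp only [Function.comp_def, max_self] at h2
  refine (h2.mono_left nhdsWithin_le_nhds).congr' ?_
  filter_upwards [self_mem_nhdsWithin] with σ hσ
  rw [max_eq_left (le_of_lt hσ)]

lemma rpow_neg_le {σ : ℝ} (hσ : 1 < σ) (n : ℕ) : (n : ℝ) ^ (-σ) ≤ (n : ℝ)⁻¹ := by
  by_cases hn : n = 0
  · simp [hn, Real.zero_rpow (by linarith : -σ ≠ 0)]
  · rw [← Real.rpow_neg_one]
    apply Real.rpow_le_rpow_of_exponent_le
    · exact_mod_cast Nat.one_le_iff_ne_zero.mpr hn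
    · linarith

lemma window_le (ε y Cp : ℝ) (hε : 0 < ε) (hCp : ∀ x : ℝ, Chebyshev.psi x - Chebyshev.theta x ≤ Cp * √x)
    (s : Finset ℕ) (hs : ∀ n ∈ s, 0 < n ∧ ¬ n.Prime ∧ |Real.log n - y| < ε) :
    ∑ n ∈ s, Λ n * (n : ℝ)⁻¹ ≤ Cp * Real.exp (-y / 2 + 3 * ε / 2) := by
  have h1 : ∀ n ∈ s, Λ n * (n : ℝ)⁻¹ ≤ Λ n * Real.exp (-(y - ε)) := by
    intro n hn
    obtain ⟨h0, _, h2⟩ := hs n hn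
    have : (0:ℝ) < n := by exact_mod_cast h0
    gcongr
    rw [Real.exp_neg]
    apply inv_anti₀ (Real.exp_pos _)
    exact (Real.le_log_iff_exp_le this).mp (by linarith [(abs_lt.mp h2).1])
  have h2 : ∑ n ∈ s, Λ n ≤ Chebyshev.psi (Real.exp (y + ε)) - Chebyshev.theta (Real.exp (y + ε)) := by
    rw [Chebyshev.psi_sub_theta_eq_sum_not_prime]
    apply Finset.sum_le_sum_of_subset_of_nonneg
    · intro n hn
      obtain ⟨h0, h1, h2⟩ := hs n hn
      have : (0:ℝ) < n := by exact_mod_cast h0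
      rw [Finset.mem_filter, Finset.mem_Ioc]
      exact ⟨⟨h0, Nat.le_floor ((Real.log_le_iff_le_exp this).mp (by linarith [(abs_lt.mp h2).2]))⟩, h1⟩
    · intros; exact vonMangoldt_nonneg
  calc _ ≤ ∑ n ∈ s, Λ n * Real.exp (-(y - ε)) := Finset.sum_le_sum h1
    _ = (∑ n ∈ s, Λ n) * Real.exp (-(y - ε)) := by rw [Finset.sum_mul]
    _ ≤ (Cp * √(Real.exp (y + ε))) * Real.exp (-(y - ε)) := by
        gcongr; exact h2.trans (hCp _)
    _ = _ := by rw [← Real.exp_half, mul_assoc, ← Real.exp_add]; congr 2; ring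

lemma key_ineq {ε l y Cp CS : ℝ} (hε : 0 < ε) (hl : 0 < l)
    (hCp : ∀ x : ℝ, Chebyshev.psi x - Chebyshev.theta x ≤ Cp * √x)
    (hCS : ∀ (y : ℝ) (s : Finset ℕ), ∑ n ∈ s, Λ n * (n : ℝ)⁻¹ * (1 + (Real.log n - y) ^ 2)⁻¹ ≤ CS)
    (hno : ∀ p : ℕ, p.Prime → ¬ |Real.log p - y| < ε) {σ : ℝ} (hσ : 1 < σ) :
    (∫ t in (-l)..l, ((1 - |t| / l : ℝ) : ℂ) * (PG (σ + t * I) * cexp (I * t * y))).re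
      + l / 2 * ∑ n ∈ Finset.Icc ⌈Real.exp y⌉₊ ⌊Real.exp (y + 1 / l)⌋₊, (n : ℝ) ^ (-σ)
      ≤ l * (Cp * Real.exp (-y / 2 + 3 * ε / 2)) + 4 / l * (1 + (ε ^ 2)⁻¹) * CS := by
  set W := Finset.Icc ⌈Real.exp y⌉₊ ⌊Real.exp (y + 1 / l)⌋₊ with hW
  rw [← le_sub_iff_add_le]
  refine le_of_tendsto (P_main hσ hl y) ?_
  filter_upwards [eventually_ge_atTop W] with s hs
  have hB : l / 2 * ∑ n ∈ W, (n : ℝ) ^ (-σ) ≤ ∑ n ∈ s, (n : ℝ) ^ (-σ) * FK l (Real.log n - y) := by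
    rw [Finset.mul_sum]
    calc _ ≤ ∑ n ∈ W, (n : ℝ) ^ (-σ) * FK l (Real.log n - y) := by
          apply Finset.sum_le_sum
          intro n hn
          rw [hW, Finset.mem_Icc] at hn
          have h1 : Real.exp y ≤ n := (Nat.le_ceil _).trans (by exact_mod_cast hn.1)
          have h2 : (n:ℝ) ≤ Real.exp (y + 1 / l) := (Nat.le_floor_iff (Real.exp_pos _).le).mp hn.2
          have hp : (0:ℝ) < n := (Real.exp_pos y).trans_le h1
          have h3 := (Real.le_log_iff_exp_le hp).mpr h1
          have h4 := (Real.log_le_iff_le_exp hp).mpr h2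
          rw [mul_comm]
          gcongr
          apply le_FK hl
          rw [abs_of_nonneg (mul_nonneg hl.le (by linarith))]
          calc l * (Real.log n - y) ≤ l * (1 / l) := by gcongr; linarith
            _ = 1 := by field_simp
      _ ≤ _ := by
          apply Finset.sum_le_sum_of_subset_of_nonneg hs
          intro n _ _
          exact mul_nonneg (by positivity) (FK_nonneg hl _)
  have hA : ∑ n ∈ s, Λ n * (n : ℝ) ^ (-σ) * FK l (Real.log n - y) ≤
      l * (Cp * Real.exp (-y / 2 + 3 * ε / 2)) + 4 / l * (1 + (ε ^ 2)⁻¹) * CS := by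
    rw [← Finset.sum_filter_add_sum_filter_not s (fun n : ℕ => 0 < n ∧ |Real.log n - y| < ε)]
    apply add_le_add
    · calc _ ≤ ∑ n ∈ s.filter (fun n : ℕ => 0 < n ∧ |Real.log n - y| < ε), l * (Λ n * (n : ℝ)⁻¹) := by
            apply Finset.sum_le_sum
            intro n _
            rw [mul_comm l]
            have h0 : 0 ≤ Λ n := vonMangoldt_nonneg
            have := FK_nonneg hl (Real.log n - y)
            have := rpow_neg_le hσ n
            have := FK_le hl (Real.log n - y)
            gcongr
        _ ≤ _ := by
            rw [← Finset.mul_sum]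
            gcongr
            apply window_le ε y Cp hε hCp
            intro n hn
            have := (Finset.mem_filter.mp hn).2
            exact ⟨this.1, fun hp => hno n hp this.2, this.2⟩
    · calc _ ≤ ∑ n ∈ s.filter (fun n : ℕ => ¬ (0 < n ∧ |Real.log n - y| < ε)), 4 / l * (1 + (ε ^ 2)⁻¹) *
            (Λ n * (n : ℝ)⁻¹ * (1 + (Real.log n - y) ^ 2)⁻¹) := by
            apply Finset.sum_le_sum
            intro n hn
            have hn := (Finset.mem_filter.mp hn).2
            by_cases h0 : n = 0
            · simp [h0]
            have hu : ε ≤ |Real.log n - y| := by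
              by_contra hcon
              exact hn ⟨by omega, by linarith⟩
            set u := Real.log n - y
            have hu0 : u ≠ 0 := by
              rintro h; rw [h, abs_zero] at hu; linarith
            have hu2 : ε ^ 2 ≤ u ^ 2 := by rw [← sq_abs u]; gcongr
            have h1 : FK l u ≤ 4 / l * (1 + (ε ^ 2)⁻¹) * (1 + u ^ 2)⁻¹ := by
              refine (FK_le' hl hu0).trans ?_
              have : (u ^ 2)⁻¹ ≤ (1 + (ε ^ 2)⁻¹) * (1 + u ^ 2)⁻¹ := by
                rw [← div_eq_mul_inv, le_div_iff₀ (by positivity), mul_add, inv_mul_cancel₀ (by positivity), mul_one, add_comm]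
                gcongr
              calc 4 / (l * u ^ 2) = 4 / l * (u ^ 2)⁻¹ := by field_simp
                _ ≤ 4 / l * ((1 + (ε ^ 2)⁻¹) * (1 + u ^ 2)⁻¹) := by gcongr
                _ = _ := by ring
            have h0 : 0 ≤ Λ n := vonMangoldt_nonneg
            have := FK_nonneg hl u
            have := rpow_neg_le hσ n
            calc Λ n * (n : ℝ) ^ (-σ) * FK l u ≤ Λ n * (n : ℝ)⁻¹ * (4 / l * (1 + (ε ^ 2)⁻¹) * (1 + u ^ 2)⁻¹) := by
                  gcongr
              _ = _ := by ring
        _ ≤ _ := by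
            rw [← Finset.mul_sum]
            gcongr
            exact hCS _ _
  calc _ = ∑ n ∈ s, Λ n * (n : ℝ) ^ (-σ) * FK l (Real.log n - y)
      - ∑ n ∈ s, (n : ℝ) ^ (-σ) * FK l (Real.log n - y) := by
        rw [← Finset.sum_sub_distrib]
        apply Finset.sum_congr rfl
        intro n _; ring
    _ ≤ _ := by linarith

lemma W_ge {l y : ℝ} (hl : 1 ≤ l) :
    1 / 4 - l / 2 * Real.exp (-y) ≤ l / 2 * ∑ n ∈ Finset.Icc ⌈Real.exp y⌉₊ ⌊Real.exp (y + 1 / l)⌋₊, (n : ℝ) ^ (-(1:ℝ)) := by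
  have hl0 : 0 < l := by linarith
  set W := Finset.Icc ⌈Real.exp y⌉₊ ⌊Real.exp (y + 1 / l)⌋₊ with hW
  have h1 : (W.card : ℝ) * Real.exp (-(y + 1 / l)) ≤ ∑ n ∈ W, (n : ℝ) ^ (-(1:ℝ)) := by
    rw [← nsmul_eq_mul]
    apply Finset.card_nsmul_le_sum
    intro n hn
    rw [hW, Finset.mem_Icc] at hn
    have h1 : Real.exp y ≤ n := (Nat.le_ceil _).trans (by exact_mod_cast hn.1)
    have h2 : (n:ℝ) ≤ Real.exp (y + 1 / l) := (Nat.le_floor_iff (Real.exp_pos _).le).mp hn.2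
    have hp : (0:ℝ) < n := (Real.exp_pos y).trans_le h1
    rw [Real.rpow_neg_one, Real.exp_neg]
    gcongr
  have h2 : Real.exp (y + 1 / l) - Real.exp y - 1 ≤ W.card := by
    rw [hW, Nat.card_Icc]
    have a1 := Nat.lt_floor_add_one (Real.exp (y + 1 / l))
    have a2 := Nat.ceil_lt_add_one (Real.exp_pos y).le
    have a3 : (⌊Real.exp (y + 1 / l)⌋₊ : ℝ) + 1 ≤ ((⌊Real.exp (y + 1 / l)⌋₊ + 1 - ⌈Real.exp y⌉₊ : ℕ) : ℝ) + ⌈Real.exp y⌉₊ := by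
      exact_mod_cast (by omega)
    linarith
  have h3 : (Real.exp (y + 1 / l) - Real.exp y - 1) * Real.exp (-(y + 1 / l)) ≥ 1 / l / 2 - Real.exp (-y) := by
    have e1 : (Real.exp (y + 1 / l) - Real.exp y - 1) * Real.exp (-(y + 1 / l))
       = 1 - Real.exp (-(1 / l)) - Real.exp (-(y + 1 / l)) := by
      rw [sub_mul, sub_mul, ← Real.exp_add, ← Real.exp_add]; simp
    have e2 : Real.exp (-(y + 1 / l)) ≤ Real.exp (-y) := by
      apply Real.exp_le_exp.mpr
      have : 0 < 1 / l := by positivity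
      linarith
    have hv : 0 < 1 / l := by positivity
    have hv1 : 1 / l ≤ 1 := (div_le_one hl0).mpr hl
    have e3 : Real.exp (-(1 / l)) ≤ 1 - 1 / l / 2 := by
      set v := 1 / l
      rw [Real.exp_neg]
      have := Real.add_one_le_exp v
      calc (Real.exp v)⁻¹ ≤ (v + 1)⁻¹ := by gcongr
        _ ≤ _ := by
          rw [inv_le_iff_one_le_mul₀ (by positivity)]
          nlinarith
    rw [e1]; linarith
  have h4 := mul_le_mul_of_nonneg_right h2 (Real.exp_pos (-(y + 1 / l))).le
  have h5 : 1 / l / 2 - Real.exp (-y) ≤ ∑ n ∈ W, (n : ℝ) ^ (-(1:ℝ)) := by linarith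
  calc _ = l / 2 * (1 / l / 2 - Real.exp (-y)) := by field_simp; ring
    _ ≤ _ := by gcongr

lemma PNTlite_log {ε : ℝ} (hε : 0 < ε) : ∀ᶠ y : ℝ in atTop, ∃ p : ℕ, p.Prime ∧ |Real.log p - y| < ε := by
  obtain ⟨CS, hCSpos, hCS⟩ := S_bound
  obtain ⟨Cp, hCp⟩ := Chebyshev.psi_sub_theta_le_mul_sqrt
  set l : ℝ := max 1 (64 * (1 + (ε ^ 2)⁻¹) * CS) with hldef
  have hl1 : 1 ≤ l := le_max_left _ _
  have hl : 0 < l := by linarith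
  have hl2 : 4 / l * (1 + (ε ^ 2)⁻¹) * CS ≤ 1 / 16 := by
    have := le_max_right 1 (64 * (1 + (ε ^ 2)⁻¹) * CS)
    rw [← hldef] at this
    rw [div_mul_eq_mul_div, div_mul_eq_mul_div, div_le_iff₀ hl]
    linarith
  have t1 : ∀ᶠ y : ℝ in atTop, |(∫ t in (-l)..l, ((1 - |t| / l : ℝ) : ℂ) * (PG ((1:ℝ) + t * I) * cexp (I * t * y))).re| < 1 / 16 := by
    have := (RL l hl).eventually (Metric.ball_mem_nhds 0 (by norm_num : (0:ℝ) < 1 / 16))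
    filter_upwards [this] with y hy
    simpa [Metric.mem_ball, dist_zero_right, Real.norm_eq_abs] using hy
  have t2 : ∀ᶠ y : ℝ in atTop, l / 2 * Real.exp (-y) < 1 / 16 := by
    have : Tendsto (fun y : ℝ => l / 2 * Real.exp (-y)) atTop (𝓝 (l / 2 * 0)) :=
      (Real.tendsto_exp_atBot.comp tendsto_neg_atTop_atBot).const_mul _
    rw [mul_zero] at this
    exact this.eventually_lt_const (by norm_num)
  have t3 : ∀ᶠ y : ℝ in atTop, l * (Cp * Real.exp (-y / 2 + 3 * ε / 2)) < 1 / 16 := by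
    have : Tendsto (fun y : ℝ => l * (Cp * Real.exp (-y / 2 + 3 * ε / 2))) atTop (𝓝 (l * (Cp * 0))) := by
      refine ((Real.tendsto_exp_atBot.comp ?_).const_mul _).const_mul _
      exact tendsto_atBot_add_const_right _ _ (tendsto_neg_atTop_atBot.atBot_div_const (by norm_num))
    rw [mul_zero, mul_zero] at this
    exact this.eventually_lt_const (by norm_num)
  filter_upwards [t1, t2, t3] with y h1 h2 h3
  by_contra hcon
  push Not at hcon
  have key : ∀ σ : ℝ, 1 < σ → _ := fun σ hσ => key_ineq (y := y) hε hl hCp hCS (fun p hp => not_lt.mpr (hcon p hp)) hσ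
  have lim := (I_cont l y).add (((tendsto_finsetSum (Finset.Icc ⌈Real.exp y⌉₊ ⌊Real.exp (y + 1 / l)⌋₊)
    (f := fun (n : ℕ) (σ : ℝ) => (n : ℝ) ^ (-σ)) (a := fun n : ℕ => (n : ℝ) ^ (-(1:ℝ))) (x := 𝓝[>] 1) (by
      intro n hn
      rw [Finset.mem_Icc] at hn
      have h1 : Real.exp y ≤ n := (Nat.le_ceil _).trans (by exact_mod_cast hn.1)
      have hp : (0:ℝ) < n := (Real.exp_pos y).trans_le h1
      have : Continuous fun σ : ℝ => (n : ℝ) ^ (-σ) :=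
        Continuous.rpow continuous_const continuous_neg (fun _ => Or.inl hp.ne')
      exact (this.tendsto 1).mono_left nhdsWithin_le_nhds)).const_mul (l / 2)))
  have fin := le_of_tendsto lim (by filter_upwards [self_mem_nhdsWithin] with σ hσ using key σ hσ)
  have w := W_ge (y := y) hl1
  have := (abs_lt.mp h1).1
  linarith

lemma PNTlite {ε : ℝ} (hε : 0 < ε) : ∃ N : ℕ, ∀ n : ℕ, N ≤ n → ∃ p : ℕ, p.Prime ∧ p ≤ n ∧ (n : ℝ) * (1 - ε) < p := by
  have h := PNTlite_log (ε := ε / 2) (by linarith)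
  have h2 : Tendsto (fun n : ℕ => Real.log n - ε / 2) atTop atTop :=
    tendsto_atTop_add_const_right _ _ (Real.tendsto_log_atTop.comp tendsto_natCast_atTop_atTop)
  obtain ⟨N, hN⟩ := eventually_atTop.mp ((h2.eventually h).and (eventually_ge_atTop 1))
  refine ⟨N, fun n hn => ?_⟩
  obtain ⟨⟨p, hp, hpn⟩, hn1⟩ := hN n hn
  have hn0 : (0:ℝ) < n := by exact_mod_cast hn1
  have hp0 : (0:ℝ) < p := by exact_mod_cast hp.pos
  obtain ⟨ha, hb⟩ := abs_lt.mp hpn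
  refine ⟨p, hp, ?_, ?_⟩
  · have : Real.log p < Real.log n := by linarith
    exact_mod_cast ((Real.log_lt_log_iff hp0 hn0).mp this).le
  · have : Real.log n - ε < Real.log p := by linarith
    have h3 := (Real.lt_log_iff_exp_lt hp0).mp this
    rw [sub_eq_add_neg, Real.exp_add, Real.exp_log hn0] at h3
    have := Real.add_one_le_exp (-ε)
    nlinarith

end PNT


lemma caseB_b {C n k b : ℕ} (hC : 1 ≤ C) (hk : 1 ≤ k) (hnk : n ≤ k ^ 8) (hb : b.factorial ≤ n ^ (C * k)) :
    b ≤ (8 * C + 1) * k := by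
  by_contra hcon
  push Not at hcon
  have h1 : ((8 * C + 1) * k).factorial ≤ b.factorial := Nat.factorial_le hcon.le
  have h2 := Nat.factorial_mul_pow_le_factorial (m := k) (n := 8 * C * k)
  rw [show k + 8 * C * k = (8 * C + 1) * k by ring] at h2
  have h3 : n ^ (C * k) ≤ k ^ (8 * C * k) := by
    calc n ^ (C * k) ≤ (k ^ 8) ^ (C * k) := Nat.pow_le_pow_left hnk _
      _ = _ := by rw [← pow_mul]; congr 1; ring
  have h4 : k ^ (8 * C * k) < (k + 1) ^ (8 * C * k) :=
    Nat.pow_lt_pow_left (by omega) (by positivity)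
  have h5 : (k + 1) ^ (8 * C * k) ≤ k.factorial * (k + 1) ^ (8 * C * k) :=
    Nat.le_mul_of_pos_left _ (Nat.factorial_pos k)
  omega

lemma choose_le_pow {n k b : ℕ} (hn : 0 < n) (hkn : k ≤ n)
    (H : ∀ p : ℕ, p.Prime → p ∣ n.descFactorial k → p ≤ b) :
    n.choose k ≤ n ^ (Nat.primeCounting b) := by
  have hne : n.choose k ≠ 0 := Nat.choose_ne_zero hkn
  have e := Nat.prod_factorization_pow_eq_self hne
  rw [Nat.prod_factorization_eq_prod_primeFactors] at e
  have hsub : (n.choose k).primeFactors ⊆ Nat.primesLE b := by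
    intro p hp
    rw [Nat.mem_primesLE]
    have hpp := Nat.prime_of_mem_primeFactors hp
    refine ⟨H p hpp ?_, hpp⟩
    rw [Nat.descFactorial_eq_factorial_mul_choose]
    exact Dvd.dvd.mul_left (Nat.dvd_of_mem_primeFactors hp) _
  calc n.choose k = ∏ p ∈ (n.choose k).primeFactors, p ^ (n.choose k).factorization p := e.symm
    _ ≤ ∏ p ∈ (n.choose k).primeFactors, n := by
        apply Finset.prod_le_prod'
        intro p _
        exact Nat.pow_factorization_choose_le hn
    _ = n ^ (n.choose k).primeFactors.card := by rw [Finset.prod_const]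
    _ ≤ _ := by
        apply Nat.pow_le_pow_right hn
        rw [← Nat.primesLE_card_eq_primeCounting]
        exact Finset.card_le_card hsub

lemma caseB (C : ℕ) (hC : 1 ≤ C) : ∃ ε : ℝ, 0 < ε ∧ ∃ N : ℕ, ∀ n k b : ℕ, N ≤ n → 1 ≤ k → n ≤ k ^ 8 →
    (k : ℝ) ≤ ε * n → (∀ p : ℕ, p.Prime → p ∣ n.descFactorial k → p ≤ b) →
    b.factorial ≤ n ^ (C * k) → False := by
  set D : ℕ := 8 * C + 1 with hD
  have hDpos : (1:ℝ) ≤ D := by exact_mod_cast (by omega : 1 ≤ D)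
  obtain ⟨X, hX⟩ := Filter.eventually_atTop.mp (Chebyshev.eventually_primeCounting_le (ε := 1) one_pos)
  have hlog4 : Real.log 4 ≤ 2 := by
    have : Real.log 4 = 2 * Real.log 2 := by
      rw [show (4:ℝ) = 2 ^ 2 by norm_num, Real.log_pow]; norm_num
    have := Real.log_two_lt_d9
    linarith
  refine ⟨Real.exp (-(24 * D + 1)) / 2, by positivity, (⌈X⌉₊ + 2) ^ 8, ?_⟩
  intro n k b hn hk1 hnk hkn H hb
  have hkX : ⌈X⌉₊ + 2 ≤ k := by
    by_contra hcon
    push Not at hcon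
    have := Nat.pow_lt_pow_left hcon (by norm_num : 8 ≠ 0)
    omega
  have hkX' : X ≤ k := by
    have : (⌈X⌉₊ : ℝ) + 2 ≤ k := by exact_mod_cast hkX
    linarith [Nat.le_ceil X]
  have hk2 : (2:ℝ) ≤ k := by exact_mod_cast (by omega : 2 ≤ k)
  have hk0 : (0:ℝ) < k := by linarith
  have hlogk : 0 < Real.log k := Real.log_pos (by linarith)
  have hn0 : 0 < n := lt_of_lt_of_le (by positivity) hn
  have hn0' : (0:ℝ) < n := by exact_mod_cast hn0
  have heps : Real.exp (-(24 * (D:ℝ) + 1)) ≤ 1 := Real.exp_le_one_iff.mpr (by linarith)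
  have hkhalf : (k:ℝ) ≤ n / 2 := by nlinarith
  have hkn' : k ≤ n := by
    have : (k:ℝ) ≤ n := by linarith
    exact_mod_cast this
  have hbD : b ≤ D * k := caseB_b hC hk1 hnk hb
  have hpi : (Nat.primeCounting b : ℝ) ≤ 3 * D * k / Real.log k := by
    have h1 : (Nat.primeCounting b : ℝ) ≤ Nat.primeCounting (D * k) := by
      exact_mod_cast Nat.monotone_primeCounting hbD
    have hge : (k:ℝ) ≤ D * k := by nlinarith
    have h2 := hX (D * k) (by linarith)
    rw [show ((D:ℝ) * k) = ((D * k : ℕ) : ℝ) by push_cast; ring, Nat.floor_natCast] at h2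
    refine h1.trans (h2.trans ?_)
    push_cast
    have h3 : Real.log k ≤ Real.log (D * k) := Real.log_le_log hk0 hge
    calc (Real.log 4 + 1) * (D * k) / Real.log (D * k) ≤ 3 * (D * k) / Real.log k := by
          gcongr; linarith
      _ = _ := by ring
  have hch := choose_le_pow hn0 hkn' H
  have h1 : (n + 1 - k) ^ k ≤ k ^ k * n ^ (Nat.primeCounting b) := by
    calc (n + 1 - k) ^ k ≤ n.descFactorial k := Nat.pow_sub_le_descFactorial n k
      _ = k.factorial * n.choose k := Nat.descFactorial_eq_factorial_mul_choose n k
      _ ≤ k ^ k * n ^ (Nat.primeCounting b) := Nat.mul_le_mul (Nat.factorial_le_pow k) hch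
  have h1' : ((n:ℝ) / 2) ^ k ≤ (k:ℝ) ^ k * (n:ℝ) ^ (Nat.primeCounting b) := by
    calc ((n:ℝ) / 2) ^ k ≤ ((n + 1 - k : ℕ) : ℝ) ^ k := by
          gcongr
          rw [Nat.cast_sub (by omega)]; push_cast; linarith
      _ ≤ _ := by exact_mod_cast h1
  have h2 := Real.log_le_log (by positivity) h1'
  rw [Real.log_pow, Real.log_mul (by positivity) (by positivity), Real.log_pow, Real.log_pow] at h2
  have h3 : Real.log n ≤ 8 * Real.log k := by
    have : (n:ℝ) ≤ (k:ℝ) ^ 8 := by exact_mod_cast hnk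
    have := Real.log_le_log hn0' this
    rw [Real.log_pow] at this
    exact_mod_cast this
  have h4 : (Nat.primeCounting b : ℝ) * Real.log n ≤ 24 * D * k := by
    calc _ ≤ (3 * D * k / Real.log k) * (8 * Real.log k) := by gcongr
      _ = _ := by field_simp; ring
  have h5 : Real.log k + (24 * D + 1) ≤ Real.log (n / 2) := by
    have : (k:ℝ) * Real.exp (24 * D + 1) ≤ n / 2 := by
      calc (k:ℝ) * Real.exp (24 * D + 1) ≤ (Real.exp (-(24 * D + 1)) / 2 * n) * Real.exp (24 * D + 1) := by
            gcongr
        _ = (Real.exp (-(24 * D + 1)) * Real.exp (24 * D + 1)) * n / 2 := by ring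
        _ = n / 2 := by rw [← Real.exp_add]; simp
    have := Real.log_le_log (by positivity) this
    rwa [Real.log_mul (by positivity) (by positivity), Real.log_exp] at this
  have h6 := mul_le_mul_of_nonneg_left h5 hk0.le
  nlinarith

lemma rad_pos (n : ℕ) : 1 ≤ rad n :=
  Finset.prod_pos fun p hp => (Nat.prime_of_mem_primeFactors hp).pos

lemma rad_pair (habc : ExplicitABC) {m : ℕ} (hm : 0 < m) : (m + 1) ^ 4 ≤ (rad m * rad (m + 1)) ^ 7 := by
  have hcop : Nat.Coprime m (m + 1) := by simp
  have h := habc 1 m (m + 1) one_pos hm (by omega) (by simp) (by simp) hcop (by omega)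
  have e : rad (1 * m * (m + 1)) = rad m * rad (m + 1) := by
    unfold rad
    rw [one_mul, hcop.primeFactors_mul, Finset.prod_union hcop.disjoint_primeFactors]
  rw [e] at h
  set r := rad m * rad (m + 1)
  have h2 : (((m + 1 : ℕ) : ℝ)) ^ 4 ≤ ((r : ℝ) ^ ((7:ℝ) / 4)) ^ 4 := by gcongr
  rw [← Real.rpow_natCast (_ ^ ((7:ℝ) / 4)), ← Real.rpow_mul (by positivity)] at h2
  norm_num at h2
  exact_mod_cast h2

lemma rad_prod_ge (habc : ExplicitABC) {n k : ℕ} (hkn : k < n) (j : ℕ) (hj : 2 * j ≤ k) :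
    (n - k) ^ (4 * j) ≤ (∏ i ∈ Finset.range (2 * j), rad (n - i)) ^ 7 := by
  induction j with
  | zero => simp
  | succ j ih =>
    have ih := ih (by omega)
    rw [show 2 * (j + 1) = 2 * j + 1 + 1 by ring, Finset.prod_range_succ, Finset.prod_range_succ, mul_assoc,
      mul_pow, show 4 * (j + 1) = 4 * j + 4 by ring, pow_add]
    apply Nat.mul_le_mul ih
    have := rad_pair habc (m := n - (2 * j + 1)) (by omega)
    rw [show n - (2 * j + 1) + 1 = n - 2 * j by omega] at this
    rw [mul_comm (rad _)]
    refine le_trans (Nat.pow_le_pow_left (by omega) 4) this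

lemma count_le {n k p : ℕ} (hkn : k ≤ n) (hp : 0 < p) :
    ((Finset.range k).filter (fun i => p ∣ n - i)).card ≤ k / p + 1 := by
  have h1 : ((Finset.range k).filter (fun i => p ∣ n - i)).card ≤
      ((Finset.Ioc (n - k) n).filter (fun x => p ∣ x)).card := by
    apply Finset.card_le_card_of_injOn (fun i => n - i)
    · intro i hi
      simp only [Finset.coe_filter, Finset.mem_range, Set.mem_ofPred_eq, Finset.mem_Ioc] at hi ⊢
      exact ⟨by omega, hi.2⟩
    · intro i hi i' hi' h
      simp only [Finset.coe_filter, Finset.mem_range, Set.mem_ofPred_eq] at hi hi' h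
      omega
  have h2 : ((Finset.Ioc 0 (n - k)).filter (fun x => p ∣ x)).card + ((Finset.Ioc (n - k) n).filter (fun x => p ∣ x)).card
      = ((Finset.Ioc 0 n).filter (fun x => p ∣ x)).card := by
    rw [← Finset.card_union_of_disjoint, ← Finset.filter_union, Finset.Ioc_union_Ioc_eq_Ioc (by omega) (by omega)]
    apply Finset.disjoint_filter_filter
    exact Finset.Ioc_disjoint_Ioc_of_le le_rfl
  rw [Nat.Ioc_filter_dvd_card_eq_div, Nat.Ioc_filter_dvd_card_eq_div] at h2
  have h3 : n / p ≤ (n - k) / p + k / p + 1 := by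
    conv_lhs => rw [show n = (n - k) + k by omega]
    rw [Nat.add_div hp]
    split_ifs <;> omega
  omega

lemma pow_dvd_fact {p : ℕ} (hp : 0 < p) (q : ℕ) : p ^ q ∣ (p * q).factorial := by
  induction q with
  | zero => simp
  | succ q ih =>
    obtain ⟨m, hm⟩ : ∃ m, p * (q + 1) = m + 1 := ⟨p * (q + 1) - 1, by
      have : 0 < p * (q + 1) := by positivity
      omega⟩
    have hm2 : p * q ≤ m := by
      rw [mul_add] at hm
      omega
    rw [hm, Nat.factorial_succ, ← hm, pow_succ']
    exact Nat.mul_dvd_mul (Dvd.intro _ rfl) (ih.trans (Nat.factorial_dvd_factorial hm2))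

lemma rad_prod_le {n k b : ℕ} (hkn : k < n)
    (H : ∀ p : ℕ, p.Prime → p ∣ n.descFactorial k → p ≤ b) :
    ∏ i ∈ Finset.range k, rad (n - i) ≤ 4 ^ b * k.factorial := by
  have h1 : ∀ i ∈ Finset.range k, rad (n - i) ≤ ∏ p ∈ Nat.primesLE b, if p ∣ n - i then p else 1 := by
    intro i hi
    rw [Finset.mem_range] at hi
    rw [← Finset.prod_filter, rad]
    apply le_of_eq
    have : (n - i).primeFactors = (Nat.primesLE b).filter (fun p => p ∣ n - i) := by
      ext p
      rw [Finset.mem_filter, Nat.mem_primesLE, Nat.mem_primeFactors]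
      constructor
      · rintro ⟨a1, a2, a3⟩
        refine ⟨⟨H p a1 ?_, a1⟩, a2⟩
        rw [Nat.descFactorial_eq_prod_range]
        exact a2.trans (Finset.dvd_prod_of_mem _ (Finset.mem_range.mpr hi))
      · rintro ⟨⟨a1, a2⟩, a3⟩
        exact ⟨a2, a3, by omega⟩
    rw [this]; rfl
  calc _ ≤ ∏ i ∈ Finset.range k, ∏ p ∈ Nat.primesLE b, (if p ∣ n - i then p else 1) := Finset.prod_le_prod' h1
    _ = ∏ p ∈ Nat.primesLE b, p ^ ((Finset.range k).filter (fun i => p ∣ n - i)).card := by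
        rw [Finset.prod_comm]
        apply Finset.prod_congr rfl
        intro p _
        rw [← Finset.prod_filter, Finset.prod_const]
    _ ≤ ∏ p ∈ Nat.primesLE b, p * p ^ (k / p) := by
        apply Finset.prod_le_prod'
        intro p hp
        rw [Nat.mem_primesLE] at hp
        rw [← pow_succ']
        exact Nat.pow_le_pow_right hp.2.pos (count_le hkn.le hp.2.pos)
    _ = (∏ p ∈ Nat.primesLE b, p) * ∏ p ∈ Nat.primesLE b, p ^ (k / p) := Finset.prod_mul_distrib
    _ ≤ 4 ^ b * k.factorial := by
        apply Nat.mul_le_mul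
        · have := primorial_le_four_pow b
          rwa [primorial, ← Nat.primesLE_eq_filter_range] at this
        · apply Nat.le_of_dvd (Nat.factorial_pos k)
          apply Finset.prod_dvd_of_isRelPrime
          · intro p hp q hq hpq
            simp only [Finset.mem_coe, Nat.mem_primesLE] at hp hq
            exact Nat.coprime_iff_isRelPrime.mp (Nat.coprime_pow_primes _ _ hp.2 hq.2 hpq)
          · intro p hp
            rw [Nat.mem_primesLE] at hp
            have : p ^ (k / p) ∣ (p * (k / p)).factorial :=
              pow_dvd_fact hp.2.pos _
            exact this.trans (Nat.factorial_dvd_factorial (Nat.mul_div_le k p))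

lemma caseA (habc : ExplicitABC) (C : ℕ) : ∃ N : ℕ, ∀ n k b : ℕ, N ≤ n → 2 ≤ k → k ^ 8 ≤ n →
    (∀ p : ℕ, p.Prime → p ∣ n.descFactorial k → p ≤ b) →
    b.factorial ≤ n ^ (C * k) → False := by
  refine ⟨⌈Real.exp (5 + 20 * Real.exp (40 * C + 2))⌉₊, ?_⟩
  intro n k b hn hk hkn H hb
  have hn1 : Real.exp (5 + 20 * Real.exp (40 * C + 2)) ≤ n := (Nat.le_ceil _).trans (by exact_mod_cast hn)
  have hn0 : (0:ℝ) < n := (Real.exp_pos _).trans_le hn1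
  have hlogn := (Real.le_log_iff_exp_le hn0).mpr hn1
  have hE := Real.exp_pos (40 * (C:ℝ) + 2)
  have h2k : 2 * k ≤ n := by
    have : k * 2 ^ 7 ≤ k * k ^ 7 := Nat.mul_le_mul_left k (Nat.pow_le_pow_left hk 7)
    have e : k ^ 8 = k * k ^ 7 := by ring
    omega
  have hkn' : k < n := by omega
  have h1 := rad_prod_ge habc hkn' (k / 2) (Nat.mul_div_le k 2)
  have h2 : ∏ i ∈ Finset.range (2 * (k / 2)), rad (n - i) ≤ ∏ i ∈ Finset.range k, rad (n - i) := by
    apply Finset.prod_le_prod_of_subset_of_one_le'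
    · exact Finset.range_subset_range.mpr (Nat.mul_div_le k 2)
    · intros; exact rad_pos _
  have h3 := h1.trans (Nat.pow_le_pow_left (h2.trans (rad_prod_le hkn' H)) 7)
  have hk0 : (0:ℝ) < k := by exact_mod_cast (by omega : 0 < k)
  have h4 : ((n:ℝ) / 2) ^ (4 * (k / 2)) ≤ ((4:ℝ) ^ b * (k:ℝ) ^ k) ^ 7 := by
    calc ((n:ℝ) / 2) ^ (4 * (k / 2)) ≤ ((n - k : ℕ) : ℝ) ^ (4 * (k / 2)) := by
          gcongr
          rw [Nat.cast_sub hkn'.le]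
          have : (2:ℝ) * k ≤ n := by exact_mod_cast h2k
          linarith
      _ ≤ ((4:ℝ) ^ b * (k.factorial : ℝ)) ^ 7 := by exact_mod_cast h3
      _ ≤ _ := by
          gcongr
          exact_mod_cast Nat.factorial_le_pow k
  have h5 := Real.log_le_log (by positivity) h4
  rw [Real.log_pow, Real.log_pow, Real.log_mul (by positivity) (by positivity), Real.log_pow, Real.log_pow,
    Real.log_div hn0.ne' (by norm_num)] at h5
  have hlog4 : Real.log 4 = 2 * Real.log 2 := by
    rw [show (4:ℝ) = 2 ^ 2 by norm_num, Real.log_pow]; norm_num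
  have hl2 := Real.log_two_lt_d9
  have hl2' := Real.log_two_gt_d9
  have h6 : 8 * Real.log k ≤ Real.log n := by
    have : (k:ℝ) ^ 8 ≤ n := by exact_mod_cast hkn
    have := Real.log_le_log (by positivity) this
    rw [Real.log_pow] at this
    exact_mod_cast this
  have h7 : (k:ℝ) ≤ 3 * ((k / 2 : ℕ) : ℝ) := by exact_mod_cast (by omega : k ≤ 3 * (k / 2))
  have hbk : k * Real.log n ≤ 40 * b := by
    push_cast at h5
    have a1 : (4 / 3 * k) * (Real.log n - Real.log 2) ≤ 4 * ((k / 2 : ℕ) : ℝ) * (Real.log n - Real.log 2) := by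
      exact mul_le_mul_of_nonneg_right (by linarith) (by linarith)
    have a2 : (k:ℝ) * (8 * Real.log k) ≤ k * Real.log n := by gcongr
    have a3 : (b:ℝ) * Real.log 4 ≤ b * 1.4 := by gcongr; linarith
    have a4 : (k:ℝ) * Real.log 2 ≤ k * 0.7 := by gcongr; linarith
    have a5 : (k:ℝ) * 5 ≤ k * Real.log n := by gcongr; linarith
    push_cast at a1
    nlinarith
  have hb1 : Real.exp (40 * C + 2) < b := by
    have : 2 * Real.log n ≤ k * Real.log n := by
      exact mul_le_mul_of_nonneg_right (by exact_mod_cast hk) (by linarith)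
    linarith
  have hb0 : (0:ℝ) < b := hE.trans hb1
  have hlb := (Real.lt_log_iff_exp_lt hb0).mpr hb1
  have h8 := Real.pow_div_factorial_le_exp (b:ℝ) hb0.le b
  rw [div_le_iff₀ (by positivity)] at h8
  have h9 : (b:ℝ) ^ b ≤ Real.exp b * (n:ℝ) ^ (C * k) := by
    refine h8.trans ?_
    gcongr
    exact_mod_cast hb
  have h10 := Real.log_le_log (by positivity) h9
  rw [Real.log_mul (by positivity) (by positivity), Real.log_exp, Real.log_pow, Real.log_pow] at h10
  push_cast at h10
  have h11 : (C:ℝ) * (k * Real.log n) ≤ C * (40 * b) := by gcongr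
  nlinarith

lemma core (habc : ExplicitABC) (C : ℕ) (hC : 1 ≤ C) : ∃ N : ℕ, ∀ n k b : ℕ, N ≤ n → 2 ≤ k → k ≤ n →
    (∀ p : ℕ, p.Prime → p ≤ n → p ≤ n - k) →
    (∀ p : ℕ, p.Prime → p ∣ n.descFactorial k → p ≤ b) →
    b.factorial ≤ n ^ (C * k) → False := by
  obtain ⟨ε, hε, N1, h1⟩ := caseB C hC
  obtain ⟨N2, h2⟩ := caseA habc C
  obtain ⟨N3, h3⟩ := PNTlite hε
  refine ⟨N1 + N2 + N3, ?_⟩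
  intro n k b hn hk hkn hp H hb
  rcases le_total (k ^ 8) n with h | h
  · exact h2 n k b (by omega) hk h H hb
  · refine h1 n k b (by omega) (by omega) h ?_ H hb
    obtain ⟨p, pp, pn, hpn⟩ := h3 n (by omega)
    have := hp p pp pn
    have : (p:ℝ) + k ≤ n := by exact_mod_cast (by omega)
    linarith

lemma prod_split {t : ℕ} (f : Fin t → ℕ) (x y : Fin t) (hxy : x ≠ y) :
    ∏ l, f l = f x * f y * ∏ l ∈ (Finset.univ.erase x).erase y, f l := by
  rw [← Finset.mul_prod_erase Finset.univ f (Finset.mem_univ x),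
    ← Finset.mul_prod_erase (Finset.univ.erase x) f
      (Finset.mem_erase.mpr ⟨hxy.symm, Finset.mem_univ y⟩), mul_assoc]

lemma n1_bound (habc : ExplicitABC) (c₀ : ℕ) : ∃ N : ℕ, ∀ (t : ℕ) (a : Fin t → ℕ) (n1 n2 : ℕ)
    (x y : Fin t), x ≠ y → (∀ l, a l ≤ a x) → n2 ≤ n1 → ∏ l, (a l).factorial = n1.factorial * n2.factorial →
    a x + 2 ≤ n1 → a y < n2 → n2 - a y ≤ c₀ * (n1 - a x) → n1 < N := by
  obtain ⟨N, hN⟩ := core habc (1 + c₀) (by omega)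
  refine ⟨N, fun t a n1 n2 x y hxy hmax hn heq hx hy hk => ?_⟩
  by_contra hlt
  push Not at hlt
  set R := (Finset.univ.erase x).erase y with hR
  have hn1 : 0 < n1 := by omega
  have e1 : (a x).factorial * n1.descFactorial (n1 - a x) = n1.factorial := by
    have := Nat.factorial_mul_descFactorial (show n1 - a x ≤ n1 by omega)
    rwa [show n1 - (n1 - a x) = a x by omega] at this
  have e2 : (a y).factorial * n2.descFactorial (n2 - a y) = n2.factorial := by
    have := Nat.factorial_mul_descFactorial (show n2 - a y ≤ n2 by omega)
    rwa [show n2 - (n2 - a y) = a y by omega] at this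
  have e3 : ∏ l ∈ R, (a l).factorial = n1.descFactorial (n1 - a x) * n2.descFactorial (n2 - a y) := by
    have h := prod_split (fun l => (a l).factorial) x y hxy
    rw [heq, ← e1, ← e2] at h
    have hpos : 0 < (a x).factorial * (a y).factorial :=
      Nat.mul_pos (Nat.factorial_pos _) (Nat.factorial_pos _)
    apply Nat.eq_of_mul_eq_mul_left hpos
    rw [← h]
    ring
  refine hN n1 (n1 - a x) (R.sup a) hlt (by omega) (by omega) ?_ ?_ ?_
  · intro p hp hpn
    rw [show n1 - (n1 - a x) = a x by omega]
    have : p ∣ ∏ l, (a l).factorial := by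
      rw [heq]
      exact Dvd.dvd.mul_right ((hp.dvd_factorial).mpr hpn) _
    obtain ⟨l, -, hl⟩ := (hp.prime.dvd_finsetProd_iff _).mp this
    exact (hp.dvd_factorial.mp hl).trans (hmax l)
  · intro p hp hpd
    have : p ∣ ∏ l ∈ R, (a l).factorial := by
      rw [e3]
      exact Dvd.dvd.mul_right hpd _
    obtain ⟨l, hlR, hl⟩ := (hp.prime.dvd_finsetProd_iff _).mp this
    exact (hp.dvd_factorial.mp hl).trans (Finset.le_sup hlR)
  · have h1 : (R.sup a).factorial ≤ ∏ l ∈ R, (a l).factorial := by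
      rcases R.eq_empty_or_nonempty with h0 | h0
      · rw [h0]; simp
      · obtain ⟨l, hl, hle⟩ := Finset.exists_mem_eq_sup R h0 a
        rw [hle]
        exact Nat.le_of_dvd (Finset.prod_pos fun l _ => Nat.factorial_pos _)
          (Finset.dvd_prod_of_mem (fun l => (a l).factorial) hl)
    refine h1.trans ?_
    rw [e3, add_mul, one_mul, pow_add]
    apply Nat.mul_le_mul (Nat.descFactorial_le_pow _ _)
    refine (Nat.descFactorial_le_pow _ _).trans ?_
    exact (Nat.pow_le_pow_left hn _).trans (Nat.pow_le_pow_right hn1 hk)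

/-- Under the explicit abc conjecture, for fixed `t ≥ 3`, `2 ≤ i ≤ t` and `c₀ ≥ 1`,
the equation `∏ a_l ! = n₁! * n₂!` has only finitely many nontrivial solutions with
`a₁ ≥ ⋯ ≥ a_t ≥ 2`, `n₁ ≥ n₂ ≥ 2`, `|a_l - n_j| ≥ 2` for all `l, j`,
`n₁ > a₁`, `n₂ > a_i` and `n₂ - a_i ≤ c₀ (n₁ - a₁)`. -/
theorem finitely_many_solutions_s_eq_two
    (habc : ExplicitABC) (t : ℕ) (ht : 3 ≤ t) (i : ℕ) (hi2 : 2 ≤ i) (hit : i ≤ t)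
    (c₀ : ℕ) (hc₀ : 0 < c₀) :
    {p : (Fin t → ℕ) × ℕ × ℕ |
      (∀ l l' : Fin t, l ≤ l' → p.1 l' ≤ p.1 l) ∧
      (∀ l : Fin t, 2 ≤ p.1 l) ∧
      2 ≤ p.2.2 ∧ p.2.2 ≤ p.2.1 ∧
      (∏ l : Fin t, Nat.factorial (p.1 l)) =
        Nat.factorial p.2.1 * Nat.factorial p.2.2 ∧
      (∀ l : Fin t,
        2 ≤ |(p.1 l : ℤ) - (p.2.1 : ℤ)| ∧ 2 ≤ |(p.1 l : ℤ) - (p.2.2 : ℤ)|) ∧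
      p.1 ⟨0, by omega⟩ < p.2.1 ∧
      p.1 ⟨i - 1, by omega⟩ < p.2.2 ∧
      p.2.2 - p.1 ⟨i - 1, by omega⟩ ≤ c₀ * (p.2.1 - p.1 ⟨0, by omega⟩)}.Finite := by
  obtain ⟨N, hN⟩ := n1_bound habc c₀
  apply ((Set.finite_Icc (0 : Fin t → ℕ) (fun _ => N)).prod
    ((Set.finite_Iic N).prod (Set.finite_Iic N))).subset
  rintro ⟨a, n1, n2⟩ ⟨h1, h2, h3, h4, h5, h6, h7, h8, h9⟩
  simp only at h1 h2 h3 h4 h5 h6 h7 h8 h9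
  have hmax : ∀ l, a l ≤ a ⟨0, by omega⟩ := fun l => h1 _ l (Nat.zero_le _)
  have hx : a ⟨0, by omega⟩ + 2 ≤ n1 := by
    have := (h6 ⟨0, by omega⟩).1
    rw [abs_of_neg (by omega)] at this
    omega
  have hlt := hN t a n1 n2 ⟨0, by omega⟩ ⟨i - 1, by omega⟩
    (by intro h; have := congrArg Fin.val h; simp only at this; omega) hmax h4 h5 hx h8 h9
  refine ⟨⟨fun l => Nat.zero_le _, fun l => ?_⟩, ?_, ?_⟩
  · have := hmax l
    show a l ≤ N
    omega
  · show n1 ≤ N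
    omega
  · show n2 ≤ N
    omega
end

section
/- Assume the explicit abc conjecture: for all pairwise coprime positive integers a, b, c with a + b = c one has c < rad(a·b·c)^{7/4}. Fix integers 2 ≤ s < t, distinct indices i₂,…,i_s ∈ {2,…,t}, and a positive integer c₀. Then there are only finitely many tuples (a₁,…,a_t, n₁,…,n_s) of positive integers satisfying: a₁ ≥ a₂ ≥ ⋯ ≥ a_t ≥ 2, n₁ ≥ n₂ ≥ ⋯ ≥ n_s ≥ 2, ∏_{l=1}^{t} a_l! = ∏_{j=1}^{s} n_j!, |a_l − n_j| ≥ 2 for all 1 ≤ l ≤ t and 1 ≤ j ≤ s, n₁ > a₁, n_j > a_{i_j} for each j = 2,…,s, and max{n₂ − a_{i₂}, …, n_s − a_{i_s}} ≤ c₀·(n₁ − a₁). -/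
open Complex in
lemma pl_exists_H : ∃ H : ℂ → ℂ, Continuous H ∧ ∀ s : ℂ, 1 < s.re →
    H s = LSeries (fun n => (((ArithmeticFunction.vonMangoldt n - 1 : ℝ)) : ℂ)) s := by
  classical
  let Z : ℂ → ℂ := Function.update (fun s => riemannZeta s - 1 / (s - 1)) 1 Real.eulerMascheroniConstant
  have hZ : Continuous Z := by
    rw [continuous_iff_continuousAt]
    intro s
    by_cases hs : s = 1
    · subst hs
      rw [continuousAt_update_same]
      exact tendsto_riemannZeta_sub_one_div
    · rw [continuousAt_update_of_ne hs]
      have h1 : s - 1 ≠ 0 := sub_ne_zero.mpr hs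
      have := (differentiableAt_riemannZeta hs).continuousAt
      fun_prop (disch := assumption)
  let A : ℂ → ℂ := ArithmeticFunction.vonMangoldt.LFunctionResidueClassAux (1 : ZMod 1)
  have hA : ContinuousOn A {s | 1 ≤ s.re} :=
    ArithmeticFunction.vonMangoldt.continuousOn_LFunctionResidueClassAux (1 : ZMod 1)
  let P : ℂ → ℂ := fun s => ((max s.re 1 : ℝ) : ℂ) + s.im * I
  have hP : Continuous P := by fun_prop
  refine ⟨fun s => A (P s) - Z (P s), ?_, ?_⟩
  · refine Continuous.sub ?_ (hZ.comp hP)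
    refine hA.comp_continuous hP (fun s => ?_)
    simp [P]
  · intro s hs
    have hPs : P s = s := by
      simp only [P, max_eq_left hs.le]
      exact re_add_im s
    have hs1 : s ≠ 1 := by rintro rfl; simp at hs
    change A (P s) - Z (P s) = _
    rw [hPs]
    have e1 := ArithmeticFunction.vonMangoldt.eqOn_LFunctionResidueClassAux (q := 1) (a := 1) isUnit_one hs
    have e2 : (fun n : ℕ => ((ArithmeticFunction.vonMangoldt.residueClass (1 : ZMod 1) n : ℝ) : ℂ))
       = fun n : ℕ => ((ArithmeticFunction.vonMangoldt n : ℝ) : ℂ) := by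
      ext n
      have : (n : ZMod 1) = 1 := Subsingleton.elim _ _
      simp [ArithmeticFunction.vonMangoldt.residueClass, this]
    have e3 : (fun n : ℕ => (((ArithmeticFunction.vonMangoldt n - 1 : ℝ)) : ℂ)) =
       (fun n : ℕ => ((ArithmeticFunction.vonMangoldt n : ℝ) : ℂ)) - 1 := by
      ext n; simp
    rw [e3, LSeries_sub (ArithmeticFunction.LSeriesSummable_vonMangoldt hs) (LSeriesSummable_one_iff.mpr hs),
      LSeries_one_eq_riemannZeta hs]
    simp only [A, Z, Function.update_of_ne hs1]
    rw [e1, ]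
    simp only [e2]
    simp

noncomputable def plphi (lam v : ℝ) : ℝ := ∫ t in (-lam)..lam, (1 - |t| / lam) * Real.cos (t * v)

lemma plphi_eq {lam v : ℝ} (hl : 0 < lam) (hv : v ≠ 0) :
    plphi lam v = 2 * (1 - Real.cos (lam * v)) / (lam * v ^ 2) := by
  have h0 : IntervalIntegrable (fun t => (1 - |t| / lam) * Real.cos (t * v)) MeasureTheory.volume (-lam) 0 :=
    Continuous.intervalIntegrable (by fun_prop) _ _
  have h1 : IntervalIntegrable (fun t => (1 - |t| / lam) * Real.cos (t * v)) MeasureTheory.volume 0 lam :=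
    Continuous.intervalIntegrable (by fun_prop) _ _
  have key : ∫ t in (0:ℝ)..lam, (1 - |t| / lam) * Real.cos (t * v) = (1 - Real.cos (lam * v)) / (lam * v ^ 2) := by
    have : ∫ t in (0:ℝ)..lam, (1 - |t| / lam) * Real.cos (t * v)
       = ∫ t in (0:ℝ)..lam, (1 - t / lam) * Real.cos (t * v) := by
      refine intervalIntegral.integral_congr (fun t ht => ?_)
      rw [Set.uIcc_of_le hl.le] at ht
      simp only [abs_of_nonneg ht.1]
    rw [this]
    rw [intervalIntegral.integral_eq_sub_of_hasDerivAt
      (f := fun t => (1 - t / lam) * (Real.sin (t * v) / v) - Real.cos (t * v) / (lam * v ^ 2))]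
    · field_simp
      simp
      ring
    · intro t _
      have hd : HasDerivAt (fun t : ℝ => t * v) v t := by simpa using (hasDerivAt_id t).mul_const v
      have h3 : HasDerivAt (fun t : ℝ => 1 - t / lam) (-(1 / lam)) t := by
        simpa using ((hasDerivAt_id t).div_const lam).const_sub 1
      have h4 := (h3.mul ((hd.sin).div_const v)).sub ((hd.cos).div_const (lam * v ^ 2))
      refine h4.congr_deriv ?_
      field_simp
      ring
    · exact Continuous.intervalIntegrable (by fun_prop) _ _
  have key2 : ∫ t in (-lam)..0, (1 - |t| / lam) * Real.cos (t * v) = (1 - Real.cos (lam * v)) / (lam * v ^ 2) := by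
    rw [← key]
    have := intervalIntegral.integral_comp_neg (a := 0) (b := lam) (fun t => (1 - |t| / lam) * Real.cos (t * v))
    simp at this
    rw [← this]
  unfold plphi
  rw [← intervalIntegral.integral_add_adjacent_intervals h0 h1, key, key2]
  ring

lemma plphi_zero {lam : ℝ} (hl : 0 < lam) : plphi lam 0 = lam := by
  have h0 : IntervalIntegrable (fun t => (1 - |t| / lam)) MeasureTheory.volume (-lam) 0 :=
    Continuous.intervalIntegrable (by fun_prop) _ _
  have h1 : IntervalIntegrable (fun t => (1 - |t| / lam)) MeasureTheory.volume 0 lam :=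
    Continuous.intervalIntegrable (by fun_prop) _ _
  have key : ∫ t in (0:ℝ)..lam, (1 - |t| / lam) = lam / 2 := by
    have : ∫ t in (0:ℝ)..lam, (1 - |t| / lam)
       = ∫ t in (0:ℝ)..lam, (1 - t / lam) := by
      refine intervalIntegral.integral_congr (fun t ht => ?_)
      rw [Set.uIcc_of_le hl.le] at ht
      simp only [abs_of_nonneg ht.1]
    rw [this, intervalIntegral.integral_sub (by simp) (Continuous.intervalIntegrable (by fun_prop) _ _)]
    simp
    field_simp
    ring
  have key2 : ∫ t in (-lam)..0, (1 - |t| / lam) = lam / 2 := by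
    rw [← key]
    have := intervalIntegral.integral_comp_neg (a := 0) (b := lam) (fun t => (1 - |t| / lam))
    simp only [abs_neg, neg_zero] at this
    rw [← this]
  unfold plphi
  simp only [mul_zero, Real.cos_zero, mul_one]
  rw [← intervalIntegral.integral_add_adjacent_intervals h0 h1, key, key2]
  ring

lemma plphi_nonneg {lam : ℝ} (hl : 0 < lam) (v : ℝ) : 0 ≤ plphi lam v := by
  by_cases hv : v = 0
  · rw [hv, plphi_zero hl]; exact hl.le
  · rw [plphi_eq hl hv]
    have := Real.cos_le_one (lam * v)
    have : 0 ≤ 1 - Real.cos (lam * v) := by linarith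
    positivity

lemma plphi_le {lam : ℝ} (hl : 0 < lam) (v : ℝ) : plphi lam v ≤ lam := by
  by_cases hv : v = 0
  · rw [hv, plphi_zero hl]
  · rw [plphi_eq hl hv, div_le_iff₀ (by positivity)]
    have := Real.one_sub_sq_div_two_le_cos (x := lam * v)
    nlinarith

lemma plphi_le_far {lam : ℝ} (hl : 0 < lam) {v : ℝ} (hv : v ≠ 0) : plphi lam v ≤ 4 / (lam * v ^ 2) := by
  rw [plphi_eq hl hv]
  have := Real.neg_one_le_cos (lam * v)
  gcongr
  linarith

lemma plphi_ge {lam : ℝ} (hl : 0 < lam) {v : ℝ} (hv0 : 0 ≤ v) (hv : v ≤ 1 / lam) : lam / 4 ≤ plphi lam v := by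
  by_cases h : v = 0
  · rw [h, plphi_zero hl]; linarith
  · rw [plphi_eq hl h, le_div_iff₀ (by positivity)]
    have h1 : lam * v ≤ 1 := by rw [le_div_iff₀ hl] at hv; linarith
    have h2 : |lam * v| ≤ Real.pi := by
      rw [abs_of_nonneg (by positivity)]; linarith [Real.pi_gt_three]
    have h3 := Real.cos_le_one_sub_mul_cos_sq h2
    have h5 : (1:ℝ) / 8 ≤ 2 / Real.pi ^ 2 := by
      rw [div_le_div_iff₀ (by norm_num) (by positivity)]
      nlinarith [Real.pi_le_four, Real.pi_pos]
    have h6 : (1:ℝ) / 8 * (lam * v) ^ 2 ≤ 2 / Real.pi ^ 2 * (lam * v) ^ 2 := by gcongr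
    nlinarith

lemma pl_term (f : ℕ → ℝ) (σ t u : ℝ) (hσ : 1 < σ) (n : ℕ) :
    (Complex.exp (((-(t * u) : ℝ) : ℂ) * Complex.I) * LSeries.term (fun n => (f n : ℂ)) ((σ : ℂ) - t * Complex.I) n).re
     = f n * (n : ℝ) ^ (-σ) * Real.cos (t * (Real.log n - u)) := by
  by_cases hn : n = 0
  · subst hn
    simp [Real.zero_rpow (show -σ ≠ 0 by linarith)]
  · have hn' : (n : ℂ) ≠ 0 := by exact_mod_cast hn
    have hpos : (0 : ℝ) < n := by positivity
    rw [LSeries.term_of_ne_zero hn, Complex.cpow_def_of_ne_zero hn', div_eq_mul_inv, ← Complex.exp_neg,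
      Real.rpow_def_of_pos hpos, ← Complex.natCast_log]
    have : Complex.exp (((-(t * u) : ℝ) : ℂ) * Complex.I) *
      ((f n : ℂ) * Complex.exp (-(((Real.log n : ℝ) : ℂ) * ((σ : ℂ) - t * Complex.I)))) =
      ((f n * Real.exp (Real.log n * -σ) : ℝ) : ℂ) * Complex.exp (((t * (Real.log n - u) : ℝ) : ℂ) * Complex.I) := by
      push_cast
      rw [mul_left_comm, ← Complex.exp_add, mul_assoc, ← Complex.exp_add]
      congr 2
      ring
    rw [this, Complex.re_ofReal_mul, Complex.exp_ofReal_mul_I_re]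

lemma pl_hasSum (f : ℕ → ℝ) (lam σ u : ℝ) (hl : 0 < lam) (hσ : 1 < σ)
    (hf : LSeriesSummable (fun n => (f n : ℂ)) σ) :
    HasSum (fun n : ℕ => f n * (n : ℝ) ^ (-σ) * plphi lam (Real.log n - u))
      (∫ t in (-lam)..lam, (1 - |t| / lam) *
        (Complex.exp (((-(t * u) : ℝ) : ℂ) * Complex.I) * LSeries (fun n => (f n : ℂ)) ((σ : ℂ) - t * Complex.I)).re) := by
  have hnorm : ∀ (t : ℝ) (n : ℕ), ‖LSeries.term (fun n => (f n : ℂ)) ((σ : ℂ) - t * Complex.I) n‖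
      = ‖LSeries.term (fun n => (f n : ℂ)) σ n‖ := by
    intro t n
    rw [LSeries.norm_term_eq, LSeries.norm_term_eq]
    simp
  have hs : ∀ t : ℝ, LSeriesSummable (fun n => (f n : ℂ)) ((σ : ℂ) - t * Complex.I) := by
    intro t
    rw [LSeriesSummable, ← summable_norm_iff]
    simp only [hnorm]
    exact hf.norm
  have key := intervalIntegral.hasSum_integral_of_dominated_convergence (μ := MeasureTheory.volume)
    (a := -lam) (b := lam)
    (F := fun (n : ℕ) (t : ℝ) => (1 - |t| / lam) * (f n * (n : ℝ) ^ (-σ) * Real.cos (t * (Real.log n - u))))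
    (f := fun t => (1 - |t| / lam) *
        (Complex.exp (((-(t * u) : ℝ) : ℂ) * Complex.I) * LSeries (fun n => (f n : ℂ)) ((σ : ℂ) - t * Complex.I)).re)
    (fun n _ => ‖LSeries.term (fun n => (f n : ℂ)) σ n‖) ?_ ?_ ?_ ?_ ?_
  · have e : (fun n : ℕ => f n * (n : ℝ) ^ (-σ) * plphi lam (Real.log n - u)) = fun n : ℕ =>
        ∫ t in (-lam)..lam, (1 - |t| / lam) * (f n * (n : ℝ) ^ (-σ) * Real.cos (t * (Real.log n - u))) := by
      ext n
      unfold plphi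
      rw [← intervalIntegral.integral_const_mul]
      congr 1
      ext t
      ring
    rw [e]
    exact key
  · intro n
    exact Continuous.aestronglyMeasurable (by fun_prop)
  · intro n
    refine Filter.Eventually.of_forall (fun t ht => ?_)
    rw [Set.uIoc_of_le (by linarith)] at ht
    have h1 : |1 - |t| / lam| ≤ 1 := by
      have h2 : |t| / lam ≤ 1 := by
        rw [div_le_one hl]; exact abs_le.mpr ⟨ht.1.le, ht.2⟩
      have h3 : 0 ≤ |t| / lam := by positivity
      rw [abs_le]; constructor <;> linarith
    rw [← pl_term f σ t u hσ n, norm_mul, Real.norm_eq_abs, Real.norm_eq_abs]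
    calc _ ≤ 1 * ‖Complex.exp (((-(t * u) : ℝ) : ℂ) * Complex.I) * LSeries.term (fun n => (f n : ℂ)) ((σ : ℂ) - t * Complex.I) n‖ := by
          gcongr
          exact Complex.abs_re_le_norm _
      _ = _ := by rw [one_mul, norm_mul, Complex.norm_exp_ofReal_mul_I, one_mul, hnorm]
  · exact Filter.Eventually.of_forall (fun t ht => hf.norm)
  · simp
  · refine Filter.Eventually.of_forall (fun t ht => ?_)
    simp only [← pl_term f σ t u hσ]
    refine HasSum.mul_left _ ?_
    exact Complex.hasSum_re ((hs t).LSeriesHasSum.mul_left _)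

open Filter Topology in
lemma pl_RL (G : ℝ → ℝ → ℝ) (H : ℂ → ℂ) (lam : ℝ) (hl : 0 < lam)
    (hG : ∀ σ u, G σ u = ∫ t in (-lam)..lam, (1 - |t| / lam) *
        (Complex.exp (((-(t * u) : ℝ) : ℂ) * Complex.I) * H ((σ : ℂ) - t * Complex.I)).re)
    (hH : Continuous H) : (∀ u, Continuous (fun σ => G σ u)) ∧ Tendsto (fun u => G 1 u) atTop (𝓝 0) := by
  constructor
  · intro u
    simp only [hG]
    refine intervalIntegral.continuous_parametric_intervalIntegral_of_continuous' ?_ _ _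
    fun_prop
  · let g : ℝ → ℂ := Set.indicator (Set.Ioc (-lam) lam) (fun t => ((1 - |t| / lam : ℝ) : ℂ) * H (1 - t * Complex.I))
    have h1 := Real.tendsto_integral_exp_smul_cocompact g
    have h2 : Tendsto (fun u : ℝ => u / (2 * Real.pi)) atTop (cocompact ℝ) :=
      (tendsto_id.atTop_div_const (by positivity)).mono_right atTop_le_cocompact
    have h3 := (Complex.continuous_re.tendsto 0).comp (h1.comp h2)
    rw [Complex.zero_re] at h3
    refine h3.congr (fun u => ?_)
    simp only [Function.comp_apply, hG]
    have e : (fun v : ℝ => Real.fourierChar (-(v * (u / (2 * Real.pi)))) • g v) =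
        Set.indicator (Set.Ioc (-lam) lam) (fun t : ℝ => ((1 - |t| / lam : ℝ) : ℂ) *
        (Complex.exp (((-(t * u) : ℝ) : ℂ) * Complex.I) * H (1 - t * Complex.I))) := by
      ext t
      by_cases ht : t ∈ Set.Ioc (-lam) lam
      · simp only [g, Set.indicator_of_mem ht, Circle.smul_def, Real.fourierChar_apply, smul_eq_mul]
        have : 2 * Real.pi * -(t * (u / (2 * Real.pi))) = -(t * u) := by field_simp
        rw [this]; ring
      · simp only [g, Set.indicator_of_notMem ht, smul_zero]
    rw [e, MeasureTheory.integral_indicator measurableSet_Ioc, ← intervalIntegral.integral_of_le (by linarith),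
      ← Complex.reCLM_apply, ← ContinuousLinearMap.intervalIntegral_comp_comm]
    · refine intervalIntegral.integral_congr (fun t _ => ?_)
      simp only [Complex.reCLM_apply, Complex.re_ofReal_mul, Complex.ofReal_one]
    · exact Continuous.intervalIntegrable (by fun_prop) _ _

open ArithmeticFunction in
lemma pl_block (F : Finset ℕ) (x : ℝ) (hF : ∀ n ∈ F, 1 ≤ n ∧ x ≤ Real.log n ∧ Real.log n < x + 1) :
    ∑ n ∈ F, vonMangoldt n * (n : ℝ)⁻¹ ≤ (Real.log 4 + 4) * Real.exp 1 := by
  have h1 : ∑ n ∈ F, vonMangoldt n * (n : ℝ)⁻¹ ≤ ∑ n ∈ F, vonMangoldt n * Real.exp (-x) := by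
    refine Finset.sum_le_sum (fun n hn => ?_)
    obtain ⟨h1, h2, h3⟩ := hF n hn
    have hp : (0:ℝ) < n := by exact_mod_cast h1
    refine mul_le_mul_of_nonneg_left ?_ vonMangoldt_nonneg
    rw [Real.exp_neg]
    exact inv_anti₀ (Real.exp_pos x) ((Real.le_log_iff_exp_le hp).mp h2)
  have h2 : ∑ n ∈ F, vonMangoldt n ≤ Chebyshev.psi (Real.exp (x + 1)) := by
    unfold Chebyshev.psi
    refine Finset.sum_le_sum_of_subset_of_nonneg (fun n hn => ?_) (fun _ _ _ => vonMangoldt_nonneg)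
    obtain ⟨h1, h2, h3⟩ := hF n hn
    have hp : (0:ℝ) < n := by exact_mod_cast h1
    rw [Finset.mem_Ioc]
    refine ⟨h1, Nat.le_floor ?_⟩
    exact ((Real.log_lt_iff_lt_exp hp).mp h3).le
  have h3 := Chebyshev.psi_le_const_mul_self (Real.exp_pos (x + 1)).le
  calc _ ≤ _ := h1
    _ = (∑ n ∈ F, vonMangoldt n) * Real.exp (-x) := by rw [Finset.sum_mul]
    _ ≤ ((Real.log 4 + 4) * Real.exp (x + 1)) * Real.exp (-x) := by
        have := Real.exp_pos (-x)
        gcongr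
        exact h2.trans h3
    _ = _ := by rw [mul_assoc, ← Real.exp_add]; ring_nf

open ArithmeticFunction in
lemma pl_far : ∃ C : ℝ, 0 < C ∧ ∀ η lam u : ℝ, 0 < η → 0 < lam → ∀ F : Finset ℕ,
    (∀ n ∈ F, 1 ≤ n ∧ η ≤ |Real.log n - u|) →
    ∑ n ∈ F, vonMangoldt n * (n : ℝ)⁻¹ * plphi lam (Real.log n - u) ≤ C * (2 + 3 / η ^ 2) / lam := by
  have hsum : Summable (fun m : ℤ => 1 / (1 + (m : ℝ) ^ 2)) := by
    have h : Summable (fun m : ℤ => 1 / (m : ℝ) ^ 2) := by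
      exact (Real.summable_one_div_int_pow (p := 2)).mpr (by norm_num)
    refine Summable.of_norm_bounded_eventually h ?_
    rw [Filter.eventually_cofinite]
    refine (Set.finite_singleton (0 : ℤ)).subset (fun m hm => ?_)
    by_contra hne
    apply hm
    have : (m : ℝ) ≠ 0 := by simpa using hne
    rw [Real.norm_of_nonneg (by positivity)]
    gcongr
    linarith
  set W := ∑' m : ℤ, 1 / (1 + (m : ℝ) ^ 2) with hW
  have hW0 : 0 ≤ W := tsum_nonneg (fun m => by positivity)
  have hlog4 : 0 < Real.log 4 := Real.log_pos (by norm_num)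
  refine ⟨4 * ((Real.log 4 + 4) * Real.exp 1) * W + 1, by positivity, ?_⟩
  intro η lam u hη hl F hF
  set c := 2 + 3 / η ^ 2 with hc
  have hc0 : 0 < c := by positivity
  have h1 : ∀ n ∈ F, vonMangoldt n * (n : ℝ)⁻¹ * plphi lam (Real.log n - u) ≤
      4 * c / lam * (vonMangoldt n * (n : ℝ)⁻¹ * (1 / (1 + ((⌊Real.log n - u⌋ : ℤ) : ℝ) ^ 2))) := by
    intro n hn
    obtain ⟨hn1, hn2⟩ := hF n hn
    set v := Real.log n - u with hv
    have hv0 : v ≠ 0 := by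
      intro h; rw [h, abs_zero] at hn2; linarith
    have hnn : 0 ≤ vonMangoldt n * (n : ℝ)⁻¹ := mul_nonneg vonMangoldt_nonneg (by positivity)
    have e1 := plphi_le_far hl hv0
    have hm1 := Int.floor_le v
    have hm2 := Int.lt_floor_add_one v
    set m : ℝ := ((⌊v⌋ : ℤ) : ℝ)
    have hη2 : η ^ 2 ≤ v ^ 2 := by rw [← sq_abs v]; gcongr
    have e2 : 1 + m ^ 2 ≤ c * v ^ 2 := by
      have e3 : 3 ≤ 3 / η ^ 2 * v ^ 2 := by
        rw [div_mul_eq_mul_div, le_div_iff₀ (by positivity)]; linarith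
      have e4 : m ^ 2 ≤ 2 * v ^ 2 + 2 := by nlinarith [sq_nonneg (m - 2 * v), sq_nonneg (v - m)]
      rw [hc, add_mul]; linarith
    have e5 : 4 / (lam * v ^ 2) ≤ 4 * c / lam * (1 / (1 + m ^ 2)) := by
      rw [div_mul_div_comm, mul_one, div_le_div_iff₀ (by positivity) (by positivity)]
      nlinarith
    calc _ ≤ vonMangoldt n * (n : ℝ)⁻¹ * (4 * c / lam * (1 / (1 + m ^ 2))) :=
          mul_le_mul_of_nonneg_left (e1.trans e5) hnn
      _ = _ := by ring
  have h2 : ∑ n ∈ F, (vonMangoldt n * (n : ℝ)⁻¹ * (1 / (1 + ((⌊Real.log n - u⌋ : ℤ) : ℝ) ^ 2)))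
      ≤ ((Real.log 4 + 4) * Real.exp 1) * W := by
    rw [← Finset.sum_fiberwise_of_maps_to (g := fun n : ℕ => ⌊Real.log n - u⌋) (t := F.image (fun n : ℕ => ⌊Real.log n - u⌋))
      (fun n hn => Finset.mem_image_of_mem _ hn)]
    calc _ ≤ ∑ m ∈ F.image (fun n : ℕ => ⌊Real.log n - u⌋), ((Real.log 4 + 4) * Real.exp 1) * (1 / (1 + (m : ℝ) ^ 2)) := by
          refine Finset.sum_le_sum (fun m _ => ?_)
          have : ∑ n ∈ F.filter (fun n : ℕ => ⌊Real.log n - u⌋ = m), (vonMangoldt n * (n : ℝ)⁻¹ * (1 / (1 + ((⌊Real.log n - u⌋ : ℤ) : ℝ) ^ 2)))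
            = (∑ n ∈ F.filter (fun n : ℕ => ⌊Real.log n - u⌋ = m), vonMangoldt n * (n : ℝ)⁻¹) * (1 / (1 + (m : ℝ) ^ 2)) := by
            rw [Finset.sum_mul]
            refine Finset.sum_congr rfl (fun n hn => ?_)
            rw [(Finset.mem_filter.mp hn).2]
          rw [this]
          refine mul_le_mul_of_nonneg_right ?_ (by positivity)
          refine pl_block _ (u + m) (fun n hn => ?_)
          rw [Finset.mem_filter] at hn
          obtain ⟨hn1, hn2⟩ := hn
          rw [Int.floor_eq_iff] at hn2
          exact ⟨(hF n hn1).1, by linarith, by linarith⟩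
      _ = ((Real.log 4 + 4) * Real.exp 1) * ∑ m ∈ F.image (fun n : ℕ => ⌊Real.log n - u⌋), (1 / (1 + (m : ℝ) ^ 2)) := by
          rw [Finset.mul_sum]
      _ ≤ _ := by
          gcongr
          exact hsum.sum_le_tsum _ (fun m _ => by positivity)
  calc _ ≤ _ := Finset.sum_le_sum h1
    _ = 4 * c / lam * ∑ n ∈ F, (vonMangoldt n * (n : ℝ)⁻¹ * (1 / (1 + ((⌊Real.log n - u⌋ : ℤ) : ℝ) ^ 2))) := by
        rw [Finset.mul_sum]
    _ ≤ 4 * c / lam * (((Real.log 4 + 4) * Real.exp 1) * W) := by gcongr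
    _ = (4 * ((Real.log 4 + 4) * Real.exp 1) * W) * c / lam := by ring
    _ ≤ _ := by gcongr; linarith

open ArithmeticFunction in
lemma pl_near : ∃ C : ℝ, 0 < C ∧ ∀ (N : ℕ) (δ lam u : ℝ), 0 < δ → δ < 1 → 0 < lam → 1 ≤ N → ∀ F : Finset ℕ,
    (∀ n ∈ F, N * (1 - δ) < n ∧ n ≤ N ∧ ¬ n.Prime) →
    ∑ n ∈ F, vonMangoldt n * (n : ℝ)⁻¹ * plphi lam (Real.log n - u) ≤ C * lam / (1 - δ) / Real.sqrt N := by
  obtain ⟨C, hC⟩ := Chebyshev.psi_sub_theta_le_mul_sqrt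
  refine ⟨|C| + 1, by positivity, ?_⟩
  intro N δ lam u hδ hδ1 hl hN F hF
  have hN0 : (0:ℝ) < N := by exact_mod_cast hN
  have hd : 0 < 1 - δ := by linarith
  have h1 : ∑ n ∈ F, vonMangoldt n * (n : ℝ)⁻¹ * plphi lam (Real.log n - u) ≤
      ∑ n ∈ F, vonMangoldt n * ((N * (1 - δ))⁻¹ * lam) := by
    refine Finset.sum_le_sum (fun n hn => ?_)
    rw [mul_assoc]
    obtain ⟨a1, a2, a3⟩ := hF n hn
    refine mul_le_mul_of_nonneg_left ?_ vonMangoldt_nonneg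
    have := plphi_le hl (Real.log n - u)
    have := plphi_nonneg hl (Real.log n - u)
    gcongr
  have h2 : ∑ n ∈ F, vonMangoldt n ≤ Chebyshev.psi N - Chebyshev.theta N := by
    rw [Chebyshev.psi_sub_theta_eq_sum_not_prime]
    refine Finset.sum_le_sum_of_subset_of_nonneg (fun n hn => ?_) (fun _ _ _ => vonMangoldt_nonneg)
    obtain ⟨a1, a2, a3⟩ := hF n hn
    rw [Finset.mem_filter, Finset.mem_Ioc, Nat.floor_natCast]
    refine ⟨⟨?_, a2⟩, a3⟩
    have : (0:ℝ) < n := lt_trans (by positivity) a1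
    exact_mod_cast this
  have hs : Real.sqrt N * Real.sqrt N = N := Real.mul_self_sqrt hN0.le
  have hs0 : 0 < Real.sqrt N := Real.sqrt_pos.mpr hN0
  calc _ ≤ _ := h1
    _ = (∑ n ∈ F, vonMangoldt n) * ((N * (1 - δ))⁻¹ * lam) := by rw [Finset.sum_mul]
    _ ≤ ((|C| + 1) * Real.sqrt N) * ((N * (1 - δ))⁻¹ * lam) := by
        have : C ≤ |C| + 1 := by linarith [le_abs_self C]
        have := h2.trans (hC N)
        have : ∑ n ∈ F, vonMangoldt n ≤ (|C| + 1) * Real.sqrt N := this.trans (by gcongr)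
        gcongr
    _ = _ := by
        field_simp
        exact Real.sq_sqrt hN0.le

open ArithmeticFunction Filter Topology in
theorem pl_prime_gap (δ : ℝ) (hδ : 0 < δ) (hδ1 : δ < 1) :
    ∃ X : ℕ, ∀ N : ℕ, X ≤ N → ∃ p : ℕ, p.Prime ∧ N * (1 - δ) < p ∧ p ≤ N := by
  obtain ⟨H, hHc, hH⟩ := pl_exists_H
  obtain ⟨C1, hC1, hfar⟩ := pl_far
  obtain ⟨C2, hC2, hnear⟩ := pl_near
  set η := δ / 3 with hη
  have hη0 : 0 < η := by positivity
  set lam : ℝ := 100 * (C1 * (2 + 3 / η ^ 2)) + 1 with hlam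
  have hl : 0 < lam := by positivity
  let G : ℝ → ℝ → ℝ := fun σ u => ∫ t in (-lam)..lam, (1 - |t| / lam) *
        (Complex.exp (((-(t * u) : ℝ) : ℂ) * Complex.I) * H ((σ : ℂ) - t * Complex.I)).re
  obtain ⟨hGc, hGt⟩ := pl_RL G H lam hl (fun _ _ => rfl) hHc
  have hlogN : Tendsto (fun N : ℕ => Real.log N - η) atTop atTop :=
    tendsto_atTop_add_const_right _ _ (Real.tendsto_log_atTop.comp tendsto_natCast_atTop_atTop)
  have ev1 : ∀ᶠ N : ℕ in atTop, -(1/100) < G 1 (Real.log N - η) :=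
    (hGt.comp hlogN).eventually (lt_mem_nhds (by norm_num))
  have ev2 : ∀ᶠ N : ℕ in atTop, C2 * lam / (1 - δ) / Real.sqrt N < 1/100 := by
    have : Tendsto (fun N : ℕ => C2 * lam / (1 - δ) / Real.sqrt N) atTop (𝓝 0) :=
      Tendsto.const_div_atTop (Real.tendsto_sqrt_atTop.comp tendsto_natCast_atTop_atTop) _
    exact this.eventually (gt_mem_nhds (by norm_num))
  have ev3 : ∀ᶠ N : ℕ in atTop, 2 * lam ≤ Real.exp (Real.log N - η) :=
    (Real.tendsto_exp_atTop.comp hlogN).eventually_ge_atTop _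
  obtain ⟨X, hX⟩ := eventually_atTop.mp (ev1.and (ev2.and (ev3.and (eventually_ge_atTop 1))))
  refine ⟨X, fun N hN => ?_⟩
  obtain ⟨b1, b2, b3, b4⟩ := hX N hN
  by_contra! hno
  set u := Real.log N - η with hu
  have hN0 : (0:ℝ) < N := by exact_mod_cast b4
  set Y := Real.exp u with hY
  have hY0 : 0 < Y := Real.exp_pos _
  -- the comparison at σ > 1
  set J := Finset.Ioc ⌊Y⌋₊ ⌊Y * (1 + 1 / lam)⌋₊ with hJ
  have main : ∀ σ : ℝ, 1 < σ → ∑ n ∈ J, (n : ℝ) ^ (-σ) * (lam / 4) + G σ u ≤ 2 / 100 := by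
    intro σ hσ
    have hσ' : 1 < (σ : ℂ).re := by simpa using hσ
    have sΛ : LSeriesSummable (fun n => ((vonMangoldt n : ℝ) : ℂ)) σ := LSeriesSummable_vonMangoldt hσ'
    have s1 : LSeriesSummable (fun n => (((fun _ => (1:ℝ)) n : ℝ) : ℂ)) σ := by
      have := LSeriesSummable_one_iff.mpr hσ'
      convert this using 2
      simp
    have sd : LSeriesSummable (fun n => ((vonMangoldt n - 1 : ℝ) : ℂ)) σ := by
      have := sΛ.sub s1
      convert this using 2
      simp
    have HΛ := pl_hasSum (fun n => vonMangoldt n) lam σ u hl hσ sΛ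
    obtain ⟨V, H1⟩ : ∃ V, HasSum (fun n : ℕ => 1 * (n:ℝ) ^ (-σ) * plphi lam (Real.log n - u)) V :=
      ⟨_, pl_hasSum (fun _ => 1) lam σ u hl hσ s1⟩
    have Hd := pl_hasSum (fun n => vonMangoldt n - 1) lam σ u hl hσ sd
    have hGeq : G σ u = ∫ t in (-lam)..lam, (1 - |t| / lam) *
        (Complex.exp (((-(t * u) : ℝ) : ℂ) * Complex.I) * LSeries (fun n => ((vonMangoldt n - 1 : ℝ) : ℂ)) ((σ : ℂ) - t * Complex.I)).re := by
      refine intervalIntegral.integral_congr (fun t _ => ?_)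
      change _ * (_ * H _).re = _
      rw [hH]
      simpa using hσ
    rw [← hGeq] at Hd
    have Hadd := H1.add Hd
    have e : (fun n : ℕ => 1 * (n:ℝ) ^ (-σ) * plphi lam (Real.log n - u) + (vonMangoldt n - 1) * (n:ℝ) ^ (-σ) * plphi lam (Real.log n - u))
      = fun n : ℕ => vonMangoldt n * (n:ℝ) ^ (-σ) * plphi lam (Real.log n - u) := by
      ext n; ring
    rw [e] at Hadd
    have lower : ∑ n ∈ J, (n : ℝ) ^ (-σ) * (lam / 4) ≤ V := by
      refine le_trans ?_ (sum_le_hasSum J (fun n _ => ?_) H1)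
      · refine Finset.sum_le_sum (fun n hn => ?_)
        rw [Finset.mem_Ioc] at hn
        have hn1 : Y < n := (Nat.floor_lt hY0.le).mp hn.1
        have hn0 : (0:ℝ) < n := hY0.trans hn1
        have hn2 : (n:ℝ) ≤ Y * (1 + 1 / lam) := (Nat.le_floor_iff (by positivity)).mp hn.2
        rw [one_mul]
        have c1 : 0 ≤ Real.log n - u := by
          have := (Real.lt_log_iff_exp_lt hn0).mpr hn1
          linarith
        have c2 : Real.log n - u ≤ 1 / lam := by
          have h3 := Real.log_le_log hn0 hn2
          rw [Real.log_mul hY0.ne' (by positivity), hY, Real.log_exp] at h3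
          have := Real.log_le_sub_one_of_pos (show 0 < 1 + 1 / lam by positivity)
          linarith
        have := plphi_ge hl c1 c2
        gcongr
      · have := plphi_nonneg hl (Real.log n - u)
        positivity
    have upper : ∀ F : Finset ℕ, ∑ n ∈ F, vonMangoldt n * (n:ℝ) ^ (-σ) * plphi lam (Real.log n - u) ≤ 2 / 100 := by
      intro F
      have step1 : ∑ n ∈ F, vonMangoldt n * (n:ℝ) ^ (-σ) * plphi lam (Real.log n - u) ≤
          ∑ n ∈ F.filter (fun n => vonMangoldt n ≠ 0), vonMangoldt n * (n:ℝ)⁻¹ * plphi lam (Real.log n - u) := by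
        rw [Finset.sum_filter]
        refine Finset.sum_le_sum (fun n _ => ?_)
        split_ifs with h
        · have h1 : n ≠ 0 := by rintro rfl; simp at h
          have h2 : (1:ℝ) ≤ n := by exact_mod_cast Nat.one_le_iff_ne_zero.mpr h1
          have h3 : (n:ℝ) ^ (-σ) ≤ (n:ℝ)⁻¹ := by
            rw [← Real.rpow_neg_one]
            exact Real.rpow_le_rpow_of_exponent_le h2 (by linarith)
          have := plphi_nonneg hl (Real.log n - u)
          have := vonMangoldt_nonneg (n := n)
          gcongr
        · push Not at h
          rw [h]; simp
      set F' := F.filter (fun n => vonMangoldt n ≠ 0) with hF'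
      have hF1 : ∀ n ∈ F', 1 ≤ n := by
        intro n hn
        rw [hF', Finset.mem_filter] at hn
        refine Nat.one_le_iff_ne_zero.mpr ?_
        rintro rfl
        simp at hn
      rw [← Finset.sum_filter_add_sum_filter_not F' (fun n : ℕ => η ≤ |Real.log n - u|)] at step1
      have q1 := hfar η lam u hη0 hl (F'.filter (fun n : ℕ => η ≤ |Real.log n - u|)) (by
        intro n hn
        rw [Finset.mem_filter] at hn
        exact ⟨hF1 n hn.1, hn.2⟩)
      have q2 := hnear N δ lam u hδ hδ1 hl b4 (F'.filter (fun n : ℕ => ¬ η ≤ |Real.log n - u|)) (by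
        intro n hn
        rw [Finset.mem_filter] at hn
        have hn1 := hF1 n hn.1
        have hn0 : (0:ℝ) < n := by exact_mod_cast hn1
        have hn2 := hn.2
        rw [not_le, abs_lt] at hn2
        have r1 : (n:ℝ) < N := by
          rw [← Real.log_lt_log_iff hn0 hN0]; linarith
        have r2 : N * (1 - δ) < n := by
          have : Real.log N + (-(2*η)) < Real.log n := by linarith
          rw [Real.lt_log_iff_exp_lt hn0, Real.exp_add, Real.exp_log hN0] at this
          have h4 := Real.add_one_le_exp (-(2*η))
          refine lt_of_le_of_lt ?_ this
          have : 1 - δ ≤ Real.exp (-(2*η)) := by linarith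
          gcongr
        refine ⟨r2, by exact_mod_cast r1.le, fun hp => ?_⟩
        have := hno n hp r2
        have : (N:ℝ) < n := by exact_mod_cast this
        linarith)
      have q3 : C1 * (2 + 3 / η ^ 2) / lam ≤ 1 / 100 := by
        rw [div_le_div_iff₀ hl (by norm_num), hlam]; linarith
      linarith
    have up := hasSum_le_of_sum_le Hadd upper
    linarith
  have lim : ∑ n ∈ J, (n : ℝ) ^ (-(1:ℝ)) * (lam / 4) + G 1 u ≤ 2 / 100 := by
    have hcont : ContinuousAt (fun σ : ℝ => ∑ n ∈ J, (n : ℝ) ^ (-σ) * (lam / 4) + G σ u) 1 := by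
      refine ContinuousAt.add ?_ (hGc u).continuousAt
      refine tendsto_finsetSum _ (fun n hn => ?_)
      rw [Finset.mem_Ioc] at hn
      have hn1 : Y < n := (Nat.floor_lt hY0.le).mp hn.1
      have hn0 : (n:ℝ) ≠ 0 := (hY0.trans hn1).ne'
      exact ((Real.continuousAt_const_rpow hn0).comp continuousAt_neg).mul continuousAt_const
    have := hcont.tendsto.mono_left (nhdsWithin_le_nhds (s := Set.Ioi (1:ℝ)))
    refine le_of_tendsto this ?_
    filter_upwards [self_mem_nhdsWithin] with σ hσ using main σ hσ
  have cnt : 1 / 16 ≤ ∑ n ∈ J, (n : ℝ) ^ (-(1:ℝ)) * (lam / 4) := by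
    have hcard : Y / lam - 1 ≤ (J.card : ℝ) := by
      rw [hJ, Nat.card_Ioc]
      have f1 := Nat.lt_floor_add_one (Y * (1 + 1 / lam))
      have f2 := Nat.floor_le hY0.le
      have f3 : (⌊Y * (1 + 1 / lam)⌋₊ : ℝ) - ⌊Y⌋₊ ≤ ((⌊Y * (1 + 1 / lam)⌋₊ - ⌊Y⌋₊ : ℕ) : ℝ) := by
        rw [sub_le_iff_le_add]
        exact_mod_cast (by omega)
      have : Y * (1 + 1 / lam) = Y + Y / lam := by ring
      linarith
    have hlam1 : 1 / lam ≤ 1 := by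
      rw [div_le_one hl, hlam]
      have : 0 < C1 * (2 + 3 / η ^ 2) := by positivity
      linarith
    have t1 : ∀ n ∈ J, (2 * Y)⁻¹ * (lam / 4) ≤ (n : ℝ) ^ (-(1:ℝ)) * (lam / 4) := by
      intro n hn
      rw [Finset.mem_Ioc] at hn
      have hn1 : Y < n := (Nat.floor_lt hY0.le).mp hn.1
      have hn2 : (n:ℝ) ≤ Y * (1 + 1 / lam) := (Nat.le_floor_iff (by positivity)).mp hn.2
      rw [Real.rpow_neg_one]
      have : (n:ℝ) ≤ 2 * Y := by nlinarith
      have hn0 : (0:ℝ) < n := (hY0.trans hn1)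
      gcongr
    have t2 := Finset.card_nsmul_le_sum J _ _ t1
    rw [nsmul_eq_mul] at t2
    refine le_trans ?_ t2
    calc (1:ℝ) / 16 ≤ (Y / lam - 1) * ((2 * Y)⁻¹ * (lam / 4)) := by
          have : (Y / lam - 1) * ((2 * Y)⁻¹ * (lam / 4)) = (1 - lam / Y) / 8 := by
            field_simp; ring
          rw [this]
          have : lam / Y ≤ 1 / 2 := by rw [div_le_div_iff₀ hY0 (by norm_num)]; linarith
          linarith
      _ ≤ _ := by gcongr
  linarith

set_option maxHeartbeats 1000000 in
open Filter Topology in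
lemma fs_key (C : ℝ) (hC : 1 ≤ C) : ∃ N0 : ℕ, ∀ N k M : ℕ, 2 ≤ M → 2 ≤ k → k < N →
    (M : ℝ) ≤ C * (k + Real.log N) →
    k * Real.log N ≤ C * (M * Real.log M) →
    M * Real.log M - M ≤ C * (k * Real.log N) →
    Real.log N ≤ C * (M / k + k) →
    k * (Real.log N - Real.log k) ≤ C * (k + Real.log N + Real.log N * Real.log M) →
    (∀ p : ℕ, p.Prime → N - k < p → p ≤ N → False) → N ≤ N0 := by
  set C5 := C * (4 + Real.log (2 * C)) + 1 with hC5
  have hlog2C : 0 < Real.log (2 * C) := Real.log_pos (by linarith)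
  have hC5pos : 0 < C5 := by positivity
  obtain ⟨X, hX⟩ := pl_prime_gap (Real.exp (-C5)) (Real.exp_pos _) (by rw [Real.exp_lt_one_iff]; linarith)
  have hl : Tendsto (fun N : ℕ => Real.log N) atTop atTop :=
    Real.tendsto_log_atTop.comp tendsto_natCast_atTop_atTop
  have hev : ∀ᶠ L : ℝ in atTop, 4 * C ^ 3 * (Real.log (2 * C) + 2 * Real.log L) ≤ L := by
    have h1 : ∀ᶠ L : ℝ in atTop, ‖Real.log L‖ ≤ (1 / (16 * C ^ 3)) * ‖L‖ :=
      Real.isLittleO_log_id_atTop.def (by positivity)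
    filter_upwards [h1, eventually_ge_atTop (8 * C ^ 3 * Real.log (2 * C)), eventually_ge_atTop 1] with L a1 a2 a3
    rw [Real.norm_of_nonneg (Real.log_nonneg a3), Real.norm_of_nonneg (by linarith), div_mul_eq_mul_div,
      le_div_iff₀ (by positivity)] at a1
    nlinarith
  have hall := (hl.eventually (hev.and ((eventually_ge_atTop 1).and
    (eventually_gt_atTop (C * Real.exp (2 * C ^ 2 + 1)))))).and (eventually_ge_atTop X)
  obtain ⟨N0, hN0⟩ := eventually_atTop.mp hall
  refine ⟨N0, ?_⟩
  intro N k M hM hk hkN h1 h2 h3 h4 h5 h6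
  by_contra! hcon
  obtain ⟨⟨g1, g2, g3⟩, g4⟩ := hN0 N hcon.le
  have hNpos : (0:ℝ) < N := by exact_mod_cast (by omega : 0 < N)
  have hkpos : (0:ℝ) < k := by exact_mod_cast (by omega : 0 < k)
  have hMpos : (0:ℝ) < M := by exact_mod_cast (by omega : 0 < M)
  have hk2 : (2:ℝ) ≤ k := by exact_mod_cast hk
  set L := Real.log N with hL
  have hLpos : 0 < L := by linarith
  have hlogL : 0 ≤ Real.log L := Real.log_nonneg g2
  rcases le_or_gt (k:ℝ) (L ^ 2) with hcase | hcase
  · set lam := Real.log (2 * C) + 2 * Real.log L with hlam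
    have hlam0 : 0 < lam := by positivity
    have hM2 : (M:ℝ) ≤ 2 * C * L ^ 2 := by
      have : L ≤ L ^ 2 := by nlinarith
      nlinarith
    have hlogM : Real.log M ≤ lam := by
      have := Real.log_le_log hMpos hM2
      rw [Real.log_mul (by positivity) (by positivity), Real.log_pow] at this
      exact_mod_cast this
    have hlogM0 : 0 ≤ Real.log M := Real.log_nonneg (by exact_mod_cast (by omega : 1 ≤ M))
    have hC3 : C ^ 2 ≤ C ^ 3 := by nlinarith [sq_nonneg C]
    have a1 : k * L ≤ C ^ 2 * lam * (k + L) := by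
      calc k * L ≤ C * (M * Real.log M) := h2
        _ ≤ C * ((C * (k + L)) * lam) := by gcongr
        _ = _ := by ring
    have a2 : C ^ 2 * lam ≤ L / 2 := by nlinarith
    have a3 : (k:ℝ) ≤ 2 * C ^ 2 * lam := by
      have : (k:ℝ) * L ≤ 2 * C ^ 2 * lam * L := by nlinarith
      exact le_of_mul_le_mul_right this hLpos
    have a4 : C * k ≤ L / 2 := by
      have : C * k ≤ C * (2 * C ^ 2 * lam) := by gcongr
      nlinarith
    have a5 : k * L ≤ 2 * C * M := by
      have e : L / 2 ≤ C * (M / k) := by linarith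
      have : k * (L / 2) ≤ k * (C * (M / k)) := by gcongr
      have e2 : k * (C * (M / k)) = C * M := by field_simp
      linarith
    have a6 : Real.log M ≤ 2 * C ^ 2 + 1 := by
      have : M * Real.log M ≤ M * (2 * C ^ 2 + 1) := by nlinarith
      exact le_of_mul_le_mul_left this hMpos
    have a7 : (M:ℝ) ≤ Real.exp (2 * C ^ 2 + 1) := (Real.log_le_iff_le_exp hMpos).mp a6
    have a8 : C * M ≤ C * Real.exp (2 * C ^ 2 + 1) := by gcongr
    have a9 : 2 * L ≤ k * L := mul_le_mul_of_nonneg_right hk2 hLpos.le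
    linarith
  · have b0 : L ≤ k := by nlinarith
    have hM2 : (M:ℝ) ≤ 2 * C * k := by nlinarith
    have hlogM : Real.log M ≤ Real.log (2 * C) + Real.log k := by
      have := Real.log_le_log hMpos hM2
      rwa [Real.log_mul (by positivity) (by positivity)] at this
    have hs : Real.sqrt k * Real.sqrt k = k := Real.mul_self_sqrt hkpos.le
    have hs0 : 0 < Real.sqrt k := Real.sqrt_pos.mpr hkpos
    have b1 : L ≤ Real.sqrt k := Real.le_sqrt_of_sq_le hcase.le
    have b2 : Real.log k ≤ 2 * Real.sqrt k := by
      have e := Real.log_le_sub_one_of_pos hs0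
      rw [Real.log_sqrt hkpos.le] at e
      linarith
    have b3 : L * Real.log M ≤ Real.log (2 * C) * k + 2 * k := by
      calc L * Real.log M ≤ L * (Real.log (2 * C) + 2 * Real.sqrt k) := by gcongr; linarith
        _ = Real.log (2 * C) * L + 2 * (L * Real.sqrt k) := by ring
        _ ≤ Real.log (2 * C) * k + 2 * (Real.sqrt k * Real.sqrt k) := by gcongr
        _ = _ := by rw [hs]
    have b4 : Real.log N - Real.log k ≤ C5 := by
      have : k * (Real.log N - Real.log k) ≤ k * C5 := by
        have : C * (k + L + L * Real.log M) ≤ C * (k + k + (Real.log (2 * C) * k + 2 * k)) := by gcongr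
        rw [hC5]
        nlinarith
      exact le_of_mul_le_mul_left this hkpos
    have b5 : N * Real.exp (-C5) ≤ k := by
      have : Real.exp (Real.log N - C5) ≤ Real.exp (Real.log k) := Real.exp_le_exp.mpr (by linarith)
      rwa [sub_eq_add_neg, Real.exp_add, Real.exp_log hNpos, Real.exp_log hkpos] at this
    obtain ⟨p, hp, hp1, hp2⟩ := hX N g4
    refine h6 p hp ?_ hp2
    have : (N:ℝ) < p + k := by linarith
    have : N < p + k := by exact_mod_cast this
    omega

lemma fs_abc (habc : ExplicitABC) (N k M : ℕ) (hk : 2 ≤ k) (hkN : N < 2 * (N - k))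
    (hM : ∀ x : ℕ, N - k < x → x ≤ N → ∀ p : ℕ, p.Prime → p ∣ x → p ≤ M) :
    Real.log N ≤ 16 * (M / k + k) := by
  classical
  set h := k / 2 with hh
  have hh1 : 1 ≤ h := by omega
  let G : ℕ → Finset ℕ := fun i => ((N - 2 * i - 1) * (N - 2 * i)).primeFactors
  let F : ℕ → Finset ℕ := fun i => (G i).filter (fun p => k < p)
  have hG : ∀ i p, p ∈ G i → p.Prime ∧ (p ∣ N - 2 * i - 1 ∨ p ∣ N - 2 * i) := by
    intro i p hp
    have h1 := Nat.prime_of_mem_primeFactors hp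
    exact ⟨h1, (Nat.Prime.dvd_mul h1).mp (Nat.dvd_of_mem_primeFactors hp)⟩
  have huniq : ∀ p x y : ℕ, k < p → N - k < x → x ≤ N → N - k < y → y ≤ N → p ∣ x → p ∣ y → x ≤ y := by
    intro p x y h1 h2 h3 h4 h5 h6 h7
    by_contra! hc
    have := Nat.le_of_dvd (by omega) (Nat.dvd_sub h6 h7)
    omega
  have hdisj : (↑(Finset.range h) : Set ℕ).PairwiseDisjoint F := by
    intro i hi j hj hij
    rw [Function.onFun, Finset.disjoint_left]
    intro p hp hq
    simp only [Finset.coe_range, Set.mem_Iio] at hi hj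
    obtain ⟨hp1, hp2⟩ := Finset.mem_filter.mp hp
    obtain ⟨hq1, hq2⟩ := Finset.mem_filter.mp hq
    obtain ⟨-, ha⟩ := hG i p hp1
    obtain ⟨-, hb⟩ := hG j p hq1
    apply hij
    rcases ha with ha | ha <;> rcases hb with hb | hb <;>
    · have e1 := huniq p _ _ hp2 (by omega) (by omega) (by omega) (by omega) ha hb
      have e2 := huniq p _ _ hp2 (by omega) (by omega) (by omega) (by omega) hb ha
      omega
  have hthetaM : Chebyshev.theta M ≤ Real.log 4 * M := Chebyshev.theta_le_log4_mul_x (by positivity)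
  have hthetak : Chebyshev.theta k ≤ Real.log 4 * k := Chebyshev.theta_le_log4_mul_x (by positivity)
  rw [Chebyshev.theta_eq_sum_primesLE_log] at hthetaM hthetak
  have hsum : ∑ i ∈ Finset.range h, ∑ p ∈ F i, Real.log p ≤ Real.log 4 * M := by
    rw [← Finset.sum_biUnion hdisj]
    refine le_trans (Finset.sum_le_sum_of_subset_of_nonneg ?_ ?_) hthetaM
    · intro p hp
      obtain ⟨i, hi, hp⟩ := Finset.mem_biUnion.mp hp
      obtain ⟨hp1, ha⟩ := hG i p (Finset.mem_filter.mp hp).1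
      have hi := Finset.mem_range.mp hi
      rw [Nat.mem_primesLE]
      refine ⟨?_, hp1⟩
      rcases ha with ha | ha
      · exact hM _ (by omega) (by omega) p hp1 ha
      · exact hM _ (by omega) (by omega) p hp1 ha
    · intro p _ _
      exact Real.log_natCast_nonneg p
  obtain ⟨i, hi, hile⟩ : ∃ i ∈ Finset.range h, ∑ p ∈ F i, Real.log p ≤ Real.log 4 * M / h := by
    apply Finset.exists_le_of_sum_le (Finset.nonempty_range_iff.mpr (by omega))
    rw [Finset.sum_const, Finset.card_range, nsmul_eq_mul, mul_div_cancel₀]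
    · exact hsum
    · exact_mod_cast (by omega : h ≠ 0)
  have hi := Finset.mem_range.mp hi
  have hx1 : N - 2 * i - 1 + 1 = N - 2 * i := by omega
  have hABC := habc 1 (N - 2 * i - 1) (N - 2 * i) one_pos (by omega) (by omega)
    (Nat.coprime_one_left _) (Nat.coprime_one_left _)
    (by rw [← hx1]; simp) (by omega)
  rw [one_mul] at hABC
  have hradpos : (0:ℝ) < rad ((N - 2 * i - 1) * (N - 2 * i)) := by
    have : 0 < rad ((N - 2 * i - 1) * (N - 2 * i)) := by
      unfold rad
      exact Finset.prod_pos (fun p hp => (Nat.prime_of_mem_primeFactors hp).pos)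
    exact_mod_cast this
  have hlograd : Real.log (rad ((N - 2 * i - 1) * (N - 2 * i))) = ∑ p ∈ G i, Real.log p := by
    unfold rad
    push_cast
    rw [Real.log_prod]
    · rfl
    · intro p hp
      have := (Nat.prime_of_mem_primeFactors hp).pos
      simp only [id]
      positivity
  have hsplit : ∑ p ∈ G i, Real.log p ≤ Real.log 4 * M / h + Real.log 4 * k := by
    rw [← Finset.sum_filter_add_sum_filter_not (G i) (fun p => k < p)]
    refine add_le_add hile (le_trans (Finset.sum_le_sum_of_subset_of_nonneg ?_ ?_) hthetak)
    · intro p hp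
      obtain ⟨h1, h2⟩ := Finset.mem_filter.mp hp
      rw [Nat.mem_primesLE]
      exact ⟨by omega, (hG i p h1).1⟩
    · intro p _ _
      exact Real.log_natCast_nonneg p
  have hNpos : (0:ℝ) < N := by exact_mod_cast (by omega : 0 < N)
  have hNi : (0:ℝ) < ((N - 2 * i : ℕ) : ℝ) := by exact_mod_cast (by omega : 0 < N - 2 * i)
  have hlt := Real.log_lt_log hNi hABC
  rw [Real.log_rpow hradpos, hlograd] at hlt
  have hN2 : Real.log N ≤ Real.log 2 + Real.log ((N - 2 * i : ℕ) : ℝ) := by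
    rw [← Real.log_mul (by norm_num) hNi.ne']
    apply Real.log_le_log hNpos
    exact_mod_cast (by omega : N ≤ 2 * (N - 2 * i))
  have hkpos : (0:ℝ) < k := by exact_mod_cast (by omega : 0 < k)
  have hhpos : (0:ℝ) < h := by exact_mod_cast hh1
  have hdiv : (M:ℝ) / h ≤ 3 * (M / k) := by
    have : (k:ℝ) ≤ 3 * h := by exact_mod_cast (by omega : k ≤ 3 * h)
    rw [← mul_div_assoc, div_le_div_iff₀ hhpos hkpos]
    have : (0:ℝ) ≤ M := by positivity
    nlinarith
  have hlog2 : Real.log 2 < 0.7 := by have := Real.log_two_lt_d9; linarith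
  have hlog2p : 0 < Real.log 2 := Real.log_pos (by norm_num)
  have hlog4 : Real.log 4 = 2 * Real.log 2 := by
    rw [show (4:ℝ) = 2 ^ 2 by norm_num, Real.log_pow]; norm_num
  have hk2 : (2:ℝ) ≤ k := by exact_mod_cast hk
  have hMk : (0:ℝ) ≤ M / k := by positivity
  have e1 : Real.log 4 * M / h ≤ 1.4 * (3 * (M / k)) := by
    rw [mul_div_assoc]
    apply mul_le_mul _ hdiv (by positivity) (by norm_num)
    linarith
  have e2 : Real.log 4 * k ≤ 1.4 * k := by
    apply mul_le_mul_of_nonneg_right _ hkpos.le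
    linarith
  linarith

lemma fs_v2 (n : ℕ) (hn : n ≠ 0) : n ≤ (n.factorial).factorization 2 + (Nat.log 2 n + 1) ∧
    (n.factorial).factorization 2 ≤ n := by
  have : Fact (Nat.Prime 2) := ⟨Nat.prime_two⟩
  have h := sub_one_mul_padicValNat_factorial (p := 2) n
  rw [Nat.factorization_def _ Nat.prime_two]
  have hs : (Nat.digits 2 n).sum ≤ Nat.log 2 n + 1 := by
    rw [← Nat.length_digits 2 n (by norm_num) hn]
    have := List.sum_le_card_nsmul (Nat.digits 2 n) 1 (fun x hx => by
      have := Nat.digits_lt_base (by norm_num) hx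
      omega)
    simpa using this
  omega

lemma fs_fac_lower (n : ℕ) : (n : ℝ) * Real.log n - n ≤ Real.log (n.factorial) := by
  rcases Nat.eq_zero_or_pos n with rfl | hn
  · simp
  have h := Real.pow_div_factorial_le_exp (x := (n : ℝ)) (by positivity) n
  have hn' : (0:ℝ) < n := by exact_mod_cast hn
  have hf : (0:ℝ) < n.factorial := by exact_mod_cast n.factorial_pos
  have h2 := Real.log_le_log (by positivity) h
  rw [Real.log_div (by positivity) hf.ne', Real.log_pow, Real.log_exp] at h2
  linarith

lemma fs_fac_upper (n M : ℕ) (hn : 0 < n) (h : n ≤ M) : Real.log (n.factorial) ≤ n * Real.log M := by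
  rw [← Real.log_pow]
  apply Real.log_le_log
  · exact_mod_cast n.factorial_pos
  · have h1 : n.factorial ≤ n ^ n := by
      rw [← Nat.descFactorial_self]; exact Nat.descFactorial_le_pow n n
    exact_mod_cast h1.trans (Nat.pow_le_pow_left h n)

lemma fs_dlog (d k : ℕ) (hd : 0 < d) (hk : 0 < k) : (d:ℝ) * Real.log k - k ≤ d * Real.log d := by
  have hd' : (0:ℝ) < d := by exact_mod_cast hd
  have hk' : (0:ℝ) < k := by exact_mod_cast hk
  have h := Real.log_le_sub_one_of_pos (div_pos hk' hd')
  rw [Real.log_div hk'.ne' hd'.ne'] at h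
  have h2 : d * (Real.log k - Real.log d) ≤ d * (k / d - 1) := by gcongr
  have h3 : (d:ℝ) * (k / d - 1) = k - d := by field_simp
  linarith

lemma fs_log2 (N : ℕ) (hN : 4 ≤ N) : (Nat.log 2 N : ℝ) + 1 ≤ 4 * Real.log N := by
  have h := Real.natLog_le_logb N 2
  have hlog2 : 0.69 < Real.log 2 := by have := Real.log_two_gt_d9; linarith
  rw [Real.logb] at h
  have h4 : 2 * Real.log 2 ≤ Real.log N := by
    have e : Real.log 4 = 2 * Real.log 2 := by
      rw [show (4:ℝ) = 2 ^ 2 by norm_num, Real.log_pow]; norm_num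
    rw [← e]
    apply Real.log_le_log (by norm_num)
    exact_mod_cast hN
  have h5 : Real.log N / Real.log 2 ≤ 2 * Real.log N := by
    rw [div_le_iff₀ (by linarith)]
    nlinarith
  push_cast at h
  linarith

set_option maxHeartbeats 1600000 in
lemma fs_bounds (habc : ExplicitABC) (t s : ℕ) (ι : Fin s → Fin t) (hinj : Function.Injective ι)
    (hst : s < t) (c₀ : ℕ) (hc₀ : 0 < c₀) (a : Fin t → ℕ) (n : Fin s → ℕ) (z : Fin s)
    (ha : ∀ l, a l ≤ a (ι z)) (ha2 : ∀ l, 2 ≤ a l) (hn : ∀ j, n j ≤ n z)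
    (hprod : (∏ l : Fin t, Nat.factorial (a l)) = ∏ j : Fin s, Nat.factorial (n j))
    (hk2 : a (ι z) + 2 ≤ n z) (hlt : ∀ j, a (ι j) < n j)
    (hc : ∀ j, n j - a (ι j) ≤ c₀ * (n z - a (ι z))) (C : ℝ)
    (hC : C = 4 * ((s:ℝ) * c₀ + t + 4) ^ 2) :
    ∃ N k M : ℕ, N = n z ∧ 2 ≤ M ∧ 2 ≤ k ∧ k < N ∧
    (M : ℝ) ≤ C * (k + Real.log N) ∧
    k * Real.log N ≤ C * (M * Real.log M) ∧
    M * Real.log M - M ≤ C * (k * Real.log N) ∧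
    Real.log N ≤ C * (M / k + k) ∧
    k * (Real.log N - Real.log k) ≤ C * (k + Real.log N + Real.log N * Real.log M) ∧
    (∀ p : ℕ, p.Prime → N - k < p → p ≤ N → False) := by
  classical
  set N := n z with hN
  set k := N - a (ι z) with hk
  have hNk : N - k = a (ι z) := by omega
  have hazpos := ha2 (ι z)
  let d : Fin s → ℕ := fun j => n j - a (ι j)
  let R : Finset (Fin t) := Finset.univ \ Finset.univ.image ι
  have hRcard : R.card ≤ t := by simpa using Finset.card_le_univ R
  have hRne : R.Nonempty := by
    by_contra hne
    rw [Finset.not_nonempty_iff_eq_empty, Finset.sdiff_eq_empty_iff_subset] at hne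
    have h1 := Finset.card_le_card hne
    have h2 : (Finset.univ.image ι).card ≤ (Finset.univ : Finset (Fin s)).card := Finset.card_image_le
    simp at h1 h2
    omega
  have hsplit : ∀ f : Fin t → ℕ, ∏ l, f l = (∏ l ∈ R, f l) * ∏ j, f (ι j) := by
    intro f
    rw [← Finset.prod_image (f := f) (g := ι) (s := Finset.univ) (fun x _ y _ h => hinj h)]
    exact (Finset.prod_sdiff (Finset.subset_univ _)).symm
  have hsplits : ∀ f : Fin t → ℕ, ∑ l, f l = (∑ l ∈ R, f l) + ∑ j, f (ι j) := by
    intro f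
    rw [← Finset.sum_image (f := f) (g := ι) (s := Finset.univ) (fun x _ y _ h => hinj h)]
    exact (Finset.sum_sdiff (Finset.subset_univ _)).symm
  have hP : ∏ l ∈ R, (a l).factorial = ∏ j, (n j).descFactorial (d j) := by
    have h1 : ∏ j, (n j).factorial = (∏ j, (n j).descFactorial (d j)) * ∏ j, (a (ι j)).factorial := by
      rw [← Finset.prod_mul_distrib]
      refine Finset.prod_congr rfl (fun j _ => ?_)
      have e : n j - d j = a (ι j) := by have := hlt j; simp only [d]; omega
      rw [mul_comm, ← e, Nat.factorial_mul_descFactorial (by simp only [d]; omega)]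
    rw [hsplit, h1] at hprod
    exact Nat.eq_of_mul_eq_mul_right (Finset.prod_pos (fun j _ => Nat.factorial_pos _)) hprod
  obtain ⟨l0, hl0, hl0M⟩ := Finset.exists_max_image R a hRne
  set M := a l0 with hM
  have hM2 : 2 ≤ M := ha2 l0
  have hMa : M ≤ a (ι z) := ha l0
  have hprimes : ∀ x : ℕ, N - k < x → x ≤ N → ∀ p : ℕ, p.Prime → p ∣ x → p ≤ M := by
    intro x hx1 hx2 p hp hpx
    have h1 : x ∣ N.descFactorial k := by
      rw [Nat.descFactorial_eq_prod_range]
      have : x = N - (N - x) := by omega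
      rw [this]
      exact Finset.dvd_prod_of_mem (fun i => N - i) (Finset.mem_range.mpr (by omega))
    have h2 : N.descFactorial k ∣ ∏ l ∈ R, (a l).factorial := by
      rw [hP]
      exact Finset.dvd_prod_of_mem (fun j => (n j).descFactorial (d j)) (Finset.mem_univ z)
    obtain ⟨l, hl, hpl⟩ := (Prime.dvd_finsetProd_iff hp.prime _).mp ((hpx.trans h1).trans h2)
    exact ((Nat.Prime.dvd_factorial hp).mp hpl).trans (hl0M l hl)
  have hnop : ∀ p : ℕ, p.Prime → N - k < p → p ≤ N → False := by
    intro p hp h1 h2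
    have := hprimes p h1 h2 p hp dvd_rfl
    omega
  have hbert : N < 2 * (N - k) := by
    obtain ⟨p, hp, h1, h2⟩ := Nat.exists_prime_lt_and_le_two_mul (N - k) (by omega)
    by_contra hcon
    exact hnop p hp h1 (by omega)
  -- real quantities
  have hkR : (2:ℝ) ≤ k := by exact_mod_cast (by omega : 2 ≤ k)
  have hMR : (2:ℝ) ≤ M := by exact_mod_cast hM2
  have hNR : (4:ℝ) ≤ N := by exact_mod_cast (by omega : 4 ≤ N)
  set L := Real.log N with hL
  have hL0 : 0 ≤ L := Real.log_nonneg (by linarith)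
  have hlM0 : 0 ≤ Real.log M := Real.log_nonneg (by linarith)
  have hlk0 : 0 ≤ Real.log k := Real.log_nonneg (by linarith)
  set A := ∑ l ∈ R, a l with hA
  set K := ∑ j, d j with hK
  set D : ℝ := (s:ℝ) * c₀ with hD
  have hKle : (K:ℝ) ≤ D * k := by
    have : K ≤ s * (c₀ * k) := by
      have := Finset.sum_le_card_nsmul Finset.univ d (c₀ * k) (fun j _ => hc j)
      simpa using this
    have : (K:ℝ) ≤ s * (c₀ * k) := by exact_mod_cast this
    rw [hD]; linarith
  have hsD : (s:ℝ) ≤ D := by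
    have : (1:ℝ) ≤ c₀ := by exact_mod_cast hc₀
    rw [hD]
    have : (0:ℝ) ≤ s := by positivity
    nlinarith
  have hD0 : 0 ≤ D := by positivity
  have ht0 : (0:ℝ) ≤ t := by positivity
  have hs0 : (0:ℝ) ≤ s := by positivity
  have hAle : A ≤ K + t * (Nat.log 2 N + 1) := by
    have h1 := congrArg (fun x => x.factorization 2) hprod
    rw [Nat.factorization_prod_apply (fun l _ => Nat.factorial_ne_zero _),
      Nat.factorization_prod_apply (fun l _ => Nat.factorial_ne_zero _)] at h1
    have h2 : ∑ l, a l ≤ ∑ l, ((a l).factorial.factorization 2 + (Nat.log 2 N + 1)) := by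
      refine Finset.sum_le_sum (fun l _ => ?_)
      refine (fs_v2 (a l) (by have := ha2 l; omega)).1.trans ?_
      have := Nat.log_mono_right (b := 2) (show a l ≤ N from by have := ha l; omega)
      omega
    have h3 : ∑ j, (n j).factorial.factorization 2 ≤ ∑ j, n j :=
      Finset.sum_le_sum (fun j _ => (fs_v2 (n j) (by have := hlt j; omega)).2)
    have h4 : ∑ j, n j = K + ∑ j, a (ι j) := by
      rw [hK, ← Finset.sum_add_distrib]
      refine Finset.sum_congr rfl (fun j _ => ?_)
      have := hlt j
      simp only [d]; omega
    rw [Finset.sum_add_distrib] at h2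
    have h5 := hsplits a
    simp only [Finset.sum_const, Finset.card_univ, Fintype.card_fin, smul_eq_mul] at h2
    omega
  have hAR : (A:ℝ) ≤ K + 4 * t * L := by
    have h1 : (A:ℝ) ≤ K + t * (Nat.log 2 N + 1) := by exact_mod_cast hAle
    have h2 := fs_log2 N (by omega)
    have h3 : (t:ℝ) * (Nat.log 2 N + 1) ≤ t * (4 * L) := by gcongr
    linarith
  have hMA : (M:ℝ) ≤ A := by
    have : M ≤ A := Finset.single_le_sum (f := a) (fun _ _ => Nat.zero_le _) hl0
    exact_mod_cast this
  have hMle : (M:ℝ) ≤ D * k + 4 * t * L := by linarith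
  -- log of P
  have hlogP1 : Real.log (∏ l ∈ R, ((a l).factorial : ℝ)) = ∑ l ∈ R, Real.log ((a l).factorial) :=
    Real.log_prod (fun l _ => by exact_mod_cast Nat.factorial_ne_zero _)
  have hdpos : ∀ j, 0 < (n j).descFactorial (d j) := fun j =>
    Nat.pos_of_ne_zero (fun h => by
      have := Nat.descFactorial_eq_zero_iff_lt.mp h
      simp only [d] at this; omega)
  have hlogP2 : Real.log (∏ l ∈ R, ((a l).factorial : ℝ)) = ∑ j, Real.log ((n j).descFactorial (d j)) := by
    have : (∏ l ∈ R, ((a l).factorial : ℝ)) = ∏ j, ((n j).descFactorial (d j) : ℝ) := by exact_mod_cast hP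
    rw [this]
    exact Real.log_prod (fun j _ => by exact_mod_cast (hdpos j).ne')
  have hlog : ∑ j, Real.log ((n j).descFactorial (d j)) = ∑ l ∈ R, Real.log ((a l).factorial) := by
    rw [← hlogP1, hlogP2]
  have hlogA : ∑ l ∈ R, Real.log ((a l).factorial) ≤ A * Real.log M := by
    rw [hA]; push_cast; rw [Finset.sum_mul]
    exact Finset.sum_le_sum (fun l hl => fs_fac_upper _ _ (by have := ha2 l; omega) (hl0M l hl))
  have hAtM : (A:ℝ) ≤ t * M := by
    have h1 := Finset.sum_le_card_nsmul R a M hl0M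
    have h2 : A ≤ t * M := by
      refine h1.trans ?_
      rw [smul_eq_mul]
      exact Nat.mul_le_mul_right _ hRcard
    exact_mod_cast h2
  have hdl0 : ∀ j, 0 ≤ Real.log ((n j).descFactorial (d j)) := fun j => Real.log_natCast_nonneg _
  have hz1 : k * Real.log ((N - k + 1 : ℕ) : ℝ) ≤ Real.log (N.descFactorial k) := by
    rw [← Real.log_pow]
    apply Real.log_le_log
    · have : 0 < N - k + 1 := by omega
      positivity
    · have := Nat.pow_sub_le_descFactorial N k
      rw [show N + 1 - k = N - k + 1 by omega] at this
      exact_mod_cast this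
  have hz2 : L - 1 ≤ Real.log ((N - k + 1 : ℕ) : ℝ) := by
    have h1 : (N:ℝ) ≤ 2 * ((N - k + 1 : ℕ) : ℝ) := by exact_mod_cast (by omega : N ≤ 2 * (N - k + 1))
    have h0 : (0:ℝ) < ((N - k + 1 : ℕ) : ℝ) := by positivity
    have h2 := Real.log_le_log (by linarith) h1
    rw [Real.log_mul (by norm_num) h0.ne'] at h2
    have := Real.log_two_lt_d9
    linarith
  have hz3 : L / 2 ≤ Real.log ((N - k + 1 : ℕ) : ℝ) := by
    have h0 : N ≤ (N - k + 1) ^ 2 := by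
      have : 2 ≤ N - k + 1 := by omega
      nlinarith
    have h1 : (N:ℝ) ≤ ((N - k + 1 : ℕ) : ℝ) ^ 2 := by exact_mod_cast h0
    have h2 := Real.log_le_log (by linarith) h1
    rw [Real.log_pow] at h2
    push_cast at h2 ⊢
    linarith
  have hCs : 0 ≤ D * t := by positivity
  have hCexp : C = 4 * D ^ 2 + 4 * (t:ℝ) ^ 2 + 64 + 8 * (D * t) + 32 * D + 32 * t := by
    rw [hC]; ring
  have hD2 : 0 ≤ D ^ 2 := by positivity
  have ht2 : 0 ≤ (t:ℝ) ^ 2 := by positivity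
  refine ⟨N, k, M, rfl, hM2, by omega, by omega, ?_, ?_, ?_, ?_, ?_, hnop⟩
  · have e1 : D * k ≤ C * k := mul_le_mul_of_nonneg_right (by linarith) (by linarith)
    have e2 : 4 * t * L ≤ C * L := mul_le_mul_of_nonneg_right (by linarith) hL0
    linarith
  · have e1 : Real.log (N.descFactorial k) ≤ ∑ j, Real.log ((n j).descFactorial (d j)) :=
      Finset.single_le_sum (f := fun j => Real.log ((n j).descFactorial (d j))) (fun j _ => hdl0 j)
        (Finset.mem_univ z)
    have e2 : k * (L / 2) ≤ k * Real.log ((N - k + 1 : ℕ) : ℝ) := by gcongr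
    have e3 : A * Real.log M ≤ t * M * Real.log M := by gcongr
    have e4 : 2 * t * (M * Real.log M) ≤ C * (M * Real.log M) :=
      mul_le_mul_of_nonneg_right (by linarith) (by positivity)
    linarith
  · have e0 := fs_fac_lower M
    have e1 : Real.log (M.factorial) ≤ ∑ l ∈ R, Real.log ((a l).factorial) :=
      Finset.single_le_sum (f := fun l => Real.log ((a l).factorial)) (fun l _ => Real.log_natCast_nonneg _) hl0
    have e2 : ∑ j, Real.log ((n j).descFactorial (d j)) ≤ K * L := by
      rw [hK]; push_cast; rw [Finset.sum_mul]
      refine Finset.sum_le_sum (fun j _ => ?_)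
      rw [← Real.log_pow]
      apply Real.log_le_log
      · exact_mod_cast hdpos j
      · exact_mod_cast (Nat.descFactorial_le_pow _ _).trans (Nat.pow_le_pow_left (hn j) _)
    have e3 : K * L ≤ D * k * L := by gcongr
    have e4 : D * (k * L) ≤ C * (k * L) := mul_le_mul_of_nonneg_right (by linarith) (by positivity)
    linarith
  · have e1 := fs_abc habc N k M (by omega) hbert hprimes
    have e2 : 16 * ((M:ℝ) / k + k) ≤ C * (M / k + k) :=
      mul_le_mul_of_nonneg_right (by linarith) (by positivity)
    linarith
  · have hkpos : (0:ℝ) < k := by linarith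
    have e1 : ∀ j, (if j = z then (k:ℝ) * (L - Real.log k) else 0) + (d j * Real.log k - k - d j) ≤
        Real.log ((n j).descFactorial (d j)) := by
      intro j
      split_ifs with hj
      · subst hj
        have g1 : (k:ℝ) * (L - 1) ≤ k * Real.log ((N - k + 1 : ℕ) : ℝ) := by gcongr
        change _ + ((k:ℝ) * Real.log k - k - k) ≤ Real.log (N.descFactorial k)
        linarith
      · have g0 : 0 < d j := by have := hlt j; simp only [d]; omega
        have g1 := fs_dlog (d j) k g0 (by omega)
        have g2 := fs_fac_lower (d j)
        have g3 : Real.log ((d j).factorial) ≤ Real.log ((n j).descFactorial (d j)) := by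
          apply Real.log_le_log
          · exact_mod_cast Nat.factorial_pos _
          · exact_mod_cast Nat.le_of_dvd (hdpos j) (Nat.factorial_dvd_descFactorial _ _)
        linarith
    have e2 := Finset.sum_le_sum (s := Finset.univ) (fun j _ => e1 j)
    rw [Finset.sum_add_distrib, Finset.sum_ite_eq' Finset.univ z] at e2
    simp only [Finset.mem_univ, if_true] at e2
    rw [Finset.sum_sub_distrib, Finset.sum_sub_distrib, ← Finset.sum_mul, Finset.sum_const,
      Finset.card_univ, Fintype.card_fin, nsmul_eq_mul, ← Nat.cast_sum, ← hK] at e2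
    have e3 : A * Real.log M ≤ (K + 4 * t * L) * Real.log M := by gcongr
    have e4 : Real.log M - Real.log k ≤ M / k := by
      rw [← Real.log_div (by linarith) (by linarith)]
      have := Real.log_le_sub_one_of_pos (show (0:ℝ) < M / k by positivity)
      linarith
    have e5 : K * (Real.log M - Real.log k) ≤ D * M := by
      calc K * (Real.log M - Real.log k) ≤ K * (M / k) := by gcongr
        _ ≤ (D * k) * (M / k) := by gcongr
        _ = D * M := by field_simp
    have e6 : D * M ≤ D * (D * k + 4 * t * L) := by gcongr
    have e7 : s * (k:ℝ) ≤ D * k := by gcongr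
    have e8 : (D ^ 2 + 2 * D) * k ≤ C * k := mul_le_mul_of_nonneg_right (by linarith) (by linarith)
    have e9 : (4 * (D * t)) * L ≤ C * L := mul_le_mul_of_nonneg_right (by linarith) hL0
    have e10 : (4 * t) * (L * Real.log M) ≤ C * (L * Real.log M) :=
      mul_le_mul_of_nonneg_right (by linarith) (by positivity)
    linarith

/-- Under the explicit abc conjecture, for fixed `2 ≤ s < t`, distinct indices
`i₂, …, i_s ∈ {2, …, t}` (encoded by an injective `ι : Fin s → Fin t` with `ι 0 = 0`,
so that `n₁` is paired with `a₁` and `n_j` with `a_{i_j}` for `j ≥ 2`) and `c₀ ≥ 1`,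
the equation `∏ a_l ! = ∏ n_j !` has only finitely many nontrivial solutions with
`a₁ ≥ ⋯ ≥ a_t ≥ 2`, `n₁ ≥ ⋯ ≥ n_s ≥ 2`, `|a_l - n_j| ≥ 2` for all `l, j`,
`n₁ > a₁`, `n_j > a_{i_j}` and `max_j (n_j - a_{i_j}) ≤ c₀ (n₁ - a₁)`. -/
theorem finitely_many_solutions_general_s
    (habc : ExplicitABC) (t s : ℕ) (hs : 2 ≤ s) (hst : s < t)
    (ι : Fin s → Fin t) (hinj : Function.Injective ι)
    (hι0 : (ι ⟨0, by omega⟩).val = 0)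
    (c₀ : ℕ) (hc₀ : 0 < c₀) :
    {p : (Fin t → ℕ) × (Fin s → ℕ) |
      (∀ l l' : Fin t, l ≤ l' → p.1 l' ≤ p.1 l) ∧
      (∀ l : Fin t, 2 ≤ p.1 l) ∧
      (∀ j j' : Fin s, j ≤ j' → p.2 j' ≤ p.2 j) ∧
      (∀ j : Fin s, 2 ≤ p.2 j) ∧
      (∏ l : Fin t, Nat.factorial (p.1 l)) = (∏ j : Fin s, Nat.factorial (p.2 j)) ∧
      (∀ l : Fin t, ∀ j : Fin s, 2 ≤ |(p.1 l : ℤ) - (p.2 j : ℤ)|) ∧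
      (∀ j : Fin s, p.1 (ι j) < p.2 j) ∧
      (∀ j : Fin s, 1 ≤ j.val →
        p.2 j - p.1 (ι j) ≤
          c₀ * (p.2 ⟨0, by omega⟩ - p.1 (ι ⟨0, by omega⟩)))}.Finite := by
  classical
  have hs0 : 0 < s := by omega
  set C : ℝ := 4 * ((s:ℝ) * c₀ + t + 4) ^ 2 with hC
  have hC1 : 1 ≤ C := by
    have h1 : (0:ℝ) ≤ (s:ℝ) * c₀ + t := by positivity
    rw [hC]; nlinarith
  obtain ⟨N0, hN0⟩ := fs_key C hC1
  refine Set.Finite.subset (s := Set.pi Set.univ (fun _ : Fin t => Set.Iic N0) ×ˢ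
    Set.pi Set.univ (fun _ : Fin s => Set.Iic N0)) ?_ ?_
  · exact Set.Finite.prod (Set.Finite.pi' (fun _ => Set.finite_Iic N0) |>.subset (by
      intro f hf i; exact hf i (Set.mem_univ i))) (Set.Finite.pi' (fun _ => Set.finite_Iic N0) |>.subset (by
      intro f hf i; exact hf i (Set.mem_univ i)))
  · rintro ⟨a, n⟩ ⟨h1, h2, h3, h4, h5, h6, h7, h8⟩
    simp only at h1 h2 h3 h4 h5 h6 h7 h8
    have ha : ∀ l, a l ≤ a (ι ⟨0, hs0⟩) := fun l => h1 _ _ (by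
      rw [Fin.le_def, hι0]; exact Nat.zero_le _)
    have hn : ∀ j, n j ≤ n ⟨0, hs0⟩ := fun j => h3 _ _ (by
      rw [Fin.le_def]; exact Nat.zero_le _)
    have hk2 : a (ι ⟨0, hs0⟩) + 2 ≤ n ⟨0, hs0⟩ := by
      have e1 := h6 (ι ⟨0, hs0⟩) ⟨0, hs0⟩
      have e2 := h7 ⟨0, hs0⟩
      rw [abs_sub_comm, abs_of_nonneg (by omega)] at e1
      omega
    have hc : ∀ j, n j - a (ι j) ≤ c₀ * (n ⟨0, hs0⟩ - a (ι ⟨0, hs0⟩)) := by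
      intro j
      rcases Nat.eq_zero_or_pos j.val with hj | hj
      · have : j = ⟨0, hs0⟩ := Fin.ext hj
        subst this
        exact Nat.le_mul_of_pos_left _ hc₀
      · exact h8 j hj
    obtain ⟨N, k, M, hN, g1, g2, g3, g4, g5, g6, g7, g8, g9⟩ :=
      fs_bounds habc t s ι hinj hst c₀ hc₀ a n ⟨0, hs0⟩ ha h2 hn h5 hk2 h7 hc C hC
    have hfin := hN0 N k M g1 g2 g3 g4 g5 g6 g7 g8 g9
    refine ⟨fun l _ => ?_, fun j _ => ?_⟩
    · have := ha l
      simp only [Set.mem_Iic]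
      omega
    · have := hn j
      simp only [Set.mem_Iic]
      omega
end

section
/- Fix a positive integer c₀ ≥ 1. For N → ∞, the quantity (1/N⁵)·#{(a₁, a₂, a₃, n₁, n₂) ∈ {1,…,N}⁵ : n₁ ≥ n₂, a₁ ≥ a₂ ≥ a₃, n₁ > a₁, n₂ > a₂, and n₂ − a₂ ≤ c₀·(n₁ − a₁)} converges to 1/60 − 1/(120·c₀); in particular, this asymptotic density is positive. -/
/-- Pairs `(z, y)` in `[1,d]^2` with `y ≤ c z`. -/
def dctPairs (c d : ℕ) : Finset (ℕ × ℕ) :=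
  (Finset.Icc 1 d ×ˢ Finset.Icc 1 d).filter (fun q => q.2 ≤ c * q.1)

theorem dct_row (c d y : ℕ) (hc : 1 ≤ c) (hy1 : 1 ≤ y) (hy : y ≤ d) :
    (((Finset.Icc 1 d).filter (fun z => y ≤ c * z)).card : ℝ) ≤ (d : ℝ) - y / c + 1 ∧
    (d : ℝ) - y / c ≤ (((Finset.Icc 1 d).filter (fun z => y ≤ c * z)).card : ℝ) := by
  have e : (Finset.Icc 1 d).filter (fun z => y ≤ c * z) = Finset.Icc ((y - 1) / c + 1) d := by
    ext z
    simp only [Finset.mem_filter, Finset.mem_Icc]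
    have h : (y - 1) / c < z ↔ y - 1 < z * c := Nat.div_lt_iff_lt_mul (by omega)
    rw [mul_comm] at h
    generalize (y - 1) / c = t at *
    constructor
    · rintro ⟨⟨h1, h2⟩, h3⟩
      have := h.2 (by omega)
      omega
    · rintro ⟨h1, h2⟩
      have := h.1 (by omega)
      omega
  rw [e, Nat.card_Icc]
  have hle : (y - 1) / c ≤ d := (Nat.div_le_self _ _).trans (by omega)
  have e2 : d + 1 - ((y - 1) / c + 1) = d - (y - 1) / c := by omega
  rw [e2, Nat.cast_sub hle]
  have hdm := Nat.div_add_mod (y - 1) c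
  have hml := Nat.mod_lt (y - 1) (show 0 < c by omega)
  have i1 : c * ((y - 1) / c) ≤ y := by omega
  have i2 : y ≤ c * ((y - 1) / c) + c := by omega
  have hcr : (0 : ℝ) < c := by exact_mod_cast hc
  have i1r : (c : ℝ) * (((y - 1) / c : ℕ) : ℝ) ≤ y := by exact_mod_cast i1
  have i2r : (y : ℝ) ≤ (c : ℝ) * (((y - 1) / c : ℕ) : ℝ) + c := by exact_mod_cast i2
  generalize (((y - 1) / c : ℕ) : ℝ) = t at *
  have j1 : t ≤ y / c := by rw [le_div_iff₀ hcr]; linarith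
  have j2 : (y : ℝ) / c ≤ t + 1 := by rw [div_le_iff₀ hcr]; linarith
  constructor <;> linarith

theorem dct_pairs_bound (c d : ℕ) (hc : 1 ≤ c) :
    |((dctPairs c d).card : ℝ) - (1 - 1 / (2 * c)) * (d : ℝ) ^ 2| ≤ (d : ℝ) := by
  have hcr : (1 : ℝ) ≤ c := by exact_mod_cast hc
  have e : (dctPairs c d).card
      = ∑ y ∈ Finset.Icc 1 d, ((Finset.Icc 1 d).filter (fun z => y ≤ c * z)).card := by
    simp only [dctPairs, Finset.card_filter]
    rw [Finset.sum_product_right]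
  have s1 : ∀ n : ℕ, ∑ y ∈ Finset.Icc 1 n, (y : ℝ) = n * (n + 1) / 2 := by
    intro n
    induction n with
    | zero => simp
    | succ k ih => rw [Finset.sum_Icc_succ_top (by omega), ih]; push_cast; ring
  have lo : ∑ y ∈ Finset.Icc 1 d, ((d : ℝ) - y / c) ≤ (dctPairs c d).card := by
    rw [e]; push_cast
    refine Finset.sum_le_sum fun y hy => ?_
    rw [Finset.mem_Icc] at hy
    exact (dct_row c d y hc hy.1 hy.2).2
  have hi : ((dctPairs c d).card : ℝ) ≤ ∑ y ∈ Finset.Icc 1 d, ((d : ℝ) - y / c + 1) := by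
    rw [e]; push_cast
    refine Finset.sum_le_sum fun y hy => ?_
    rw [Finset.mem_Icc] at hy
    exact (dct_row c d y hc hy.1 hy.2).1
  have es : ∑ y ∈ Finset.Icc 1 d, ((d : ℝ) - y / c) = (1 - 1 / (2 * c)) * (d : ℝ) ^ 2 - d / (2 * c) := by
    rw [Finset.sum_sub_distrib, ← Finset.sum_div, s1]
    simp only [Finset.sum_const, Nat.card_Icc, nsmul_eq_mul]
    push_cast [Nat.add_sub_cancel]
    field_simp
    ring
  rw [Finset.sum_add_distrib, es] at hi
  rw [es] at lo
  simp only [Finset.sum_const, Nat.card_Icc, nsmul_eq_mul, Nat.add_sub_cancel, mul_one] at hi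
  have p0 : (0 : ℝ) ≤ d / (2 * c) := by positivity
  have p1 : (d : ℝ) / (2 * c) ≤ d := by
    rw [div_le_iff₀ (by positivity)]
    nlinarith [(Nat.cast_nonneg d : (0 : ℝ) ≤ d)]
  rw [abs_le]
  constructor <;> linarith

theorem dct_count (c N : ℕ) :
    ((Finset.Icc 1 N ×ˢ Finset.Icc 1 N ×ˢ Finset.Icc 1 N ×ˢ
          Finset.Icc 1 N ×ˢ Finset.Icc 1 N).filter
        (fun p : ℕ × ℕ × ℕ × ℕ × ℕ =>
          p.2.2.2.2 ≤ p.2.2.2.1 ∧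
          p.2.1 ≤ p.1 ∧ p.2.2.1 ≤ p.2.1 ∧
          p.1 < p.2.2.2.1 ∧ p.2.1 < p.2.2.2.2 ∧
          p.2.2.2.2 - p.2.1 ≤ c * (p.2.2.2.1 - p.1))).card
    = ∑ m ∈ Finset.range (N + 1), ∑ d ∈ Finset.range (m + 1), (m - d) * (dctPairs c d).card := by
  have h : ∑ m ∈ Finset.range (N + 1), ∑ d ∈ Finset.range (m + 1), (m - d) * (dctPairs c d).card
    = ((Finset.range (N + 1)).sigma (fun m => (Finset.range (m + 1)).sigma
        (fun d => Finset.Icc 1 (m - d) ×ˢ dctPairs c d))).card := by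
    simp [Finset.card_sigma, Finset.card_product]
  rw [h]
  refine Finset.card_nbij'
    (fun p => ⟨p.2.2.2.1, ⟨p.2.2.2.1 - p.2.1, (p.2.2.1, (p.2.2.2.1 - p.1, p.2.2.2.2 - p.2.1))⟩⟩)
    (fun q => (q.1 - q.2.2.2.1, q.1 - q.2.1, q.2.2.1, q.1, q.2.2.2.2 + (q.1 - q.2.1))) ?_ ?_ ?_ ?_
  · rintro ⟨a1, a2, a3, n1, n2⟩ hp
    simp only [Finset.mem_coe, Finset.mem_filter, Finset.mem_product, Finset.mem_Icc] at hp
    simp only [Finset.mem_coe, Finset.mem_sigma, Finset.mem_range, Finset.mem_product,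
      Finset.mem_Icc, dctPairs, Finset.mem_filter]
    obtain ⟨_, _, _, _, _, _, h⟩ := hp
    refine ⟨?_, ?_, ⟨?_, ?_⟩, ⟨⟨?_, ?_⟩, ?_, ?_⟩, h⟩ <;> omega
  · rintro ⟨m, d, a3, z, y⟩ hp
    simp only [Finset.mem_coe, Finset.mem_sigma, Finset.mem_range, Finset.mem_product,
      Finset.mem_Icc, dctPairs, Finset.mem_filter] at hp
    simp only [Finset.mem_coe, Finset.mem_filter, Finset.mem_product, Finset.mem_Icc]
    obtain ⟨_, _, _, _, h⟩ := hp
    have e1 : m - (m - z) = z := by omega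
    have e2 : y + (m - d) - (m - d) = y := by omega
    rw [e1, e2]
    refine ⟨?_, ?_, ?_, ?_, ?_, ?_, h⟩ <;> omega
  · rintro ⟨a1, a2, a3, n1, n2⟩ hp
    simp only [Finset.mem_coe, Finset.mem_filter, Finset.mem_product, Finset.mem_Icc] at hp
    obtain ⟨_, _, _, _, _, _, h⟩ := hp
    simp only [Prod.mk.injEq]
    refine ⟨?_, ?_, ?_, ?_, ?_⟩ <;> first | trivial | omega
  · rintro ⟨m, d, a3, z, y⟩ hp
    simp only [Finset.mem_coe, Finset.mem_sigma, Finset.mem_range, Finset.mem_product,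
      Finset.mem_Icc, dctPairs, Finset.mem_filter] at hp
    have e1 : m - (m - z) = z := by omega
    have e2 : y + (m - d) - (m - d) = y := by omega
    have e3 : m - (m - d) = d := by omega
    simp only [e1, e2, e3]

theorem dct_s2 (m : ℕ) : ∑ d ∈ Finset.range (m + 1), (d : ℝ) ^ 2 = m * (m + 1) * (2 * m + 1) / 6 := by
  induction m with
  | zero => simp
  | succ k ih => rw [Finset.sum_range_succ, ih]; push_cast; ring

theorem dct_s3 (m : ℕ) : ∑ d ∈ Finset.range (m + 1), (d : ℝ) ^ 3 = (m * (m + 1) / 2) ^ 2 := by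
  induction m with
  | zero => simp
  | succ k ih => rw [Finset.sum_range_succ, ih]; push_cast; ring

theorem dct_main (N : ℕ) :
    ∑ m ∈ Finset.range (N + 1), ∑ d ∈ Finset.range (m + 1), ((m : ℝ) - d) * (d : ℝ) ^ 2
      = (N - 1) * N * (N + 1) * (N + 2) * (2 * N + 1) / 120 := by
  have h : ∀ m : ℕ, ∑ d ∈ Finset.range (m + 1), ((m : ℝ) - d) * (d : ℝ) ^ 2
      = m ^ 2 * (m ^ 2 - 1) / 12 := by
    intro m
    have : ∀ d : ℕ, ((m : ℝ) - d) * (d : ℝ) ^ 2 = m * (d : ℝ) ^ 2 - (d : ℝ) ^ 3 := fun d => by ring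
    simp only [this, Finset.sum_sub_distrib, ← Finset.mul_sum, dct_s2, dct_s3]
    ring
  simp only [h]
  induction N with
  | zero => simp
  | succ k ih => rw [Finset.sum_range_succ, ih]; push_cast; ring

theorem dct_bound (c N : ℕ) (hc : 1 ≤ c) :
    |((∑ m ∈ Finset.range (N + 1), ∑ d ∈ Finset.range (m + 1),
        (m - d) * (dctPairs c d).card : ℕ) : ℝ)
      - (1 - 1 / (2 * c)) * ((N - 1) * N * (N + 1) * (N + 2) * (2 * N + 1) / 120)|
      ≤ ((N : ℝ) + 1) ^ 4 := by
  rw [← dct_main, Finset.mul_sum]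
  push_cast
  rw [← Finset.sum_sub_distrib]
  have key : ∀ m ∈ Finset.range (N + 1),
      |∑ d ∈ Finset.range (m + 1), ((m - d : ℕ) : ℝ) * ((dctPairs c d).card : ℝ)
        - (1 - 1 / (2 * c)) * ∑ d ∈ Finset.range (m + 1), ((m : ℝ) - d) * (d : ℝ) ^ 2|
      ≤ ((N : ℝ) + 1) ^ 3 := by
    intro m hm
    rw [Finset.mul_sum, ← Finset.sum_sub_distrib]
    have hmN : (m : ℝ) ≤ N := by
      have := Finset.mem_range.1 hm
      exact_mod_cast (by omega : m ≤ N)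
    have inner : ∀ d ∈ Finset.range (m + 1),
        |((m - d : ℕ) : ℝ) * ((dctPairs c d).card : ℝ)
          - (1 - 1 / (2 * c)) * (((m : ℝ) - d) * (d : ℝ) ^ 2)| ≤ ((N : ℝ) + 1) ^ 2 := by
      intro d hd
      have hdm : d ≤ m := by have := Finset.mem_range.1 hd; omega
      have hdr : (d : ℝ) ≤ m := by exact_mod_cast hdm
      have hd0 : (0 : ℝ) ≤ d := Nat.cast_nonneg d
      rw [Nat.cast_sub hdm]
      have e : ((m : ℝ) - d) * ((dctPairs c d).card : ℝ)
          - (1 - 1 / (2 * c)) * (((m : ℝ) - d) * (d : ℝ) ^ 2)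
          = ((m : ℝ) - d) * (((dctPairs c d).card : ℝ) - (1 - 1 / (2 * c)) * (d : ℝ) ^ 2) := by ring
      rw [e, abs_mul, abs_of_nonneg (by linarith : (0 : ℝ) ≤ m - d), sq ((N : ℝ) + 1)]
      exact mul_le_mul (by linarith) ((dct_pairs_bound c d hc).trans (by linarith))
        (abs_nonneg _) (by linarith)
    refine (Finset.abs_sum_le_sum_abs _ _).trans ((Finset.sum_le_card_nsmul _ _ _ inner).trans ?_)
    rw [Finset.card_range, nsmul_eq_mul]
    push_cast
    rw [pow_succ' _ 2]
    gcongr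
  refine (Finset.abs_sum_le_sum_abs _ _).trans ((Finset.sum_le_card_nsmul _ _ _ key).trans ?_)
  rw [Finset.card_range, nsmul_eq_mul]
  push_cast
  exact le_of_eq (by ring)

/-- For a fixed positive integer `c₀`, the proportion among tuples
`(a₁, a₂, a₃, n₁, n₂) ∈ {1, …, N}⁵` of those satisfying `n₁ ≥ n₂`, `a₁ ≥ a₂ ≥ a₃`,
`n₁ > a₁`, `n₂ > a₂` and `n₂ - a₂ ≤ c₀ (n₁ - a₁)` converges, as `N → ∞`, to
`1/60 - 1/(120 c₀)`; in particular this asymptotic density is positive.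
Tuples are encoded as `p = (a₁, a₂, a₃, n₁, n₂)`. -/
theorem density_of_constrained_tuples (c₀ : ℕ) (hc₀ : 1 ≤ c₀) :
    Filter.Tendsto (fun N : ℕ =>
      (((Finset.Icc 1 N ×ˢ Finset.Icc 1 N ×ˢ Finset.Icc 1 N ×ˢ
          Finset.Icc 1 N ×ˢ Finset.Icc 1 N).filter
        (fun p : ℕ × ℕ × ℕ × ℕ × ℕ =>
          p.2.2.2.2 ≤ p.2.2.2.1 ∧
          p.2.1 ≤ p.1 ∧ p.2.2.1 ≤ p.2.1 ∧
          p.1 < p.2.2.2.1 ∧ p.2.1 < p.2.2.2.2 ∧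
          p.2.2.2.2 - p.2.1 ≤ c₀ * (p.2.2.2.1 - p.1))).card : ℝ) / (N : ℝ) ^ 5)
      Filter.atTop
      (nhds (1 / 60 - 1 / (120 * (c₀ : ℝ)))) ∧
    (0 : ℝ) < 1 / 60 - 1 / (120 * (c₀ : ℝ)) := by
  have hcr : (1 : ℝ) ≤ c₀ := by exact_mod_cast hc₀
  constructor
  · simp only [dct_count]
    have hinv : Filter.Tendsto (fun N : ℕ => (1 : ℝ) / (N : ℝ)) Filter.atTop (nhds 0) :=
      tendsto_one_div_atTop_nhds_zero_nat
    have hmain : Filter.Tendsto (fun N : ℕ => (1 - 1 / (2 * (c₀ : ℝ))) *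
        ((1 - 1 / (N : ℝ)) * (1 + 1 / (N : ℝ)) * (1 + 2 * (1 / (N : ℝ))) * (2 + 1 / (N : ℝ)) / 120))
        Filter.atTop (nhds (1 / 60 - 1 / (120 * (c₀ : ℝ)))) := by
      have := (((((hinv.const_sub 1).mul (hinv.const_add 1)).mul
        ((hinv.const_mul 2).const_add 1)).mul (hinv.const_add 2)).div_const 120).const_mul
        (1 - 1 / (2 * (c₀ : ℝ)))
      convert this using 2
      field_simp
      ring
    have herr : Filter.Tendsto (fun N : ℕ => (1 + 1 / (N : ℝ)) ^ 4 * (1 / (N : ℝ)))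
        Filter.atTop (nhds 0) := by
      have := ((hinv.const_add 1).pow 4).mul hinv
      simpa using this
    have hdiff := squeeze_zero_norm' (a := fun N : ℕ => (1 + 1 / (N : ℝ)) ^ 4 * (1 / (N : ℝ)))
      (f := fun N : ℕ => ((∑ m ∈ Finset.range (N + 1), ∑ d ∈ Finset.range (m + 1),
        (m - d) * (dctPairs c₀ d).card : ℕ) : ℝ) / (N : ℝ) ^ 5 - (1 - 1 / (2 * (c₀ : ℝ))) *
        ((1 - 1 / (N : ℝ)) * (1 + 1 / (N : ℝ)) * (1 + 2 * (1 / (N : ℝ))) * (2 + 1 / (N : ℝ)) / 120))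
      (t₀ := Filter.atTop) ?_ herr
    · have := hdiff.add hmain
      simpa using this
    · filter_upwards [Filter.eventually_ge_atTop 1] with N hN
      have hNr : (0 : ℝ) < N := by exact_mod_cast hN
      have hb := dct_bound c₀ N hc₀
      generalize ((∑ m ∈ Finset.range (N + 1), ∑ d ∈ Finset.range (m + 1),
        (m - d) * (dctPairs c₀ d).card : ℕ) : ℝ) = T at *
      have e1 : T / (N : ℝ) ^ 5 - (1 - 1 / (2 * (c₀ : ℝ))) *
        ((1 - 1 / (N : ℝ)) * (1 + 1 / (N : ℝ)) * (1 + 2 * (1 / (N : ℝ))) * (2 + 1 / (N : ℝ)) / 120)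
        = (T - (1 - 1 / (2 * (c₀ : ℝ))) *
          ((N - 1) * N * (N + 1) * (N + 2) * (2 * N + 1) / 120)) / (N : ℝ) ^ 5 := by
        field_simp
      have e2 : (1 + 1 / (N : ℝ)) ^ 4 * (1 / (N : ℝ)) = ((N : ℝ) + 1) ^ 4 / (N : ℝ) ^ 5 := by
        field_simp
      rw [e1, e2, Real.norm_eq_abs, abs_div, abs_of_pos (by positivity : (0 : ℝ) < (N : ℝ) ^ 5)]
      gcongr
  · rw [sub_pos]
    apply one_div_lt_one_div_of_lt <;> linarith
end

section
/- For every real number ν > 1, one has ∑_{p ≤ ν, p prime} (log p)/p < log ν. -/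
open Finset in
lemma mert_log_factorial_le (n : ℕ) (hn : 1 ≤ n) :
    Real.log (n.factorial : ℝ) ≤ ((n : ℝ) + 1) * Real.log n - n + 1 := by
  induction n, hn using Nat.le_induction with
  | base => simp
  | succ n hn ih =>
    have hn0 : (0 : ℝ) < n := by exact_mod_cast hn
    have h1 : Real.log ((n + 1).factorial : ℝ) = Real.log ((n : ℝ) + 1) + Real.log (n.factorial : ℝ) := by
      rw [Nat.factorial_succ]
      push_cast
      rw [Real.log_mul (by positivity) (by positivity)]
    have h2 := Real.log_le_sub_one_of_pos (x := (n : ℝ) / (n + 1)) (by positivity)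
    rw [Real.log_div (by positivity) (by positivity)] at h2
    have h3 : ((n : ℝ) + 1) * (Real.log n - Real.log ((n : ℝ) + 1)) ≤ -1 := by
      calc ((n : ℝ) + 1) * (Real.log n - Real.log ((n : ℝ) + 1))
          ≤ ((n : ℝ) + 1) * ((n : ℝ) / (n + 1) - 1) := by gcongr
        _ = -1 := by field_simp; ring
    rw [h1]
    push_cast
    linarith

lemma mert_fac_ge (n p b : ℕ) (hp : p.Prime) :
    ∑ i ∈ Finset.Ico 1 b, n / p ^ i ≤ n.factorial.factorization p := by
  rw [Nat.factorization_factorial hp (b := max b (Nat.log p n + 1)) (by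
    exact lt_of_lt_of_le (Nat.lt_succ_self _) (le_max_right _ _))]
  apply Finset.sum_le_sum_of_subset
  exact Finset.Ico_subset_Ico le_rfl (le_max_left _ _)

lemma mert_log_factorial_eq (n : ℕ) :
    Real.log (n.factorial : ℝ) = ∑ p ∈ (Finset.range (n + 1)).filter Nat.Prime,
      (n.factorial.factorization p : ℝ) * Real.log p := by
  conv_lhs => rw [← Nat.prod_factorization_pow_eq_self (Nat.factorial_ne_zero n)]
  rw [Finsupp.prod_of_support_subset (s := (Finset.range (n + 1)).filter Nat.Prime)]
  · push_cast
    rw [Real.log_prod]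
    · simp
    · intro p hp
      have := (Finset.mem_filter.1 hp).2.pos
      positivity
  · intro p hp
    rw [Nat.support_factorization, Nat.mem_primeFactors] at hp
    rw [Finset.mem_filter, Finset.mem_range]
    exact ⟨Nat.lt_succ_of_le ((hp.1.dvd_factorial).1 hp.2.1), hp.1⟩
  · simp

lemma mert_large (n : ℕ) (hn : 60 ≤ n) :
    ∑ p ∈ (Finset.range (n + 1)).filter Nat.Prime, Real.log p / p < Real.log n := by
  set P := (Finset.range (n + 1)).filter Nat.Prime with hP
  set S := ∑ p ∈ P, Real.log p / p with hS
  have hth : ∑ p ∈ P, Real.log p ≤ Real.log 4 * n := by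
    have h := Chebyshev.theta_le_log4_mul_x (x := (n : ℝ)) (by positivity)
    have h2 : P = Nat.primesLE n := by
      ext p; simp [hP, Nat.mem_primesLE, Nat.lt_succ_iff]
    rw [Chebyshev.theta_eq_sum_primesLE_log, ← h2] at h
    exact h
  have h2P : 2 ∈ P := by simp [hP, Nat.prime_two]; omega
  have h3P : 3 ∈ P := by simp [hP, Nat.prime_three]; omega
  set A : ℕ := n / 4 + n / 8 + n / 16 + n / 32 with hA
  set B : ℕ := n / 9 + n / 27 with hB
  have key : ((n : ℝ) + 1) * S - ∑ p ∈ P, Real.log p + A * Real.log 2 + B * Real.log 3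
      ≤ Real.log (n.factorial : ℝ) := by
    rw [mert_log_factorial_eq, ← hP]
    have e1 : (A : ℝ) * Real.log 2 = ∑ p ∈ P, if p = 2 then (A : ℝ) * Real.log p else 0 := by
      rw [Finset.sum_ite_eq' P 2, if_pos h2P]; simp
    have e2 : (B : ℝ) * Real.log 3 = ∑ p ∈ P, if p = 3 then (B : ℝ) * Real.log p else 0 := by
      rw [Finset.sum_ite_eq' P 3, if_pos h3P]; simp
    rw [e1, e2, hS, Finset.mul_sum, ← Finset.sum_sub_distrib, ← Finset.sum_add_distrib,
      ← Finset.sum_add_distrib]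
    apply Finset.sum_le_sum
    intro p hp
    have hpp : p.Prime := (Finset.mem_filter.1 hp).2
    have hp0 : (0 : ℝ) < p := by exact_mod_cast hpp.pos
    have hl : 0 ≤ Real.log p := Real.log_nonneg (by exact_mod_cast hpp.one_le)
    have hfl : ((n : ℝ) + 1) / p - 1 ≤ ((n / p : ℕ) : ℝ) := by
      rw [sub_le_iff_le_add, div_le_iff₀ hp0]
      have : n + 1 ≤ (n / p + 1) * p := by
        have := Nat.lt_div_mul_add (a := n) hpp.pos
        rw [add_mul]; omega
      exact_mod_cast this
    have hv : n / p + (if p = 2 then A else 0) + (if p = 3 then B else 0)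
        ≤ n.factorial.factorization p := by
      by_cases c2 : p = 2
      · subst c2
        have := mert_fac_ge n 2 6 Nat.prime_two
        simp [Finset.sum_Ico_succ_top] at this ⊢
        omega
      · by_cases c3 : p = 3
        · subst c3
          have := mert_fac_ge n 3 4 Nat.prime_three
          simp [Finset.sum_Ico_succ_top] at this ⊢
          omega
        · have := mert_fac_ge n p 2 hpp
          simp [c2, c3] at this ⊢
          omega
    have hv' : ((n / p : ℕ) : ℝ) + (if p = 2 then (A : ℝ) else 0) + (if p = 3 then (B : ℝ) else 0)
        ≤ (n.factorial.factorization p : ℝ) := by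
      exact_mod_cast hv
    calc _ = (((n : ℝ) + 1) / p - 1 + (if p = 2 then (A : ℝ) else 0)
          + (if p = 3 then (B : ℝ) else 0)) * Real.log p := by
            split_ifs <;> ring
      _ ≤ _ := by
        apply mul_le_mul_of_nonneg_right _ hl
        linarith
  have hfac := mert_log_factorial_le n (by omega)
  have hA' : (15 : ℝ) / 32 * (n + 1) - 4 ≤ A := by
    have : 15 * (n + 1) ≤ 32 * A + 128 := by omega
    have : (15 : ℝ) * (n + 1) ≤ 32 * A + 128 := by exact_mod_cast this
    linarith
  have hB' : (4 : ℝ) / 27 * (n + 1) - 2 ≤ B := by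
    have : 4 * (n + 1) ≤ 27 * B + 54 := by omega
    have : (4 : ℝ) * (n + 1) ≤ 27 * B + 54 := by exact_mod_cast this
    linarith
  have hn' : (60 : ℝ) ≤ n := by exact_mod_cast hn
  have l2 := Real.log_two_lt_d9
  have l2' := Real.log_two_gt_d9
  have l3' := Real.log_three_gt_d9
  have l4 : Real.log 4 = 2 * Real.log 2 := by
    rw [show (4 : ℝ) = 2 ^ 2 by norm_num, Real.log_pow]; norm_num
  have f1 : (0.693 : ℝ) * (15 / 32 * (n + 1) - 4) ≤ A * Real.log 2 := by
    rw [mul_comm (A : ℝ)]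
    apply mul_le_mul (by linarith) hA' (by linarith) (by linarith)
  have f2 : (1.0986 : ℝ) * (4 / 27 * (n + 1) - 2) ≤ B * Real.log 3 := by
    rw [mul_comm (B : ℝ)]
    apply mul_le_mul (by linarith) hB' (by linarith) (by linarith)
  have f3 : Real.log 4 * n ≤ 1.3864 * n := by
    apply mul_le_mul_of_nonneg_right (by linarith) (by linarith)
  have : ((n : ℝ) + 1) * S < ((n : ℝ) + 1) * Real.log n := by linarith
  exact lt_of_mul_lt_mul_left this (by positivity)

lemma mert_ub (p a b : ℕ) (hp : 0 < p) (h : p ^ b ≤ 2 ^ a) :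
    (b : ℝ) * Real.log p ≤ a * Real.log 2 := by
  rw [← Real.log_pow, ← Real.log_pow]
  apply Real.log_le_log (by positivity)
  exact_mod_cast h

lemma mert_lb (p a b : ℕ) (h : 2 ^ a ≤ p ^ b) :
    (a : ℝ) * Real.log 2 ≤ b * Real.log p := by
  rw [← Real.log_pow, ← Real.log_pow]
  apply Real.log_le_log (by positivity)
  exact_mod_cast h

lemma mert_mono (n m : ℕ) (h : n ≤ m) :
    ∑ p ∈ (Finset.range (n + 1)).filter Nat.Prime, Real.log p / p ≤
    ∑ p ∈ (Finset.range (m + 1)).filter Nat.Prime, Real.log p / p := by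
  apply Finset.sum_le_sum_of_subset_of_nonneg
  · apply Finset.filter_subset_filter
    intro x hx
    simp only [Finset.mem_range] at *
    omega
  · intro p _ _
    exact div_nonneg (Real.log_natCast_nonneg p) (by positivity)

lemma mert_small (n : ℕ) (hn : 2 ≤ n) (hn' : n ≤ 60) :
    ∑ p ∈ (Finset.range (n + 1)).filter Nat.Prime, Real.log p / p < Real.log n := by
  have l2' := Real.log_two_gt_d9
  have u3 := mert_ub 3 8 5 (by norm_num) (by norm_num)
  have u5 := mert_ub 5 7 3 (by norm_num) (by norm_num)
  have u7 := mert_ub 7 17 6 (by norm_num) (by norm_num)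
  have u11 := mert_ub 11 7 2 (by norm_num) (by norm_num)
  have u13 := mert_ub 13 15 4 (by norm_num) (by norm_num)
  have u17 := mert_ub 17 25 6 (by norm_num) (by norm_num)
  have u19 := mert_ub 19 17 4 (by norm_num) (by norm_num)
  have u23 := mert_ub 23 23 5 (by norm_num) (by norm_num)
  have u29 := mert_ub 29 5 1 (by norm_num) (by norm_num)
  have u31 := mert_ub 31 5 1 (by norm_num) (by norm_num)
  have u37 := mert_ub 37 6 1 (by norm_num) (by norm_num)
  have u41 := mert_ub 41 6 1 (by norm_num) (by norm_num)
  have u43 := mert_ub 43 6 1 (by norm_num) (by norm_num)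
  have u47 := mert_ub 47 6 1 (by norm_num) (by norm_num)
  have u53 := mert_ub 53 6 1 (by norm_num) (by norm_num)
  have u59 := mert_ub 59 6 1 (by norm_num) (by norm_num)
  have w3 := mert_lb 3 3 2 (by norm_num)
  have w5 := mert_lb 5 2 1 (by norm_num)
  have w11 := mert_lb 11 17 5 (by norm_num)
  have w31 := mert_lb 31 9 2 (by norm_num)
  push_cast at u3 u5 u7 u11 u13 u17 u19 u23 u29 u31 u37 u41 u43 u47 u53 u59 w3 w5 w11 w31
  have red : ∀ a b : ℕ, 0 < a → a ≤ n → n ≤ b →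
      (∑ p ∈ (Finset.range (b + 1)).filter Nat.Prime, Real.log p / p < Real.log (a : ℝ)) →
      ∑ p ∈ (Finset.range (n + 1)).filter Nat.Prime, Real.log p / p < Real.log n := by
    intro a b ha han hnb h
    refine lt_of_le_of_lt (mert_mono n b hnb) (lt_of_lt_of_le h ?_)
    apply Real.log_le_log (by exact_mod_cast ha) (by exact_mod_cast han)
  have P2 : (Finset.range (2 + 1)).filter Nat.Prime = {2} := by decide
  have P4 : (Finset.range (4 + 1)).filter Nat.Prime = {2, 3} := by decide
  have P10 : (Finset.range (10 + 1)).filter Nat.Prime = {2, 3, 5, 7} := by decide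
  have P30 : (Finset.range (30 + 1)).filter Nat.Prime = {2, 3, 5, 7, 11, 13, 17, 19, 23, 29} := by
    decide +kernel
  have P60 : (Finset.range (60 + 1)).filter Nat.Prime =
      {2, 3, 5, 7, 11, 13, 17, 19, 23, 29, 31, 37, 41, 43, 47, 53, 59} := by
    decide +kernel
  rcases Nat.lt_or_ge n 3 with h | h
  · apply red 2 2 (by norm_num) hn (by omega)
    rw [P2]; simp; linarith
  rcases Nat.lt_or_ge n 5 with h5 | h5
  · apply red 3 4 (by norm_num) h (by omega)
    rw [P4]; simp; linarith
  rcases Nat.lt_or_ge n 11 with h11 | h11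
  · apply red 5 10 (by norm_num) h5 (by omega)
    rw [P10]; simp; linarith
  rcases Nat.lt_or_ge n 31 with h31 | h31
  · apply red 11 30 (by norm_num) h11 (by omega)
    rw [P30]; simp; linarith
  · apply red 31 60 (by norm_num) h31 (by omega)
    rw [P60]; simp; linarith

/-- Explicit Mertens-type bound (Rosser–Schoenfeld): for every real `ν > 1`,
`∑_{p ≤ ν, p prime} (log p) / p < log ν`. -/
theorem mertens_log_div_lt (ν : ℝ) (hν : 1 < ν) :
    ∑ p ∈ (Finset.range (⌊ν⌋₊ + 1)).filter Nat.Prime, Real.log p / p < Real.log ν := by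
  have hfl : (⌊ν⌋₊ : ℝ) ≤ ν := Nat.floor_le (by linarith)
  have h1 : 1 ≤ ⌊ν⌋₊ := Nat.le_floor (by simpa using hν.le)
  rcases Nat.lt_or_ge ⌊ν⌋₊ 2 with h2 | h2
  · have h3 : ⌊ν⌋₊ = 1 := by omega
    have P1 : (Finset.range (1 + 1)).filter Nat.Prime = ∅ := by decide
    rw [h3, P1, Finset.sum_empty]
    exact Real.log_pos hν
  · refine lt_of_lt_of_le ?_ (Real.log_le_log (by exact_mod_cast h1) hfl)
    rcases Nat.le_total ⌊ν⌋₊ 60 with h | h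
    · exact mert_small _ h2 h
    · exact mert_large _ h
end

section
/- Let t ≥ 2 and s ≥ 1 be integers, and suppose positive integers a₁ ≥ a₂ ≥ ⋯ ≥ a_t ≥ 2 and n₁ ≥ n₂ ≥ ⋯ ≥ n_s ≥ 2 satisfy ∏_{l=1}^{t} a_l! = ∏_{j=1}^{s} n_j! and n₁ > a₁. Then no integer p with a₁ < p ≤ n₁ is prime; equivalently, none of the factors of Δ(m₁, k₁) = m₁(m₁+1)⋯(m₁+k₁−1), where m₁ = a₁ + 1 and k₁ = n₁ − a₁, is a prime number. -/
/-- Lemma 2.2(i)/2.3(i): if `a₁ ≥ ⋯ ≥ a_t ≥ 2` and `n₁ ≥ ⋯ ≥ n_s ≥ 2` satisfy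
`∏ a_l ! = ∏ n_j !` and `n₁ > a₁`, then no integer `p` with `a₁ < p ≤ n₁` is prime,
i.e. none of the factors of `Δ(m₁, k₁) = (a₁+1)(a₁+2)⋯n₁` is prime. -/
theorem no_prime_in_interval
    (t s : ℕ) (ht : 2 ≤ t) (hs : 1 ≤ s)
    (a : Fin t → ℕ) (n : Fin s → ℕ)
    (ha : ∀ l l' : Fin t, l ≤ l' → a l' ≤ a l) (ha2 : ∀ l, 2 ≤ a l)
    (hn : ∀ j j' : Fin s, j ≤ j' → n j' ≤ n j) (hn2 : ∀ j, 2 ≤ n j)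
    (heq : ∏ l : Fin t, Nat.factorial (a l) = ∏ j : Fin s, Nat.factorial (n j))
    (h1 : a ⟨0, by omega⟩ < n ⟨0, by omega⟩) :
    ∀ p : ℕ, a ⟨0, by omega⟩ < p → p ≤ n ⟨0, by omega⟩ → ¬ p.Prime := by
  intro p hp1 hp2 hp
  have h2 : p ∣ ∏ j : Fin s, Nat.factorial (n j) :=
    ((hp.dvd_factorial).2 hp2).trans
      (Finset.dvd_prod_of_mem (fun j => Nat.factorial (n j)) (Finset.mem_univ _))
  rw [← heq] at h2
  obtain ⟨l, -, hl⟩ := (hp.prime.dvd_finset_prod_iff _).1 h2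
  have h3 := (hp.dvd_factorial).1 hl
  have h4 := ha ⟨0, by omega⟩ l (Fin.mk_le_of_le_val (Nat.zero_le _))
  omega
end

section
/- Let t ≥ 2 and s ≥ 1 be integers, and suppose positive integers a₁ ≥ a₂ ≥ ⋯ ≥ a_t ≥ 2 and n₁ ≥ n₂ ≥ ⋯ ≥ n_s ≥ 2 satisfy ∏_{l=1}^{t} a_l! = ∏_{j=1}^{s} n_j! and n₁ > a₁. Then m₁ ≥ k₁, where m₁ = a₁ + 1 and k₁ = n₁ − a₁; equivalently, n₁ ≤ 2a₁ + 1. -/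
/-- If `a₁ ≥ ⋯ ≥ a_t ≥ 2` and `n₁ ≥ ⋯ ≥ n_s ≥ 2` satisfy `∏ a_l ! = ∏ n_j !` and
`n₁ > a₁`, then `m₁ ≥ k₁` where `m₁ = a₁ + 1` and `k₁ = n₁ - a₁`; equivalently
`n₁ ≤ 2 a₁ + 1`. -/
theorem m1_ge_k1
    (t s : ℕ) (ht : 2 ≤ t) (hs : 1 ≤ s)
    (a : Fin t → ℕ) (n : Fin s → ℕ)
    (ha : ∀ l l' : Fin t, l ≤ l' → a l' ≤ a l) (ha2 : ∀ l, 2 ≤ a l)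
    (hn : ∀ j j' : Fin s, j ≤ j' → n j' ≤ n j) (hn2 : ∀ j, 2 ≤ n j)
    (heq : ∏ l : Fin t, Nat.factorial (a l) = ∏ j : Fin s, Nat.factorial (n j))
    (h1 : a ⟨0, by omega⟩ < n ⟨0, by omega⟩) :
    n ⟨0, by omega⟩ - a ⟨0, by omega⟩ ≤ a ⟨0, by omega⟩ + 1 := by
  by_contra hc
  have h2 := ha2 ⟨0, by omega⟩
  obtain ⟨p, hp, hlt, hle⟩ := Nat.exists_prime_lt_and_le_two_mul (a ⟨0, by omega⟩) (by omega)
  have hd : p ∣ ∏ l : Fin t, Nat.factorial (a l) := by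
    rw [heq]
    exact ((Nat.Prime.dvd_factorial hp).2 (by omega)).trans
      (Finset.dvd_prod_of_mem (fun j => Nat.factorial (n j)) (Finset.mem_univ ⟨0, by omega⟩))
  obtain ⟨l, -, hl⟩ := (Prime.dvd_finset_prod_iff hp.prime _).1 hd
  have h3 := (Nat.Prime.dvd_factorial hp).1 hl
  have h4 := ha ⟨0, by omega⟩ l (Fin.mk_le_of_le_val (Nat.zero_le _))
  omega
end

section
/- Let t ≥ 3, suppose positive integers a₁ ≥ a₂ ≥ ⋯ ≥ a_t ≥ 2 and n₁ ≥ n₂ ≥ 2 satisfy ∏_{l=1}^{t} a_l! = n₁!·n₂!, n₁ > a₁, and n₂ > a_i for some index 2 ≤ i ≤ t. Set m₁ = a₁ + 1, k₁ = n₁ − a₁, k₂ = n₂ − a_i, and a = max{a_l : l ≠ 1, l ≠ i}. Then a·log a − a ≤ log(a!) ≤ (k₁ + k₂)·log(2m₁). -/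
theorem fact_le_aux (x n : ℕ) (h : x ≤ n) (M : ℕ) (hM : n ≤ M) :
    n.factorial ≤ x.factorial * M ^ (n - x) := by
  obtain ⟨k, rfl⟩ := Nat.exists_eq_add_of_le h
  rw [← Nat.factorial_mul_ascFactorial, Nat.add_sub_cancel_left]
  exact Nat.mul_le_mul_left _ ((Nat.ascFactorial_le_pow_add x k).trans (Nat.pow_le_pow_left hM k))

/-- Lemma 2.2(ii): if `a₁ ≥ ⋯ ≥ a_t ≥ 2` (`t ≥ 3`) and `n₁ ≥ n₂ ≥ 2` satisfy
`∏ a_l ! = n₁! n₂!`, `n₁ > a₁` and `n₂ > a_i` for some index `i` with `2 ≤ i ≤ t`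
(0-indexed: `1 ≤ i`), then with `m₁ = a₁ + 1`, `k₁ = n₁ - a₁`, `k₂ = n₂ - a_i` and
`A = max {a_l : l ≠ 1, l ≠ i}` one has `A log A - A ≤ log (A!) ≤ (k₁ + k₂) log (2 m₁)`. -/
theorem log_factorial_bounds_s_two
    (t : ℕ) (ht : 3 ≤ t)
    (a : Fin t → ℕ) (n₁ n₂ : ℕ)
    (ha : ∀ l l' : Fin t, l ≤ l' → a l' ≤ a l) (ha2 : ∀ l, 2 ≤ a l)
    (hn : n₂ ≤ n₁) (hn2 : 2 ≤ n₂)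
    (heq : ∏ l : Fin t, Nat.factorial (a l) = Nat.factorial n₁ * Nat.factorial n₂)
    (i : Fin t) (hi : 1 ≤ i.val)
    (h1 : a ⟨0, by omega⟩ < n₁) (h2 : a i < n₂)
    (A : ℕ) (hA : A = ((Finset.univ.erase ⟨0, by omega⟩).erase i).sup a) :
    (A : ℝ) * Real.log A - A ≤ Real.log (Nat.factorial A) ∧
    Real.log (Nat.factorial A) ≤
      (((n₁ - a ⟨0, by omega⟩) + (n₂ - a i) : ℕ) : ℝ) *
        Real.log (2 * (a ⟨0, by omega⟩ + 1)) := by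
  constructor
  · rcases Nat.eq_zero_or_pos A with h0 | h0
    · simp [h0]
    have hp : (0 : ℝ) < A := by exact_mod_cast h0
    have hf : (0 : ℝ) < A.factorial := by exact_mod_cast A.factorial_pos
    have h := Real.pow_div_factorial_le_exp (A : ℝ) hp.le A
    have h' := Real.log_le_log (by positivity) h
    rw [Real.log_exp, Real.log_div (by positivity) (by positivity), Real.log_pow] at h'
    linarith
  · generalize hz : (⟨0, by omega⟩ : Fin t) = z at *
    have hmax : ∀ l, a l ≤ a z := fun l => ha z l (by rw [← hz]; exact Nat.zero_le _)
    have hiz : i ≠ z := by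
      rintro rfl
      rw [← hz] at hi
      simp at hi
    have hz2 := ha2 z
    have hn1 : n₁ ≤ 2 * (a z + 1) := by
      by_contra hc
      obtain ⟨p, hp, hlt, hle⟩ := Nat.exists_prime_lt_and_le_two_mul (a z) (by omega)
      have hd : p ∣ ∏ l : Fin t, Nat.factorial (a l) := by
        rw [heq]
        exact Dvd.dvd.mul_right (hp.dvd_factorial.2 (by omega)) _
      obtain ⟨l, -, hl⟩ := (hp.prime.dvd_finsetProd_iff _).1 hd
      have := hp.dvd_factorial.1 hl
      have := hmax l
      omega
    have hAle : A.factorial ≤ ∏ l ∈ (Finset.univ.erase z).erase i, (a l).factorial := by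
      rcases ((Finset.univ.erase z).erase i).eq_empty_or_nonempty with he | hne
      · rw [he] at hA ⊢
        simp at hA
        simp [hA]
      · obtain ⟨j, hj, hjA⟩ := Finset.exists_mem_eq_sup _ hne a
        rw [hA, hjA]
        exact Finset.single_le_prod' (f := fun l => (a l).factorial)
          (fun l _ => (a l).factorial_pos) hj
    have hsplit : (a z).factorial * ((a i).factorial *
        ∏ l ∈ (Finset.univ.erase z).erase i, (a l).factorial) = n₁.factorial * n₂.factorial := by
      rw [Finset.mul_prod_erase _ (fun l => (a l).factorial) (by simp [hiz]),
        Finset.mul_prod_erase _ (fun l => (a l).factorial) (by simp), heq]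
    have e1 := fact_le_aux _ _ h1.le _ hn1
    have e2 := fact_le_aux _ _ h2.le _ (hn.trans hn1)
    have key : A.factorial ≤ (2 * (a z + 1)) ^ ((n₁ - a z) + (n₂ - a i)) := by
      have hpos : 0 < (a z).factorial * (a i).factorial :=
        Nat.mul_pos (Nat.factorial_pos _) (Nat.factorial_pos _)
      refine Nat.le_of_mul_le_mul_left ?_ hpos
      calc _ ≤ (a z).factorial * (a i).factorial * _ := Nat.mul_le_mul_left _ hAle
        _ = n₁.factorial * n₂.factorial := by rw [← hsplit, mul_assoc]
        _ ≤ _ := Nat.mul_le_mul e1 e2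
        _ = _ := by rw [pow_add]; ring
    have hk : ((A.factorial : ℕ) : ℝ) ≤
        (2 * ((a z : ℝ) + 1)) ^ ((n₁ - a z) + (n₂ - a i)) := by exact_mod_cast key
    have hf : (0 : ℝ) < A.factorial := by exact_mod_cast A.factorial_pos
    have := Real.log_le_log hf hk
    rwa [Real.log_pow] at this
end

section
/- Let 2 ≤ s < t be integers, let i₂,…,i_s ∈ {2,…,t} be distinct indices, and suppose positive integers a₁ ≥ a₂ ≥ ⋯ ≥ a_t ≥ 2 and n₁ ≥ n₂ ≥ ⋯ ≥ n_s ≥ 2 satisfy ∏_{l=1}^{t} a_l! = ∏_{j=1}^{s} n_j!, n₁ > a₁, and n_j > a_{i_j} for each j = 2,…,s. Set m₁ = a₁ + 1, k₁ = n₁ − a₁, k_j = n_j − a_{i_j} for j = 2,…,s, and a = max{a_l : l ∉ {1, i₂, …, i_s}}. Then a·log a − a ≤ log(a!) ≤ (k₁ + k₂ + ⋯ + k_s)·log(2m₁). -/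
/-- Lemma 2.3(ii): let `2 ≤ s < t`, let `i₂, …, i_s ∈ {2, …, t}` be distinct indices
(encoded by an injective `ι : Fin s → Fin t` with `ι 0 = 0`, so `n₁` is paired with
`a₁` and `n_j` with `a_{i_j}` for `j ≥ 2`), and suppose `a₁ ≥ ⋯ ≥ a_t ≥ 2` and
`n₁ ≥ ⋯ ≥ n_s ≥ 2` satisfy `∏ a_l ! = ∏ n_j !`, with `n_j > a_{i_j}` for all `j`.
Then with `m₁ = a₁ + 1`, `k_j = n_j - a_{i_j}` and `A = max {a_l : l ∉ {1, i₂, …, i_s}}`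
one has `A log A - A ≤ log (A!) ≤ (k₁ + ⋯ + k_s) log (2 m₁)`. -/
theorem log_factorial_bounds_general_s
    (t s : ℕ) (hs : 2 ≤ s) (hst : s < t)
    (ι : Fin s → Fin t) (hinj : Function.Injective ι)
    (hι0 : (ι ⟨0, by omega⟩).val = 0)
    (a : Fin t → ℕ) (n : Fin s → ℕ)
    (ha : ∀ l l' : Fin t, l ≤ l' → a l' ≤ a l) (ha2 : ∀ l, 2 ≤ a l)
    (hn : ∀ j j' : Fin s, j ≤ j' → n j' ≤ n j) (hn2 : ∀ j, 2 ≤ n j)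
    (heq : ∏ l : Fin t, Nat.factorial (a l) = ∏ j : Fin s, Nat.factorial (n j))
    (hgt : ∀ j : Fin s, a (ι j) < n j)
    (A : ℕ) (hA : A = (Finset.univ.filter (fun l : Fin t => ∀ j : Fin s, ι j ≠ l)).sup a) :
    (A : ℝ) * Real.log A - A ≤ Real.log (Nat.factorial A) ∧
    Real.log (Nat.factorial A) ≤
      ((∑ j : Fin s, (n j - a (ι j)) : ℕ) : ℝ) *
        Real.log (2 * (a ⟨0, by omega⟩ + 1)) := by
  constructor
  · rcases Nat.eq_zero_or_pos A with h0 | h0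
    · simp [h0]
    · have h := Stirling.le_log_factorial_stirling h0.ne'
      have h1 : 0 ≤ Real.log (A : ℝ) := Real.log_natCast_nonneg A
      have h2 : 0 ≤ Real.log (2 * Real.pi) :=
        Real.log_nonneg (by nlinarith [Real.pi_gt_three])
      linarith
  · have hι0' : ι ⟨0, by omega⟩ = ⟨0, by omega⟩ := Fin.ext hι0
    set a1 := a ⟨0, by omega⟩ with ha1
    have hmax : ∀ l, a l ≤ a1 := fun l => ha _ _ (Fin.mk_le_of_le_val (Nat.zero_le _))
    have hn1 : n ⟨0, by omega⟩ < 2 * a1 := by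
      by_contra hcon
      push Not at hcon
      have h2 : 2 ≤ a1 := ha2 _
      obtain ⟨p, hp, hp1, hp2⟩ := Nat.exists_prime_lt_and_le_two_mul a1 (by omega)
      have hd : p ∣ ∏ l : Fin t, Nat.factorial (a l) := by
        rw [heq]
        exact ((Nat.Prime.dvd_factorial hp).2 (hp2.trans hcon)).trans
          (Finset.dvd_prod_of_mem (fun j => Nat.factorial (n j)) (Finset.mem_univ _))
      obtain ⟨l, -, hl⟩ := (hp.prime.dvd_finset_prod_iff _).1 hd
      have := (Nat.Prime.dvd_factorial hp).1 hl
      have := hmax l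
      omega
    have hnM : ∀ j, n j ≤ 2 * (a1 + 1) := fun j => by
      have := hn ⟨0, by omega⟩ j (Fin.mk_le_of_le_val (Nat.zero_le _))
      omega
    have hfac : ∀ j, Nat.factorial (n j) ≤
        Nat.factorial (a (ι j)) * (2 * (a1 + 1)) ^ (n j - a (ι j)) := fun j => by
      have h := Nat.factorial_mul_ascFactorial (a (ι j)) (n j - a (ι j))
      have e : a (ι j) + (n j - a (ι j)) = n j := by have := hgt j; omega
      have h' := Nat.ascFactorial_le_pow_add (a (ι j)) (n j - a (ι j))
      rw [e] at h h'
      rw [← h]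
      exact Nat.mul_le_mul_left _ (h'.trans (Nat.pow_le_pow_left (hnM j) _))
    set S := Finset.univ.filter (fun l : Fin t => ∀ j : Fin s, ι j ≠ l) with hS
    have hsplit : ∏ l : Fin t, Nat.factorial (a l) =
        (∏ j : Fin s, Nat.factorial (a (ι j))) * ∏ l ∈ S, Nat.factorial (a l) := by
      rw [← Finset.prod_filter_mul_prod_filter_not Finset.univ
        (fun l : Fin t => ∀ j : Fin s, ι j ≠ l), mul_comm]
      congr 1
      rw [← Finset.prod_image (s := Finset.univ) (g := ι) (f := fun l => Nat.factorial (a l))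
        hinj.injOn]
      congr 1
      ext l
      simp
    have hQ : ∏ l ∈ S, Nat.factorial (a l) ≤ (2 * (a1 + 1)) ^ (∑ j : Fin s, (n j - a (ι j))) := by
      have hpos : 0 < ∏ j : Fin s, Nat.factorial (a (ι j)) :=
        Finset.prod_pos fun j _ => Nat.factorial_pos _
      refine Nat.le_of_mul_le_mul_left ?_ hpos
      rw [← hsplit, heq, ← Finset.prod_pow_eq_pow_sum, ← Finset.prod_mul_distrib]
      exact Finset.prod_le_prod' fun j _ => hfac j
    have hAQ : Nat.factorial A ≤ ∏ l ∈ S, Nat.factorial (a l) := by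
      rcases S.eq_empty_or_nonempty with h | h
      · simp [hA, h]
      · obtain ⟨l, hl, hl'⟩ := Finset.exists_mem_eq_sup S h a
        rw [hA, hl']
        exact Finset.single_le_prod' (f := fun l => Nat.factorial (a l))
          (fun i _ => Nat.factorial_pos _) hl
    have hfin := hAQ.trans hQ
    rw [← Real.log_pow]
    apply Real.log_le_log (by exact_mod_cast Nat.factorial_pos A)
    exact_mod_cast hfin
end
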